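/- arXiv:1010.5764 — 2 statements merged into one kernel-verified Lean document; each statement's English description precedes it below -/
import Mathlib

section
/- For every ε > 0 and every N, there exist an integer n ≥ N and a (2,1)-separating binary code C ⊆ F₂^n with |C| ≥ 2^{((3/50) log₂ 11 − ε) n}. -/
/-!
The codes are obtained by concatenating algebraic-geometric codes over `𝔽₁₂₁` with a binary inner
code of length `15` and size `128` (a shortened Nordstrom–Robinson code), whose distances between
distinct words lie between `6` and `10`; since `10 < 6 + 6`, the inner code satisfies the strict
triangle inequality. Hamming distance is additive over blocks, so the concatenated code is
`(2,1)`-separating as soon as the outer code is linear and *intersecting*: any two nonzero codewords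
have a common nonzero coordinate (`exists_separating_of_intersecting`).

The outer codes live on the tower `z_{i+1}² = z_i + 4 / z_i` over `𝔽₁₂₁`, which is optimal: its level
of degree `M` over `k(x)` has `20 M` rational places above the roots of `splitPoly x`, genus at most
`2 M`, and a single place at infinity. Evaluating functions of pole order at most `d` gives an
intersecting code whenever `2 d < 20 M`, because a product vanishing at all evaluation places is
divisible by `splitPoly x`. To do better, one takes `d = 25 M / 2`, imposes zeros at a set `Q` of
places, and uses the derivative instead of the value as the coordinate at the places of `Q`. If two
codewords have disjoint supports, the product of the two functions is `splitPoly x` times a function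
of pole order at most `5 M` with double zeros on `Q`, and `Q` is chosen so that there is no such
nonzero function (`Level.codeMap_intersecting`). About half the dimension of the space `V` of
functions of pole order at most `5 M` suffices for `|Q|` (`Level.exists_points`): a place at which a
Wronskian of two functions in `V` does not vanish imposes two conditions. Only subspaces with
identically zero Wronskian obstruct this, and they are small because their pole orders are all
congruent modulo `11` (`Level.insep_finrank`). The resulting dimension is at least `9 M - 1`
(`Level.exists_code`), and concatenation gives length `300 M` and at least `121 ^ (9 M - 1)` words.

The tower is built by induction on its levels. The structure `Level` records a level through its
affine ring `O`, the pole order at infinity, the derivation `θ = (x⁵ - 16x) d/dx` and the evaluation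
maps. The next level `K(√a)`, `a = z + 4 / z`, is `QuadraticAlgebra K a 0`. Pole orders in it are
read off from the two components, since `a` has a simple pole at infinity. The integral closure of
`O` in it is `O ⊕ J √a` with `J = {v | v² a ∈ O}`. The split places stay split because the roots of
`splitPoly` are closed under the recursion and the values of `a` there are squares in `𝔽₁₂₁`
(`Level.exists_root`). The genus is controlled by the inequality
`2 m + 1 - 4 M ≤ dim O_m + dim R_m`, where `R` is the radical of `x⁵ - 16x`. For its inductive step,
`a J²` is squarefree and supported on the zeros of `x⁵ - 16x`, hence divides `R`
(`Level.exists_disc`), and a comparison of codimensions of ideals transfers the inequality from `O`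
and `R` to `J` and `J_R` (`Level.genus_J`).
-/

/-- A code `C ⊆ Aⁿ` is `(2,1)`-separating if all pairwise distinct `x, y, z ∈ C`
satisfy the strict triangle inequality `d(x,z) < d(x,y) + d(y,z)` for the Hamming
distance. -/
def IsSeparating21 {ι A : Type*} [Fintype ι] [DecidableEq A] (C : Set (ι → A)) : Prop :=
  ∀ x ∈ C, ∀ y ∈ C, ∀ z ∈ C, x ≠ y → y ≠ z → x ≠ z →
    hammingDist x z < hammingDist x y + hammingDist y z

/-! ### Pole filtrations -/

/-- The filtration of a function field by pole order at a single rational place: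
`F m` is the space of functions whose pole order there is at most `m`. The field `deg_mul` says that
pole orders add up under multiplication, the field `lead` that the residue field is `k`. -/
structure PoleFiltration (k K : Type) [Field k] [Field K] [Algebra k K] where
  F : ℤ → Submodule k K
  mono : Monotone F
  exists_deg : ∀ f : K, f ≠ 0 → ∃ m, f ∈ F m ∧ f ∉ F (m - 1)
  deg_mul : ∀ (f g : K) (m n : ℤ), (f ∈ F m ∧ f ∉ F (m - 1)) → (g ∈ F n ∧ g ∉ F (n - 1)) →
    (f * g ∈ F (m + n) ∧ f * g ∉ F (m + n - 1))
  lead : ∀ (f g : K) (m : ℤ), f ∈ F m → (g ∈ F m ∧ g ∉ F (m - 1)) →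
    ∃ c : k, f - c • g ∈ F (m - 1)

namespace PoleFiltration

variable {k K : Type} [Field k] [Field K] [Algebra k K] (Φ : PoleFiltration k K)

/-- `f` has pole order exactly `m`. -/
def Deg (f : K) (m : ℤ) : Prop := f ∈ Φ.F m ∧ f ∉ Φ.F (m - 1)

variable {Φ}

lemma Deg.mul {f g : K} {m n : ℤ} (hf : Φ.Deg f m) (hg : Φ.Deg g n) : Φ.Deg (f * g) (m + n) :=
  Φ.deg_mul f g m n hf hg

lemma Deg.mem_iff {f : K} {m n : ℤ} (hf : Φ.Deg f m) : f ∈ Φ.F n ↔ m ≤ n := by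
  constructor
  · intro h
    by_contra hlt
    exact hf.2 (Φ.mono (by omega) h)
  · intro h
    exact Φ.mono h hf.1

lemma Deg.ne_zero {f : K} {m : ℤ} (hf : Φ.Deg f m) : f ≠ 0 := by
  rintro rfl
  exact hf.2 (Submodule.zero_mem _)

lemma Deg.unique {f : K} {m n : ℤ} (hf : Φ.Deg f m) (hg : Φ.Deg f n) : m = n :=
  le_antisymm (hf.mem_iff.1 hg.1) (hg.mem_iff.1 hf.1)

lemma deg_one : Φ.Deg 1 0 := by
  obtain ⟨m, hm⟩ := Φ.exists_deg 1 one_ne_zero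
  have h2 : Φ.Deg (1 * 1) (m + m) := Deg.mul hm hm
  rw [one_mul] at h2
  have := Deg.unique hm h2
  have : m = 0 := by omega
  subst this
  exact hm

lemma Deg.inv {f : K} {m : ℤ} (hf : Φ.Deg f m) : Φ.Deg f⁻¹ (-m) := by
  obtain ⟨n, hn⟩ := Φ.exists_deg f⁻¹ (inv_ne_zero hf.ne_zero)
  have h2 := hf.mul hn
  rw [mul_inv_cancel₀ hf.ne_zero] at h2
  have := h2.unique deg_one
  have : n = -m := by omega
  subst this
  exact hn

lemma Deg.pow {f : K} {m : ℤ} (hf : Φ.Deg f m) (n : ℕ) : Φ.Deg (f ^ n) (n * m) := by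
  induction n with
  | zero => simpa using deg_one
  | succ n ih =>
    have := ih.mul hf
    rw [← pow_succ] at this
    convert this using 1
    push_cast
    ring

lemma exists_deg_le {f : K} (hf : f ≠ 0) {m : ℤ} (h : f ∈ Φ.F m) : ∃ n ≤ m, Φ.Deg f n := by
  obtain ⟨n, hn⟩ := Φ.exists_deg f hf
  exact ⟨n, Deg.mem_iff hn |>.1 h, hn⟩

lemma mul_mem {f g : K} {m n : ℤ} (hf : f ∈ Φ.F m) (hg : g ∈ Φ.F n) : f * g ∈ Φ.F (m + n) := by
  by_cases hf0 : f = 0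
  · simp [hf0]
  by_cases hg0 : g = 0
  · simp [hg0]
  obtain ⟨a, ha, hfa⟩ := exists_deg_le hf0 hf
  obtain ⟨b, hb, hgb⟩ := exists_deg_le hg0 hg
  exact (hfa.mul hgb).mem_iff.2 (by omega)

/-- Division by an element of pole order `n` shifts the filtration by exactly `n`. -/
lemma Deg.mul_mem_iff {f g : K} {m n : ℤ} (hg : Φ.Deg g n) : g * f ∈ Φ.F (m + n) ↔ f ∈ Φ.F m := by
  constructor
  · intro h
    have := mul_mem h hg.inv.1
    rw [show g * f * g⁻¹ = f by field_simp [hg.ne_zero]] at this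
    simpa using this
  · intro h
    rw [mul_comm]
    exact mul_mem h hg.1

lemma Deg.add {f g : K} {m : ℤ} (hf : Φ.Deg f m) (hg : g ∈ Φ.F (m - 1)) : Φ.Deg (f + g) m := by
  refine ⟨Submodule.add_mem _ hf.1 (Φ.mono (by omega) hg), fun h => hf.2 ?_⟩
  have := Submodule.sub_mem _ h hg
  simpa using this

lemma algebraMap_mem (c : k) : algebraMap k K c ∈ Φ.F 0 := by
  rw [Algebra.algebraMap_eq_smul_one]
  exact Submodule.smul_mem _ _ deg_one.1

lemma deg_algebraMap {c : k} (hc : c ≠ 0) : Φ.Deg (algebraMap k K c) 0 := by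
  refine ⟨algebraMap_mem c, fun h => (deg_one (Φ := Φ)).2 ?_⟩
  have := Submodule.smul_mem _ c⁻¹ h
  rwa [Algebra.algebraMap_eq_smul_one, smul_smul, inv_mul_cancel₀ hc, one_smul] at this

variable (Φ)

/-- The part of the subspace `S` with pole order at most `m`. -/
def part (S : Submodule k K) (m : ℤ) : Submodule k K := S ⊓ Φ.F m

/-- `dim_k (S ∩ F m)`, as an integer. -/
noncomputable def dim (S : Submodule k K) (m : ℤ) : ℤ := Module.finrank k (Φ.part S m)

/-- A subspace is bounded below if it has no nonzero elements of very negative pole order. -/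
def BddBelowSub (S : Submodule k K) : Prop := ∃ m, Φ.part S m = ⊥

variable {Φ}

lemma part_mono (S : Submodule k K) {m n : ℤ} (h : m ≤ n) : Φ.part S m ≤ Φ.part S n :=
  inf_le_inf_left _ (Φ.mono h)

lemma dim_nonneg (S : Submodule k K) (m : ℤ) : 0 ≤ Φ.dim S m := Int.natCast_nonneg _

/-- Raising the pole order by one enlarges the space by at most one dimension. -/
lemma part_succ (S : Submodule k K) (m : ℤ) :
    ∃ g : K, Φ.part S m ≤ Φ.part S (m - 1) ⊔ Submodule.span k {g} := by
  by_cases h : ∃ g ∈ S, Φ.Deg g m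
  · obtain ⟨g, hgS, hg⟩ := h
    refine ⟨g, fun f hf => ?_⟩
    obtain ⟨c, hc⟩ := Φ.lead f g m hf.2 hg
    rw [show f = (f - c • g) + c • g by abel]
    exact Submodule.add_mem_sup ⟨S.sub_mem hf.1 (S.smul_mem c hgS), hc⟩
      (Submodule.smul_mem _ _ (Submodule.mem_span_singleton_self g))
  · refine ⟨0, fun f hf => ?_⟩
    refine Submodule.mem_sup_left ⟨hf.1, ?_⟩
    by_contra hc
    exact h ⟨f, hf.1, hf.2, hc⟩

lemma finite_part {S : Submodule k K} (hS : Φ.BddBelowSub S) (m : ℤ) :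
    FiniteDimensional k (Φ.part S m) := by
  obtain ⟨m₀, h0⟩ := hS
  by_cases hm : m ≤ m₀
  · have : Φ.part S m = ⊥ := le_bot_iff.1 (h0 ▸ part_mono S hm)
    rw [this]
    infer_instance
  · obtain ⟨n, rfl⟩ : ∃ n : ℕ, m = m₀ + n := ⟨(m - m₀).toNat, by omega⟩
    clear hm
    induction n with
    | zero =>
      rw [show m₀ + ((0 : ℕ) : ℤ) = m₀ by simp, h0]
      infer_instance
    | succ n ih =>
      obtain ⟨g, hg⟩ := part_succ (Φ := Φ) S (m₀ + (n + 1 : ℕ))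
      rw [show m₀ + ((n + 1 : ℕ) : ℤ) - 1 = m₀ + n by push_cast; ring] at hg
      exact Submodule.finiteDimensional_of_le hg

lemma dim_le_dim {S T : Submodule k K} (hT : Φ.BddBelowSub T) {m n : ℤ}
    (h : Φ.part S m ≤ Φ.part T n) : Φ.dim S m ≤ Φ.dim T n := by
  have := finite_part hT n
  unfold dim
  exact_mod_cast Submodule.finrank_mono h

lemma dim_succ {S : Submodule k K} (hS : Φ.BddBelowSub S) (m : ℤ) :
    Φ.dim S (m + 1) ≤ Φ.dim S m + 1 := by
  obtain ⟨g, hg⟩ := part_succ (Φ := Φ) S (m + 1)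
  rw [add_sub_cancel_right] at hg
  have := finite_part hS m
  have h1 := Submodule.finrank_mono hg
  have h2 := Submodule.finrank_add_le_finrank_add_finrank (Φ.part S m) (Submodule.span k {g})
  have h3 : Module.finrank k (Submodule.span k {g}) ≤ 1 := by
    simpa using finrank_span_le_card (R := k) ({g} : Set K)
  unfold dim
  exact_mod_cast (by omega : Module.finrank k (Φ.part S (m+1)) ≤ Module.finrank k (Φ.part S m) + 1)

lemma dim_add_le {S : Submodule k K} (hS : Φ.BddBelowSub S) (m : ℤ) (n : ℕ) :
    Φ.dim S (m + n) ≤ Φ.dim S m + n := by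
  induction n with
  | zero => simp
  | succ n ih =>
    have := dim_succ hS (m + n)
    push_cast
    rw [← add_assoc]
    linarith

lemma dim_le_add {S : Submodule k K} (hS : Φ.BddBelowSub S) {m n : ℤ} (h : m ≤ n) :
    Φ.dim S n ≤ Φ.dim S m + (n - m) := by
  have := dim_add_le hS m (n - m).toNat
  rw [Int.toNat_of_nonneg (by omega)] at this
  simpa using this

lemma dim_mono {S : Submodule k K} (hS : Φ.BddBelowSub S) {m n : ℤ} (h : m ≤ n) :
    Φ.dim S m ≤ Φ.dim S n := dim_le_dim hS (part_mono S h)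

lemma BddBelowSub.mono {S T : Submodule k K} (hT : Φ.BddBelowSub T) (h : S ≤ T) :
    Φ.BddBelowSub S := by
  obtain ⟨m, hm⟩ := hT
  exact ⟨m, le_bot_iff.1 (hm ▸ inf_le_inf_right _ h)⟩

end PoleFiltration

/-! ### Levels of the tower -/

/-- The polynomial whose twenty roots in `𝔽₁₂₁` are the abscissae of the completely split places. -/
def splitPoly {R : Type} [CommRing R] (c : R) : R :=
  c ^ 20 + 4 * c ^ 16 + 3 * c ^ 12 + 4 * c ^ 8 + 5 * c ^ 4 + 1

section Rings

variable {k K : Type} [Field k] [Field K] [Algebra k K]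

/-- The ring `O[1/h]` inside `K`. -/
def awayRing (O : Subalgebra k K) (h : O) : Subalgebra k K where
  carrier := {f | ∃ j : ℕ, (h : K) ^ j * f ∈ O}
  mul_mem' := by
    rintro f g ⟨i, hi⟩ ⟨j, hj⟩
    refine ⟨i + j, ?_⟩
    rw [show (h : K) ^ (i + j) * (f * g) = ((h : K) ^ i * f) * ((h : K) ^ j * g) by ring]
    exact O.mul_mem hi hj
  add_mem' := by
    rintro f g ⟨i, hi⟩ ⟨j, hj⟩
    refine ⟨i + j, ?_⟩
    rw [show (h : K) ^ (i + j) * (f + g)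
      = (h : K) ^ j * ((h : K) ^ i * f) + (h : K) ^ i * ((h : K) ^ j * g) by ring]
    exact O.add_mem (O.mul_mem (O.pow_mem h.2 _) hi) (O.mul_mem (O.pow_mem h.2 _) hj)
  algebraMap_mem' c := ⟨0, by simp⟩

lemma mem_awayRing {O : Subalgebra k K} {h : O} {f : K} :
    f ∈ awayRing O h ↔ ∃ j : ℕ, (h : K) ^ j * f ∈ O := Iff.rfl

lemma le_awayRing {O : Subalgebra k K} {h : O} : O ≤ awayRing O h :=
  fun f hf => ⟨0, by simpa using hf⟩

/-- The radical of the ideal `hO`, as a `k`-subspace of `K`. -/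
def radSpace (O : Subalgebra k K) (h : O) : Submodule k K :=
  ((Ideal.span {h}).radical.restrictScalars k).map O.val.toLinearMap

lemma mem_radSpace {O : Subalgebra k K} {h : O} {f : O} :
    (f : K) ∈ radSpace O h ↔ f ∈ (Ideal.span {h}).radical := by
  constructor
  · rintro ⟨g, hg, hgf⟩
    have : g = f := Subtype.ext hgf
    exact this ▸ hg
  · intro hf
    exact ⟨f, hf, rfl⟩

lemma radSpace_le {O : Subalgebra k K} {h : O} : radSpace O h ≤ O.toSubmodule := by
  rintro f ⟨g, -, rfl⟩
  exact g.2

lemma mem_radSpace_iff {O : Subalgebra k K} {h : O} {f : K} :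
    f ∈ radSpace O h ↔ f ∈ O ∧ ∃ n : ℕ, ∃ g ∈ O, f ^ n = h * g := by
  constructor
  · intro hf
    have hfO : f ∈ O := radSpace_le hf
    obtain ⟨n, hn⟩ := mem_radSpace (f := ⟨f, hfO⟩).1 hf
    obtain ⟨g, hg⟩ := Ideal.mem_span_singleton.1 hn
    exact ⟨hfO, n, g, g.2, congrArg Subtype.val hg⟩
  · rintro ⟨hfO, n, g, hg, e⟩
    refine mem_radSpace (f := ⟨f, hfO⟩).2 ⟨n, Ideal.mem_span_singleton.2 ⟨⟨g, hg⟩, ?_⟩⟩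
    exact Subtype.ext e

end Rings

/-- One level of the tower `z_{i+1}² = z_i + 4 / z_i` of function fields over `k`, of degree `M`
over `k(x)`, through the data and properties that the induction and the code construction use. `O`
is the ring of functions integral over `k[x]`, `Φ` the pole order at the unique place above `x = ∞`,
`z` the last generator, `θ` the extension of `(x⁵ - 16x) d/dx`, and `ev P` the evaluation at a
rational place `P` above a root of `splitPoly`; `ev P` is meaningful on `O[1/(x⁵ - 16x)]` only.

The field `theta_lead` says that `θ` multiplies leading coefficients at infinity by `lam` times the
pole order. The field `genus` is the Riemann–Hurwitz bound `2g + r ≤ 4M + 1`, where `r` is the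
degree of the radical of `x⁵ - 16x`, as seen by the dimensions of the spaces of functions with
bounded pole order. -/
structure Level (k K : Type) [Field k] [Field K] [Algebra k K] (M : ℕ) where
  Φ : PoleFiltration k K
  O : Subalgebra k K
  ded : IsDedekindDomain O
  frac : IsFractionRing O K
  x : O
  z : K
  θ : Derivation k K K
  lam : k
  Pt : Type
  fin : Fintype Pt
  ev : Pt → K → k
  M_pos : 0 < M
  deg_x : Φ.Deg x M
  deg_z : Φ.Deg z 1
  O_neg : Φ.part O.toSubmodule (-1) = ⊥
  lam_ne : lam ≠ 0
  theta_lead : ∀ f m, Φ.Deg f m → θ f - (lam * m) • ((x : K) ^ 4 * f) ∈ Φ.F (m + 4 * M - 1)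
  theta_x : θ x = (x : K) ^ 5 - 16 * x
  theta_O : ∀ f ∈ O, θ f ∈ O
  theta_R : ∀ f ∈ radSpace O (x ^ 5 - 16 * x), θ f ∈ radSpace O (x ^ 5 - 16 * x)
  z_mem : z ∈ awayRing O (x ^ 5 - 16 * x)
  z_inv_mem : z⁻¹ ∈ awayRing O (x ^ 5 - 16 * x)
  z_four_mem : (z ^ 4 - 16)⁻¹ ∈ awayRing O (x ^ 5 - 16 * x)
  card_pt : Fintype.card Pt = 20 * M
  ev_algebraMap : ∀ P c, ev P (algebraMap k K c) = c
  ev_add : ∀ P, ∀ f ∈ awayRing O (x ^ 5 - 16 * x), ∀ g ∈ awayRing O (x ^ 5 - 16 * x),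
    ev P (f + g) = ev P f + ev P g
  ev_mul : ∀ P, ∀ f ∈ awayRing O (x ^ 5 - 16 * x), ∀ g ∈ awayRing O (x ^ 5 - 16 * x),
    ev P (f * g) = ev P f * ev P g
  ev_x : ∀ P, splitPoly (ev P x) = 0
  ev_z : ∀ P, splitPoly (ev P z) = 0
  ev_vanish : ∀ f ∈ awayRing O (x ^ 5 - 16 * x), (∀ P, ev P f = 0) →
    ∃ g ∈ awayRing O (x ^ 5 - 16 * x), f = splitPoly (x : K) * g
  genus : ∀ m : ℤ, 2 * m + 1 - 4 * M ≤
    Φ.dim O.toSubmodule m + Φ.dim (radSpace O (x ^ 5 - 16 * x)) m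

namespace Level

variable {k K : Type} [Field k] [Field K] [Algebra k K] {M : ℕ} (L : Level k K M)

instance : Fintype L.Pt := L.fin

/-- The function `x⁵ - 16x`, whose zeros are the ramified places of the tower. -/
def h : L.O := L.x ^ 5 - 16 * L.x

lemma h_coe : (L.h : K) = (L.x : K) ^ 5 - 16 * L.x := rfl

lemma bdd : L.Φ.BddBelowSub L.O.toSubmodule := ⟨-1, L.O_neg⟩

/-- Riemann's inequality for genus at most `2M`. -/
lemma dim_O_ge (m : ℤ) : m + 1 - 2 * M ≤ L.Φ.dim L.O.toSubmodule m := by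
  have h1 := L.genus m
  have h2 : L.Φ.dim (radSpace L.O (L.x ^ 5 - 16 * L.x)) m ≤ L.Φ.dim L.O.toSubmodule m :=
    PoleFiltration.dim_le_dim L.bdd (inf_le_inf_right _ radSpace_le)
  omega

lemma eq_zero_of_neg {f : K} (hf : f ∈ L.O) {m : ℤ} (hm : f ∈ L.Φ.F m) (hneg : m < 0) : f = 0 := by
  have : f ∈ L.Φ.part L.O.toSubmodule (-1) := ⟨hf, L.Φ.mono (by omega) hm⟩
  rw [L.O_neg] at this
  simpa using this

lemma theta_mem {f : K} {m : ℤ} (hf : f ∈ L.Φ.F m) : L.θ f ∈ L.Φ.F (m + 4 * M) := by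
  by_cases h0 : f = 0
  · simp [h0]
  obtain ⟨n, hn, hd⟩ := PoleFiltration.exists_deg_le h0 hf
  have h1 := L.theta_lead f n hd
  have h2 : (L.x : K) ^ 4 * f ∈ L.Φ.F (4 * M + n) := by
    have := (L.deg_x.pow 4).mul hd
    exact this.1
  have := Submodule.add_mem (L.Φ.F (m + 4 * M)) (L.Φ.mono (by omega) h1)
    (Submodule.smul_mem _ (L.lam * n) (L.Φ.mono (by omega) h2))
  simpa using this

lemma ev_add' (P : L.Pt) {f g : K} (hf : f ∈ L.O) (hg : g ∈ L.O) :
    L.ev P (f + g) = L.ev P f + L.ev P g := L.ev_add P f (le_awayRing hf) g (le_awayRing hg)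

lemma ev_mul' (P : L.Pt) {f g : K} (hf : f ∈ L.O) (hg : g ∈ L.O) :
    L.ev P (f * g) = L.ev P f * L.ev P g := L.ev_mul P f (le_awayRing hf) g (le_awayRing hg)

/-- Evaluation at a place, as a `k`-algebra homomorphism on the affine ring. -/
def evO (P : L.Pt) : L.O →ₐ[k] k where
  toFun f := L.ev P f
  map_one' := by simpa using L.ev_algebraMap P 1
  map_mul' f g := L.ev_mul' P f.2 g.2
  map_zero' := by simpa using L.ev_algebraMap P 0
  map_add' f g := L.ev_add' P f.2 g.2
  commutes' c := L.ev_algebraMap P c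

/-- The derivation restricted to the affine ring. -/
def D (f : L.O) : L.O := ⟨L.θ f, L.theta_O f f.2⟩

lemma D_mul (f g : L.O) : L.D (f * g) = f * L.D g + g * L.D f := by
  apply Subtype.ext
  simp [D]

lemma D_add (f g : L.O) : L.D (f + g) = L.D f + L.D g := by
  apply Subtype.ext
  simp [D]

lemma D_smul (c : k) (f : L.O) : L.D (c • f) = c • L.D f := by
  apply Subtype.ext
  simp [D]

end Level

/-! ### The split places and Wronskians -/

section SplitPoly

variable {R : Type} [CommRing R]

/-- The quintic `σ` with `splitPoly c = σ(c⁴)`. -/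
def quint (v : R) : R := v ^ 5 + 4 * v ^ 4 + 3 * v ^ 3 + 4 * v ^ 2 + 5 * v + 1

/-- The cofactor of `quint` in `v³⁰ - 1` modulo `11`. -/
def quintCof (v : R) : R :=
  v^25 + 7*v^24 + 2*v^23 + 5*v^21 + 2*v^20 + 4*v^19 + 10*v^17 + 6*v^16 + 1*v^15 + 10*v^10 +
  4*v^9 + 9*v^8 + 6*v^6 + 9*v^5 + 7*v^4 + v^2 + 5*v + 10

lemma splitPoly_eq (c : R) : splitPoly c = quint (c ^ 4) := by
  unfold splitPoly quint
  ring

lemma quint_mul_cof (h11 : (11 : R) = 0) (v : R) : quint v * quintCof v = v ^ 30 - 1 := by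
  unfold quint quintCof
  linear_combination (1*v^29 + 3*v^28 + 3*v^27 + 4*v^26 + 6*v^25 + 4*v^24 + 4*v^23 + 5*v^22 +
    7*v^21 + 7*v^20 + 6*v^19 + 7*v^18 + 4*v^17 + 1*v^16 + 1*v^15 + 4*v^14 + 5*v^13 + 8*v^12 +
    9*v^11 + 9*v^10 + 10*v^9 + 8*v^8 + 8*v^7 + 8*v^6 + 7*v^5 + 6*v^4 + 5*v^3 + 6*v^2 + 5*v +
    1) * h11

/-- `splitPoly` is coprime to `x⁵ - 16x`: it is `1` at `0` and `-1` where `x⁴ = 16`. -/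
lemma splitPoly_sq (h11 : (11 : R) = 0) (x : R) : ∃ q : R,
    splitPoly x * splitPoly x = 1 + (x ^ 5 - 16 * x) * q := by
  refine ⟨x ^ 3 * (x^32 + 2*x^28 + 10*x^24 + 5*x^20 + 10*x^16 + 6*x^12 + 7*x^8 + 4*x^4 + 9), ?_⟩
  unfold splitPoly
  linear_combination (2*x^36 + 4*x^32 + 17*x^28 + 11*x^24 + 20*x^20 + 13*x^16 + 14*x^12 +
    8*x^8 + 14*x^4) * h11

lemma map_splitPoly {S : Type} [CommRing S] (φ : R →+* S) (c : R) :
    φ (splitPoly c) = splitPoly (φ c) := by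
  simp [splitPoly, map_ofNat]

end SplitPoly

namespace Level

variable {k K : Type} [Field k] [Field K] [Algebra k K] {M : ℕ} (L : Level k K M)

open PoleFiltration

/-- The function `splitPoly x`, whose zeros are exactly the evaluation places. -/
def sO : L.O := splitPoly L.x

lemma sO_coe : (L.sO : K) = splitPoly (L.x : K) :=
  map_splitPoly L.O.val.toRingHom L.x

lemma evO_sO (P : L.Pt) : L.evO P L.sO = 0 := by
  have h1 : L.evO P L.sO = splitPoly (L.evO P L.x) :=
    map_splitPoly (L.evO P).toRingHom L.x
  rw [h1]
  exact L.ev_x P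

lemma eleven_O (h11 : (11 : k) = 0) : (11 : L.O) = 0 := by
  have := congrArg (algebraMap k L.O) h11
  rwa [map_ofNat, map_zero] at this

/-- The evaluation places are simple zeros of `splitPoly x`. -/
lemma evO_D_sO (h11 : (11 : k) = 0) (P : L.Pt) : L.evO P (L.D L.sO) ≠ 0 := by
  intro h0
  have h1 : L.sO * quintCof (L.x ^ 4) = L.x ^ 120 - 1 := by
    rw [sO, splitPoly_eq, quint_mul_cof (L.eleven_O h11)]
    ring
  have hev : splitPoly (L.evO P L.x) = 0 := L.ev_x P
  set c := L.evO P L.x with hc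
  have hc0 : c ≠ 0 := by
    intro h
    simp [h, splitPoly] at hev
  have hD : L.D (L.x ^ 120 - 1) = 120 * L.x ^ 119 * (L.x ^ 5 - 16 * L.x) := by
    apply Subtype.ext
    have e : ((L.D (L.x ^ 120 - 1) : L.O) : K) = L.θ ((L.x : K) ^ 120 - 1) := by simp [D]
    rw [e]
    simp [L.theta_x, Derivation.leibniz_pow, mul_assoc]
    rfl
  have h2 := congrArg (fun f => L.evO P (L.D f)) h1
  simp only [D_mul, map_add, map_mul, hD, h0, evO_sO, mul_zero, zero_mul, add_zero, map_sub,
    map_pow] at h2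
  rw [← hc] at h2
  obtain ⟨q, hq⟩ := splitPoly_sq h11 c
  rw [hev] at hq
  have hh : c ^ 5 - 16 * c ≠ 0 := by
    intro h
    rw [h] at hq
    simp at hq
  have e120 : (120 : k) ≠ 0 := by
    intro h
    apply one_ne_zero (α := k)
    linear_combination 11 * h11 - h
  have : L.evO P 120 = (120 : k) := map_ofNat _ _
  have e16 : L.evO P 16 = (16 : k) := map_ofNat _ _
  rw [this, e16] at h2
  exact mul_ne_zero (mul_ne_zero e120 (pow_ne_zero _ hc0)) hh h2.symm

lemma deg_sO : L.Φ.Deg (L.sO : K) (20 * M) := by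
  rw [sO_coe]
  unfold splitPoly
  have hx := L.deg_x
  have hM := L.M_pos
  have aux : ∀ (c : k) (n : ℕ), n < 20 → algebraMap k K c * (L.x : K) ^ n ∈ L.Φ.F (20 * M - 1) := by
    intro c n hn
    have := mul_mem (algebraMap_mem (Φ := L.Φ) c) (hx.pow n).1
    refine L.Φ.mono ?_ this
    have : (n : ℤ) * M ≤ 19 * M := by
      apply mul_le_mul_of_nonneg_right <;> omega
    omega
  have h20 := hx.pow 20
  have := h20.add (Submodule.add_mem _ (Submodule.add_mem _ (Submodule.add_mem _
    (Submodule.add_mem _ (aux 4 16 (by norm_num)) (aux 3 12 (by norm_num)))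
    (aux 4 8 (by norm_num))) (aux 5 4 (by norm_num))) (aux 1 0 (by norm_num)))
  simp only [map_ofNat, map_one, pow_zero, mul_one] at this
  convert this using 1
  · ring
  · norm_num

/-- The property `ev_vanish` of `O[1/h]` descends to `O`, since `splitPoly x` is prime to `h`. -/
lemma sO_dvd (h11 : (11 : k) = 0) {f : L.O} (hf : ∀ P, L.evO P f = 0) : L.sO ∣ f := by
  obtain ⟨g, ⟨j, hj⟩, hg⟩ := L.ev_vanish f (le_awayRing f.2) hf
  rw [← sO_coe] at hg
  have hcop : IsCoprime L.sO L.h := by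
    obtain ⟨q, hq⟩ := splitPoly_sq (L.eleven_O h11) L.x
    exact ⟨L.sO, -q, by unfold sO h; linear_combination hq⟩
  obtain ⟨p, q, hpq⟩ := hcop.pow_right (n := j)
  have hpq' : (p : K) * L.sO + q * (L.h : K) ^ j = 1 := by
    simpa using congrArg Subtype.val hpq
  have hgO : g ∈ L.O := by
    have : g = p * f + q * ((L.h : K) ^ j * g) := by
      rw [hg]
      linear_combination (-g) * hpq'
    rw [this]
    exact L.O.add_mem (p * f).2 (L.O.mul_mem q.2 hj)
  exact ⟨⟨g, hgO⟩, Subtype.ext hg⟩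

lemma exists_ev_ne (h11 : (11 : k) = 0) {f : L.O} (hf : f ≠ 0) {m : ℤ} (hm : (f : K) ∈ L.Φ.F m)
    (h20 : m < 20 * M) : ∃ P, L.evO P f ≠ 0 := by
  by_contra! hc
  obtain ⟨g, rfl⟩ := L.sO_dvd h11 hc
  apply hf
  have : (g : K) ∈ L.Φ.F (m - 20 * M) := by
    rw [← (L.deg_sO).mul_mem_iff]
    simpa using hm
  have := L.eq_zero_of_neg g.2 this (by omega)
  rw [Subtype.ext (a1 := g) (a2 := 0) this, mul_zero]

/-- Functions in the affine ring with pole order at most `m` at infinity. -/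
def sect (m : ℤ) : Submodule k L.O := (L.Φ.F m).comap L.O.val.toLinearMap

lemma mem_sect {m : ℤ} {f : L.O} : f ∈ L.sect m ↔ (f : K) ∈ L.Φ.F m := Iff.rfl

lemma map_sect (m : ℤ) : (L.sect m).map L.O.val.toLinearMap = L.Φ.part L.O.toSubmodule m := by
  ext f
  constructor
  · rintro ⟨g, hg, rfl⟩
    exact ⟨g.2, hg⟩
  · rintro ⟨h1, h2⟩
    exact ⟨⟨f, h1⟩, h2, rfl⟩

instance (m : ℤ) : FiniteDimensional k (L.sect m) := by
  have := finite_part L.bdd m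
  rw [← map_sect] at this
  exact Module.Finite.equiv
    (Submodule.equivMapOfInjective L.O.val.toLinearMap Subtype.val_injective (L.sect m)).symm

lemma finrank_sect (m : ℤ) : (Module.finrank k (L.sect m) : ℤ) = L.Φ.dim L.O.toSubmodule m := by
  unfold dim
  rw [← map_sect]
  rw [LinearEquiv.finrank_eq
    (Submodule.equivMapOfInjective L.O.val.toLinearMap Subtype.val_injective (L.sect m))]

/-- The Wronskian of two functions with respect to `θ`. -/
def W (f g : L.O) : L.O := f * L.D g - g * L.D f

/-- A subspace on which all Wronskians vanish (all quotients lie in the constants of `θ`). -/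
def Insep (U : Submodule k L.O) : Prop := ∀ f ∈ U, ∀ g ∈ U, L.W f g = 0

lemma W_mem {f g : L.O} {m n : ℤ} (hf : f ∈ L.sect m) (hg : g ∈ L.sect n) :
    L.W f g ∈ L.sect (m + n + 4 * M) := by
  rw [mem_sect] at *
  have h1 := mul_mem hf (L.theta_mem hg)
  have h2 := mul_mem hg (L.theta_mem hf)
  have := Submodule.sub_mem (L.Φ.F (m + n + 4 * M)) (L.Φ.mono (by omega) h1)
    (L.Φ.mono (by omega) h2)
  exact this

lemma W_trans {f g w : L.O} (hw : w ≠ 0) (h1 : L.W f w = 0) (h2 : L.W w g = 0) : L.W f g = 0 := by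
  have : w * L.W f g = f * L.W w g + g * L.W f w := by
    unfold W
    ring
  rw [h1, h2, mul_zero, mul_zero, add_zero] at this
  exact (mul_eq_zero.1 this).resolve_left hw

lemma W_symm {f g : L.O} (h : L.W f g = 0) : L.W g f = 0 := by
  unfold W at *
  linear_combination -h

lemma W_add_left (f g w : L.O) : L.W (f + g) w = L.W f w + L.W g w := by
  unfold W
  rw [D_add]
  ring

/-- Two functions with vanishing Wronskian have pole orders congruent modulo `11`. -/
lemma deg_modEq [CharP k 11] {f g : L.O} (hW : L.W f g = 0) {i j : ℤ} (hf : L.Φ.Deg (f : K) i)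
    (hg : L.Φ.Deg (g : K) j) : (11 : ℤ) ∣ j - i := by
  have h1 := mul_mem hf.1 (L.theta_lead _ _ hg)
  have h2 := mul_mem hg.1 (L.theta_lead _ _ hf)
  have hx := (L.deg_x.pow 4).mul (hf.mul hg)
  have hW' : (f : K) * L.θ g - g * L.θ f = 0 := by
    simpa [W, D] using congrArg Subtype.val hW
  have h3 := Submodule.sub_mem (L.Φ.F (4 * M + (i + j) - 1)) (L.Φ.mono (by omega) h2)
    (L.Φ.mono (by omega) h1)
  have e : (g : K) * (L.θ f - (L.lam * i) • ((L.x : K) ^ 4 * f))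
      - f * (L.θ g - (L.lam * j) • ((L.x : K) ^ 4 * g))
      = (L.lam * (j - i : ℤ)) • ((L.x : K) ^ 4 * (f * g)) := by
    simp only [Algebra.smul_def, map_mul, Int.cast_sub, map_sub]
    linear_combination -hW'
  rw [e] at h3
  by_contra hnd
  have hc : L.lam * ((j - i : ℤ) : k) ≠ 0 := by
    refine mul_ne_zero L.lam_ne ?_
    intro h
    rw [CharP.intCast_eq_zero_iff k 11] at h
    exact hnd (by exact_mod_cast h)
  have := Submodule.smul_mem _ (L.lam * ((j - i : ℤ) : k))⁻¹ h3
  rw [smul_smul, inv_mul_cancel₀ hc, one_smul] at this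
  exact hx.2 this

end Level

/-! ### Double zeros at few places -/

open PoleFiltration

/-- If all pole orders in `S` are congruent modulo `11`, then raising the bound on the pole order by
`11` enlarges the space by at most one dimension. -/
lemma PoleFiltration.dim_gap {k K : Type} [Field k] [Field K] [Algebra k K]
    {Φ : PoleFiltration k K} {S : Submodule k K} (hS : Φ.BddBelowSub S)
    (hdeg : ∀ f ∈ S, ∀ g ∈ S, ∀ i j, Φ.Deg f i → Φ.Deg g j → (11 : ℤ) ∣ j - i) (m : ℤ) :
    Φ.dim S (m + 11) ≤ Φ.dim S m + 1 := by
  have key : ∃ g : K, Φ.part S (m + 11) ≤ Φ.part S m ⊔ Submodule.span k {g} := by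
    by_cases h : ∃ g ∈ S, ∃ n, m < n ∧ n ≤ m + 11 ∧ Φ.Deg g n
    · obtain ⟨g, hgS, n, hn1, hn2, hg⟩ := h
      refine ⟨g, fun f hf => ?_⟩
      have hfn : f ∈ Φ.F n := by
        by_cases hf0 : f = 0
        · simp [hf0]
        obtain ⟨i, hi, hfi⟩ := exists_deg_le hf0 hf.2
        have := hdeg f hf.1 g hgS i n hfi hg
        exact hfi.mem_iff.2 (by omega)
      obtain ⟨c, hc⟩ := Φ.lead f g n hfn hg
      have hr : f - c • g ∈ S := S.sub_mem hf.1 (S.smul_mem c hgS)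
      have hrm : f - c • g ∈ Φ.F m := by
        by_cases hf0 : f - c • g = 0
        · simp [hf0]
        obtain ⟨i, hi, hfi⟩ := exists_deg_le hf0 hc
        have := hdeg _ hr g hgS i n hfi hg
        exact hfi.mem_iff.2 (by omega)
      rw [show f = (f - c • g) + c • g by abel]
      exact Submodule.add_mem_sup ⟨hr, hrm⟩
        (Submodule.smul_mem _ _ (Submodule.mem_span_singleton_self g))
    · refine ⟨0, fun f hf => Submodule.mem_sup_left ⟨hf.1, ?_⟩⟩
      by_cases hf0 : f = 0
      · simp [hf0]
      obtain ⟨i, hi, hfi⟩ := exists_deg_le hf0 hf.2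
      by_contra hc
      rw [SetLike.mem_coe, hfi.mem_iff] at hc
      exact h ⟨f, hf.1, i, by omega, hi, hfi⟩
  obtain ⟨g, hg⟩ := key
  have := finite_part hS m
  have h1 := Submodule.finrank_mono hg
  have h2 := Submodule.finrank_add_le_finrank_add_finrank (Φ.part S m) (Submodule.span k {g})
  have h3 : Module.finrank k (Submodule.span k {g}) ≤ 1 := by
    simpa using finrank_span_le_card (R := k) ({g} : Set K)
  unfold dim
  exact_mod_cast (by omega :
    Module.finrank k (Φ.part S (m + 11)) ≤ Module.finrank k (Φ.part S m) + 1)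

namespace Level

variable {k K : Type} [Field k] [Field K] [Algebra k K] {M : ℕ} (L : Level k K M)

/-- Inseparable spaces are small, as all pole orders in them are congruent modulo `11`. -/
lemma insep_finrank [CharP k 11] {U : Submodule k L.O} (hU : L.Insep U) (hle : U ≤ L.sect (5 * M)) :
    2 * Module.finrank k U ≤ 3 * M + 3 := by
  set S := U.map L.O.val.toLinearMap with hS
  have hfr : Module.finrank k U = Module.finrank k S :=
    LinearEquiv.finrank_eq (Submodule.equivMapOfInjective L.O.val.toLinearMap
      Subtype.val_injective U)
  have hSO : S ≤ L.O.toSubmodule := by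
    rintro f ⟨g, -, rfl⟩
    exact g.2
  have hb : L.Φ.BddBelowSub S := L.bdd.mono hSO
  have hdeg : ∀ f ∈ S, ∀ g ∈ S, ∀ i j, L.Φ.Deg f i → L.Φ.Deg g j → (11 : ℤ) ∣ j - i := by
    rintro _ ⟨f, hf, rfl⟩ _ ⟨g, hg, rfl⟩ i j hi hj
    exact L.deg_modEq (hU f hf g hg) hi hj
  have h0 : L.Φ.dim S (-1) = 0 := by
    have : L.Φ.part S (-1) = ⊥ := le_bot_iff.1 (L.O_neg ▸ inf_le_inf_right _ hSO)
    unfold dim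
    rw [this]
    simp
  have hn : ∀ n : ℕ, L.Φ.dim S (-1 + 11 * n) ≤ n := by
    intro n
    induction n with
    | zero => simp [h0]
    | succ n ih =>
      have := dim_gap hb hdeg (-1 + 11 * n)
      rw [show (-1 + 11 * (n + 1 : ℕ) : ℤ) = -1 + 11 * n + 11 by push_cast; ring]
      push_cast
      linarith
  have hpart : L.Φ.part S (5 * M) = S := by
    apply le_antisymm inf_le_left
    rintro _ ⟨f, hf, rfl⟩
    exact ⟨⟨f, hf, rfl⟩, hle hf⟩
  have h1 : (Module.finrank k S : ℤ) = L.Φ.dim S (5 * M) := by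
    unfold dim
    rw [hpart]
  have h2 := hn ((5 * M + 11) / 11)
  have h3 : L.Φ.dim S (5 * M) ≤ L.Φ.dim S (-1 + 11 * ((5 * M + 11) / 11 : ℕ)) :=
    dim_mono hb (by omega)
  omega

/-- The value and the `θ`-derivative of a function at a place. -/
def jet (P : L.Pt) : L.O →ₗ[k] k × k where
  toFun f := (L.evO P f, L.evO P (L.D f))
  map_add' f g := by simp [D_add]
  map_smul' c f := by simp [D_smul]

lemma mem_ker_jet {P : L.Pt} {f : L.O} :
    f ∈ LinearMap.ker (L.jet P) ↔ L.evO P f = 0 ∧ L.evO P (L.D f) = 0 := by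
  simp [jet]

/-- The crude version of `exists_points`, in which each place imposes only one condition. -/
lemma exists_points_small (h11 : (11 : k) = 0) (n : ℕ) : ∀ V : Submodule k L.O,
    V ≤ L.sect (5 * M) → Module.finrank k V = n →
    ∃ Q : Finset L.Pt, Q.card ≤ n ∧ ∀ f ∈ V, (∀ P ∈ Q, f ∈ LinearMap.ker (L.jet P)) → f = 0 := by
  classical
  induction n using Nat.strong_induction_on with
  | _ n ih =>
  intro V hV hn
  have hfin : FiniteDimensional k V := Submodule.finiteDimensional_of_le hV
  by_cases h0 : V = ⊥
  · exact ⟨∅, by simp, fun f hf _ => by simpa [h0] using hf⟩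
  obtain ⟨f, hf, hf0⟩ := Submodule.exists_mem_ne_zero_of_ne_bot h0
  have hM := L.M_pos
  obtain ⟨P, hP⟩ := L.exists_ev_ne h11 hf0 (hV hf) (by omega)
  have hlt : V ⊓ LinearMap.ker (L.jet P) < V := by
    refine lt_of_le_of_ne inf_le_left fun h => hP ?_
    rw [← h] at hf
    exact (L.mem_ker_jet.1 hf.2).1
  have hfr := Submodule.finrank_lt_finrank_of_lt hlt
  obtain ⟨Q, hQ1, hQ2⟩ := ih _ (hn ▸ hfr) _ (hlt.le.trans hV) rfl
  refine ⟨insert P Q, (Finset.card_insert_le _ _).trans (by omega), fun g hg hall => ?_⟩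
  exact hQ2 g ⟨hg, hall P (by simp)⟩ fun P' hP' => hall P' (by simp [hP'])

lemma finrank_inf_ker {V : Submodule k L.O} [FiniteDimensional k V] {P : L.Pt} {f g : L.O}
    (hf : f ∈ V) (hg : g ∈ V) (hW : L.evO P (L.W f g) ≠ 0) :
    Module.finrank k (V ⊓ LinearMap.ker (L.jet P) : Submodule k L.O) + 2
      = Module.finrank k V := by
  have h1 := LinearMap.finrank_range_add_finrank_ker ((L.jet P).domRestrict V)
  have h2 : LinearMap.range ((L.jet P).domRestrict V) = ⊤ := by
    rw [eq_top_iff]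
    rintro ⟨α, β⟩ -
    set a := L.evO P f
    set b := L.evO P (L.D f)
    set c := L.evO P g
    set d := L.evO P (L.D g)
    have hdet : a * d - c * b ≠ 0 := by simpa [W] using hW
    refine ⟨⟨((α * d - β * c) / (a * d - c * b)) • f + ((a * β - b * α) / (a * d - c * b)) • g,
      V.add_mem (V.smul_mem _ hf) (V.smul_mem _ hg)⟩, ?_⟩
    simp only [LinearMap.domRestrict_apply, map_add, map_smul]
    have e1 : L.jet P f = (a, b) := rfl
    have e2 : L.jet P g = (c, d) := rfl
    rw [e1, e2]
    ext
    · simp only [Prod.fst_add, Prod.smul_fst, smul_eq_mul]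
      rw [div_mul_eq_mul_div, div_mul_eq_mul_div, ← add_div, div_eq_iff hdet]
      ring
    · simp only [Prod.snd_add, Prod.smul_snd, smul_eq_mul]
      rw [div_mul_eq_mul_div, div_mul_eq_mul_div, ← add_div, div_eq_iff hdet]
      ring
  rw [h2, finrank_top, Module.finrank_prod, Module.finrank_self] at h1
  have h3 : Module.finrank k (LinearMap.ker ((L.jet P).domRestrict V))
      = Module.finrank k (V ⊓ LinearMap.ker (L.jet P) : Submodule k L.O) := by
    have e : (LinearMap.ker ((L.jet P).domRestrict V)).map V.subtype
        = V ⊓ LinearMap.ker (L.jet P) := by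
      ext w
      simp [and_comm]
    rw [← e]
    exact LinearEquiv.finrank_eq (Submodule.equivMapOfInjective V.subtype
      Subtype.val_injective _)
  omega

/-- If inseparable subspaces of `V` have at most about half the dimension of `V`, then about
`dim V / 2` places suffice to kill `V` by imposing double zeros: at each stage some place imposes
two conditions on `V` while keeping the invariant. -/
lemma exists_points (h11 : (11 : k) = 0) (n : ℕ) : ∀ V : Submodule k L.O,
    V ≤ L.sect (5 * M) → Module.finrank k V = n →
    (∀ U ≤ V, L.Insep U → 2 * Module.finrank k U ≤ n + 2) →
    ∃ Q : Finset L.Pt, 2 * Q.card ≤ n + 2 ∧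
      ∀ f ∈ V, (∀ P ∈ Q, f ∈ LinearMap.ker (L.jet P)) → f = 0 := by
  classical
  induction n using Nat.strong_induction_on with
  | _ n ih =>
  intro V hV hn hinv
  have hfin : FiniteDimensional k V := Submodule.finiteDimensional_of_le hV
  rcases le_or_gt n 2 with hsmall | hbig
  · obtain ⟨Q, hQ, hQ'⟩ := L.exists_points_small h11 n V hV hn
    exact ⟨Q, by omega, hQ'⟩
  have hV' : ¬ L.Insep V := fun h => by
    have := hinv V le_rfl h
    omega
  unfold Insep at hV'
  push Not at hV'
  obtain ⟨f, hf, g, hg, hW⟩ := hV'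
  -- `u` is taken in a large inseparable subspace whenever there is one
  obtain ⟨u, huV, hu0, hu⟩ : ∃ u ∈ V, u ≠ 0 ∧
      ((∃ U ≤ V, L.Insep U ∧ n < 2 * Module.finrank k U) →
        ∃ U ≤ V, L.Insep U ∧ n < 2 * Module.finrank k U ∧ u ∈ U) := by
    by_cases hex : ∃ U ≤ V, L.Insep U ∧ n < 2 * Module.finrank k U
    · obtain ⟨U, hUV, hUi, hUn⟩ := hex
      have hUb : U ≠ ⊥ := by
        rintro rfl
        simp at hUn
      obtain ⟨u, hu, hu0⟩ := Submodule.exists_mem_ne_zero_of_ne_bot hUb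
      exact ⟨u, hUV hu, hu0, fun _ => ⟨U, hUV, hUi, hUn, hu⟩⟩
    · refine ⟨f, hf, ?_, fun h => absurd h hex⟩
      rintro rfl
      apply hW
      have : L.D 0 = 0 := Subtype.ext (by simp [D])
      simp [W, this]
  have hM := L.M_pos
  have hWm := mul_mem (L.W_mem (hV hf) (hV hg)) (hV huV)
  obtain ⟨P, hP⟩ := L.exists_ev_ne (f := L.W f g * u) h11 (mul_ne_zero hW hu0) hWm (by omega)
  rw [map_mul] at hP
  have hdim := L.finrank_inf_ker hf hg (left_ne_zero_of_mul hP)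
  set V' := V ⊓ LinearMap.ker (L.jet P) with hV'
  obtain ⟨Q, hQ1, hQ2⟩ := ih (n - 2) (by omega) V' (inf_le_left.trans hV) (by omega) (by
    intro U' hU' hi'
    by_contra hc
    have hn' : n < 2 * Module.finrank k U' := by omega
    have hU'V : U' ≤ V := hU'.trans inf_le_left
    obtain ⟨U, hUV, hUi, hUn, huU⟩ := hu ⟨U', hU'V, hi', hn'⟩
    have : FiniteDimensional k U := Submodule.finiteDimensional_of_le hUV
    have : FiniteDimensional k U' := Submodule.finiteDimensional_of_le hU'V
    have hsup : U ⊔ U' ≤ V := sup_le hUV hU'V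
    have hs := Submodule.finrank_mono hsup
    have hsi := Submodule.finrank_sup_add_finrank_inf_eq U U'
    have hib : U ⊓ U' ≠ ⊥ := by
      intro h
      rw [h, finrank_bot] at hsi
      omega
    obtain ⟨w, ⟨hwU, hwU'⟩, hw0⟩ := Submodule.exists_mem_ne_zero_of_ne_bot hib
    have hw : ∀ a ∈ U ⊔ U', L.W a w = 0 := by
      intro a ha
      obtain ⟨b, hb, c, hc, rfl⟩ := Submodule.mem_sup.1 ha
      rw [W_add_left, hUi b hb w hwU, hi' c hc w hwU', add_zero]
    have hins : L.Insep (U ⊔ U') := fun a ha b hb =>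
      L.W_trans hw0 (hw a ha) (L.W_symm (hw b hb))
    have h4 := hinv _ hsup hins
    have hlt : U' < U ⊔ U' := by
      refine lt_of_le_of_ne le_sup_right fun h => ?_
      have : u ∈ U' := h ▸ Submodule.mem_sup_left huU
      exact right_ne_zero_of_mul hP (L.mem_ker_jet.1 (hU' this).2).1
    have h5 := Submodule.finrank_lt_finrank_of_lt hlt
    omega)
  refine ⟨insert P Q, ?_, fun f hf hall => hQ2 f ⟨hf, hall P (by simp)⟩
    fun P' hP' => hall P' (by simp [hP'])⟩
  have := Finset.card_insert_le P Q
  omega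

end Level

/-! ### The outer code -/

open PoleFiltration

namespace Level

variable {k K : Type} [Field k] [Field K] [Algebra k K] {M : ℕ} (L : Level k K M)

open Classical in
/-- The number of pole orders in `[0, m]` that occur in the affine ring bounds `dim O_m`. -/
lemma dim_le_card (m : ℕ) : L.Φ.dim L.O.toSubmodule m ≤
    (((Finset.range (m + 1)).filter (fun n : ℕ => ∃ f ∈ L.O, L.Φ.Deg f n)).card : ℤ) := by
  have step : ∀ n : ℕ, L.Φ.dim L.O.toSubmodule n ≤ L.Φ.dim L.O.toSubmodule ((n : ℤ) - 1) +
      (if ∃ f ∈ L.O, L.Φ.Deg f n then 1 else 0) := by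
    intro n
    split_ifs with h
    · simpa using dim_succ L.bdd ((n : ℤ) - 1)
    · rw [add_zero]
      refine dim_le_dim L.bdd fun f hf => ⟨hf.1, ?_⟩
      by_contra hc
      exact h ⟨f, hf.1, hf.2, hc⟩
  induction m with
  | zero =>
    have h0 : L.Φ.dim L.O.toSubmodule (-1) = 0 := by
      unfold dim
      rw [L.O_neg]
      simp
    have := step 0
    simp only [Nat.cast_zero, zero_sub, h0] at this
    rw [Finset.card_filter, Nat.zero_add, Finset.sum_range_one]
    push_cast
    simpa using this
  | succ m ih =>
    have := step (m + 1)
    rw [show ((m + 1 : ℕ) : ℤ) - 1 = m by push_cast; ring] at this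
    rw [Finset.card_filter] at ih ⊢
    rw [Finset.sum_range_succ]
    push_cast at *
    linarith

/-- The conductor bound for the semigroup of pole orders: it has at most `2M` gaps, so it contains
every integer from `4M` on. -/
lemma exists_deg_of_ge {m : ℕ} (hm : 4 * M ≤ m) : ∃ f ∈ L.O, L.Φ.Deg f m := by
  classical
  by_contra hc
  set p : ℕ → Prop := fun n => ∃ f ∈ L.O, L.Φ.Deg f n with hp
  have h1 := L.dim_le_card m
  have h2 := L.dim_O_ge m
  set H := (Finset.range (m + 1)).filter p with hH
  -- if `m` is a gap then `n` and `m - n` are never both pole orders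
  have h3 : H.card ≤ ((Finset.range (m + 1)).filter (fun n => ¬ p n)).card := by
    refine Finset.card_le_card_of_injOn (fun n => m - n) ?_ ?_
    · intro n hn
      have hn' := Finset.mem_filter.1 (Finset.mem_coe.1 hn)
      obtain ⟨hnr, f, hf, hfd⟩ := hn'
      have hnm : n ≤ m := by
        have := Finset.mem_range.1 hnr
        omega
      simp only [Finset.coe_filter, Finset.mem_range, Set.mem_ofPred_eq]
      refine ⟨by omega, ?_⟩
      rintro ⟨g, hg, hgd⟩
      refine hc ⟨f * g, L.O.mul_mem hf hg, ?_⟩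
      have := hfd.mul hgd
      rwa [show (n : ℤ) + ((m - n : ℕ) : ℤ) = m by omega] at this
    · intro a ha b hb hab
      have ha' := Finset.mem_range.1 (Finset.mem_filter.1 (Finset.mem_coe.1 ha)).1
      have hb' := Finset.mem_range.1 (Finset.mem_filter.1 (Finset.mem_coe.1 hb)).1
      simp only at hab
      omega
  have h4 := Finset.card_filter_add_card_filter_not (s := Finset.range (m + 1)) p
  rw [Finset.card_range] at h4
  change _ ≤ (H.card : ℤ) at h1
  change H.card + _ = _ at h4
  omega

lemma dim_O_add {m : ℕ} (hm : 4 * M ≤ m) (n : ℕ) :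
    L.Φ.dim L.O.toSubmodule m + n ≤ L.Φ.dim L.O.toSubmodule (m + n) := by
  induction n with
  | zero => simp
  | succ n ih =>
    obtain ⟨f, hf, hd⟩ := L.exists_deg_of_ge (m := m + n + 1) (by omega)
    have hlt : L.Φ.part L.O.toSubmodule (m + n) < L.Φ.part L.O.toSubmodule (m + n + 1) := by
      refine lt_of_le_of_ne (part_mono _ (by omega)) fun h => hd.2 ?_
      have : f ∈ L.Φ.part L.O.toSubmodule (m + n + 1) := ⟨hf, by simpa using hd.1⟩
      rw [← h] at this
      simpa using this.2
    have := finite_part L.bdd (m + n + 1)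
    have h1 := Submodule.finrank_lt_finrank_of_lt hlt
    rw [show (m : ℤ) + ((n + 1 : ℕ) : ℤ) = m + n + 1 by push_cast; ring]
    unfold dim at ih ⊢
    push_cast
    omega

open Classical in
/-- The code coordinates: the value at ordinary places, the derivative at the places of `Q`. -/
noncomputable def codeMap (Q : Finset L.Pt) : L.O →ₗ[k] (L.Pt → k) where
  toFun f P := if P ∈ Q then L.evO P (L.D f) else L.evO P f
  map_add' f g := by
    ext P
    by_cases h : P ∈ Q <;> simp [h, D_add]
  map_smul' c f := by
    ext P
    by_cases h : P ∈ Q <;> simp [h, D_smul]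

/-- Suppose that no nonzero function of pole order at most `5M` has double zeros on `Q`. If two
functions of pole order at most `25M/2` vanishing on `Q` had codewords of disjoint supports, their
product would be divisible by `splitPoly x`, and the quotient would have pole order at most `5M` and
double zeros on `Q`. -/
lemma codeMap_intersecting (h11 : (11 : k) = 0) {Q : Finset L.Pt}
    (hQ : ∀ f ∈ L.sect (5 * M), (∀ P ∈ Q, f ∈ LinearMap.ker (L.jet P)) → f = 0)
    {d : ℤ} (hd : 2 * d ≤ 25 * M) {f g : L.O} (hf : f ∈ L.sect d) (hg : g ∈ L.sect d)
    (hfQ : ∀ P ∈ Q, L.evO P f = 0) (hgQ : ∀ P ∈ Q, L.evO P g = 0)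
    (hf0 : f ≠ 0) (hg0 : g ≠ 0) : ∃ P, L.codeMap Q f P ≠ 0 ∧ L.codeMap Q g P ≠ 0 := by
  classical
  by_contra! hc
  have hvan : ∀ P, L.evO P (f * g) = 0 := by
    intro P
    rw [map_mul]
    by_cases hP : P ∈ Q
    · rw [hfQ P hP, zero_mul]
    · by_cases h : L.evO P f = 0
      · rw [h, zero_mul]
      · have := hc P (by simpa [codeMap, hP] using h)
        have h' : L.evO P g = 0 := by simpa [codeMap, hP] using this
        rw [h', mul_zero]
  obtain ⟨w, hw⟩ := L.sO_dvd h11 hvan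
  have hwm : w ∈ L.sect (5 * M) := by
    rw [mem_sect]
    have h1 : ((L.sO * w : L.O) : K) ∈ L.Φ.F (d + d) := by
      rw [← hw]
      exact mul_mem hf hg
    have h2 : (w : K) ∈ L.Φ.F (d + d - 20 * M) := by
      rw [← L.deg_sO.mul_mem_iff]
      simpa using h1
    exact L.Φ.mono (by omega) h2
  have hw0 : w = 0 := by
    refine hQ w hwm fun P hP => L.mem_ker_jet.2 ?_
    have hs := L.evO_sO P
    have hDs := L.evO_D_sO h11 P
    have e1 := congrArg (fun q => L.evO P (L.D q)) hw
    simp only [D_mul, map_add, map_mul, hfQ P hP, hgQ P hP, hs, zero_mul, add_zero,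
      zero_add] at e1
    have hw1 : L.evO P w = 0 := by
      rcases mul_eq_zero.1 e1.symm with h | h
      · exact h
      · exact absurd h hDs
    refine ⟨hw1, ?_⟩
    have e2 := congrArg (fun q => L.evO P (L.D (L.D q))) hw
    simp only [D_mul, D_add, map_add, map_mul, hfQ P hP, hgQ P hP, hs, hw1, zero_mul,
      zero_add] at e2
    have hprod : L.evO P (L.D f) * L.evO P (L.D g) = 0 := by
      by_cases h : L.evO P (L.D f) = 0
      · rw [h, zero_mul]
      · have := hc P (by simpa [codeMap, hP] using h)
        have h' : L.evO P (L.D g) = 0 := by simpa [codeMap, hP] using this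
        rw [h', mul_zero]
    have h2 : (2 : k) ≠ 0 := by
      intro h
      apply one_ne_zero (α := k)
      linear_combination h11 - 5 * h
    have h3 : (2 * L.evO P (L.D L.sO)) * L.evO P (L.D w) = 0 := by
      linear_combination 2 * hprod - e2
    exact (mul_eq_zero.1 h3).resolve_left (mul_ne_zero h2 hDs)
  rw [hw0, mul_zero] at hw
  exact (mul_ne_zero hf0 hg0) hw

/-- The level-`M` outer code: length `20M`, dimension at least `9M - 1`, and any two nonzero
codewords have intersecting supports. -/
theorem exists_code [CharP k 11] : ∃ (C : Submodule k L.O) (c : L.O →ₗ[k] (L.Pt → k)),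
    9 * M ≤ Module.finrank k C + 1 ∧
    ∀ f ∈ C, ∀ g ∈ C, f ≠ 0 → g ≠ 0 → ∃ P, c f P ≠ 0 ∧ c g P ≠ 0 := by
  classical
  have h11 : (11 : k) = 0 := by exact_mod_cast CharP.cast_eq_zero k 11
  have hM := L.M_pos
  have hV := L.finrank_sect (5 * M)
  have hge := L.dim_O_ge (5 * M)
  obtain ⟨Q, hQ1, hQ2⟩ := L.exists_points h11 _ (L.sect (5 * M)) le_rfl rfl (by
    intro U hU hi
    have := L.insep_finrank hi hU
    omega)
  set d : ℕ := 25 * M / 2 with hd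
  let φ : L.sect d →ₗ[k] (Q → k) :=
    { toFun := fun f P => L.evO P f
      map_add' := fun f g => by ext P; simp
      map_smul' := fun c f => by ext P; simp }
  refine ⟨(LinearMap.ker φ).map (L.sect d).subtype, L.codeMap Q, ?_, ?_⟩
  · have h1 := LinearMap.finrank_range_add_finrank_ker φ
    have h2 := Submodule.finrank_le (LinearMap.range φ)
    rw [Module.finrank_fintype_fun_eq_card, Fintype.card_coe] at h2
    have h3 : Module.finrank k (LinearMap.ker φ)
        = Module.finrank k ((LinearMap.ker φ).map (L.sect d).subtype) :=
      LinearEquiv.finrank_eq (Submodule.equivMapOfInjective _ Subtype.val_injective _)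
    have h4 := L.finrank_sect d
    have h5 := L.dim_O_add (m := 5 * M) (by omega) (d - 5 * M)
    rw [show ((5 * M : ℕ) : ℤ) + ((d - 5 * M : ℕ) : ℤ) = d by omega] at h5
    push_cast at h5
    omega
  · rintro _ ⟨f, hf, rfl⟩ _ ⟨g, hg, rfl⟩ hf0 hg0
    have hfz : φ f = 0 := hf
    have hgz : φ g = 0 := hg
    exact L.codeMap_intersecting h11 hQ2 (d := d) (by omega) f.2 g.2
      (fun P hP => congrFun hfz ⟨P, hP⟩) (fun P hP => congrFun hgz ⟨P, hP⟩) hf0 hg0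

end Level

/-! ### The inner code and concatenation -/

/-- Eight quadratic forms on `𝔽₂⁴` with pairwise nonsingular differences, given by their values at
the fifteen nonzero vectors. -/
def quadMask (i : Fin 8) : ℕ := [0, 13664, 22064, 10004, 3188, 26948, 14884, 6992].getD i 0

/-- The sixteen linear forms on `𝔽₂⁴`, given by their values at the fifteen nonzero vectors. -/
def linMask (r : Fin 16) : ℕ :=
  [0, 21845, 26214, 13107, 30840, 11565, 7710, 19275, 32640, 10965, 6630, 19635, 2040, 21165,
    24990, 13515].getD r 0

/-- Words of the shortened Nordstrom–Robinson code as 15-bit masks: quadratic plus linear forms. -/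
def innerMask (a : Fin 8 × Fin 16) : ℕ := quadMask a.1 ^^^ linMask a.2

/-- The number of ones among the lowest fifteen bits. -/
def popCount15 (n : ℕ) : ℕ :=
  ((List.finRange 15).filter (fun t : Fin 15 => n.testBit (t : ℕ))).length

/-- The inner code word with index `a`. -/
def innerWord (a : Fin 8 × Fin 16) (t : Fin 15) : ZMod 2 :=
  if (innerMask a).testBit t then 1 else 0

lemma linMask_xor : ∀ r s : Fin 16, ∃ u : Fin 16, linMask r ^^^ linMask s = linMask u ∧
    (u = 0 → r = s) := by
  decide +kernel

/-- The inner code has minimum distance `6` and maximum distance `10`, so its distances satisfy the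
strict triangle inequality. -/
lemma popCount_mask : ∀ (i j : Fin 8) (u : Fin 16), (i = j → u ≠ 0) →
    6 ≤ popCount15 (quadMask i ^^^ quadMask j ^^^ linMask u) ∧
    popCount15 (quadMask i ^^^ quadMask j ^^^ linMask u) ≤ 10 := by
  decide +kernel

lemma popCount_innerMask (a b : Fin 8 × Fin 16) (hab : a ≠ b) :
    6 ≤ popCount15 (innerMask a ^^^ innerMask b) ∧
    popCount15 (innerMask a ^^^ innerMask b) ≤ 10 := by
  obtain ⟨u, hu, hu0⟩ := linMask_xor a.2 b.2
  have e : innerMask a ^^^ innerMask b = quadMask a.1 ^^^ quadMask b.1 ^^^ linMask u := by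
    rw [← hu, innerMask, innerMask]
    ac_rfl
  rw [e]
  exact popCount_mask a.1 b.1 u fun h1 h2 => hab (Prod.ext h1 (hu0 h2))

lemma hammingDist_innerWord (a b : Fin 8 × Fin 16) :
    hammingDist (innerWord a) (innerWord b) = popCount15 (innerMask a ^^^ innerMask b) := by
  unfold hammingDist popCount15
  have : (Finset.univ.filter fun t => innerWord a t ≠ innerWord b t)
      = ((List.finRange 15).filter
          (fun t : Fin 15 => (innerMask a ^^^ innerMask b).testBit (t : ℕ))).toFinset := by
    ext t
    rw [Finset.mem_filter]
    simp only [Finset.mem_univ, true_and, List.mem_toFinset, List.mem_filter,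
      List.mem_finRange, Nat.testBit_xor, innerWord]
    cases (innerMask a).testBit t <;> cases (innerMask b).testBit t <;> simp
  rw [this, List.toFinset_card_of_nodup ((List.nodup_finRange 15).filter _)]

lemma innerWord_separating {a b c : Fin 8 × Fin 16} (hab : a ≠ b) (hbc : b ≠ c) :
    hammingDist (innerWord a) (innerWord c)
      < hammingDist (innerWord a) (innerWord b) + hammingDist (innerWord b) (innerWord c) := by
  have h1 := (popCount_innerMask a b hab).1
  have h2 := (popCount_innerMask b c hbc).1
  rw [hammingDist_innerWord a b, hammingDist_innerWord b c]
  by_cases hac : a = c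
  · rw [hac, hammingDist_self]
    omega
  · rw [hammingDist_innerWord a c]
    have h3 := (popCount_innerMask a c hac).2
    omega

lemma innerWord_injective : Function.Injective innerWord := by
  intro a b h
  by_contra hab
  have h1 := (popCount_innerMask a b hab).1
  rw [← hammingDist_innerWord, h, hammingDist_self] at h1
  omega

/-- Concatenation with the inner code turns an intersecting linear code over a field with at most
`128` elements into a binary `(2,1)`-separating code of `15` times the length. -/
lemma exists_separating_of_intersecting {k V ι : Type} [Field k] [Finite k] [AddCommGroup V]
    [Module k V] [Fintype ι] {n : ℕ} (hn : n = 15 * Fintype.card ι) (hk : Nat.card k ≤ 128)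
    (C : Submodule k V) (c : V →ₗ[k] (ι → k))
    (hC : ∀ f ∈ C, ∀ g ∈ C, f ≠ 0 → g ≠ 0 → ∃ P, c f P ≠ 0 ∧ c g P ≠ 0) :
    ∃ S : Set (Fin n → ZMod 2), IsSeparating21 S ∧ S.ncard = Nat.card C := by
  classical
  subst hn
  have : Fintype k := Fintype.ofFinite k
  obtain ⟨ι₀⟩ : Nonempty (k ↪ Fin 8 × Fin 16) := by
    apply Function.Embedding.nonempty_of_card_le
    rwa [Fintype.card_prod, Fintype.card_fin, Fintype.card_fin, ← Nat.card_eq_fintype_card]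
  let e : Fin (15 * Fintype.card ι) ≃ ι × Fin 15 :=
    (Fintype.equivFinOfCardEq (by rw [Fintype.card_prod, Fintype.card_fin, mul_comm])).symm
  let w : V → (Fin (15 * Fintype.card ι) → ZMod 2) :=
    fun f i => innerWord (ι₀ (c f (e i).1)) (e i).2
  have hdist : ∀ f g : V, hammingDist (w f) (w g)
      = ∑ P, hammingDist (innerWord (ι₀ (c f P))) (innerWord (ι₀ (c g P))) := by
    intro f g
    simp only [hammingDist, Finset.card_filter]
    rw [← Fintype.sum_prod_type' (f := fun P t =>
      if innerWord (ι₀ (c f P)) t ≠ innerWord (ι₀ (c g P)) t then 1 else 0)]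
    exact Equiv.sum_comp e (fun p : ι × Fin 15 =>
      if innerWord (ι₀ (c f p.1)) p.2 ≠ innerWord (ι₀ (c g p.1)) p.2 then 1 else 0)
  have hinj : Set.InjOn w C := by
    intro f hf g hg hfg
    by_contra hne
    obtain ⟨P, hP, -⟩ := hC _ (C.sub_mem hf hg) _ (C.sub_mem hf hg)
      (sub_ne_zero.2 hne) (sub_ne_zero.2 hne)
    apply hP
    have : innerWord (ι₀ (c f P)) = innerWord (ι₀ (c g P)) := by
      funext t
      have := congrFun hfg (e.symm (P, t))
      simpa [w] using this
    have := ι₀.injective (innerWord_injective this)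
    simp [this]
  refine ⟨Set.image w C, ?_, by rw [hinj.ncard_image]; rfl⟩
  rintro _ ⟨f, hf, rfl⟩ _ ⟨g, hg, rfl⟩ _ ⟨h, hh, rfl⟩ hfg hgh -
  have h1 : f - g ≠ 0 := fun h0 => hfg (by rw [sub_eq_zero.1 h0])
  have h2 : h - g ≠ 0 := fun h0 => hgh (by rw [sub_eq_zero.1 h0])
  obtain ⟨P, hP1, hP2⟩ := hC _ (C.sub_mem hf hg) _ (C.sub_mem hh hg) h1 h2
  rw [hdist, hdist, hdist, ← Finset.sum_add_distrib]
  refine Finset.sum_lt_sum (fun i _ => hammingDist_triangle _ _ _) ⟨P, Finset.mem_univ _, ?_⟩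
  refine innerWord_separating (fun h0 => hP1 ?_) (fun h0 => hP2 ?_)
  · have := ι₀.injective h0
    simp [this]
  · have := ι₀.injective h0
    simp [this]

lemma exists_separating_of_level {k K : Type} [Field k] [Field K] [Algebra k K] [CharP k 11]
    [Finite k] (hk : Nat.card k = 121) {M : ℕ} (L : Level k K M) :
    ∃ S : Set (Fin (300 * M) → ZMod 2), IsSeparating21 S ∧ 121 ^ (9 * M - 1) ≤ S.ncard := by
  obtain ⟨C, c, hdim, hC⟩ := L.exists_code
  obtain ⟨S, hS, hcard⟩ := exists_separating_of_intersecting (n := 300 * M)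
    (by rw [L.card_pt]; ring) (by omega) C c hC
  refine ⟨S, hS, ?_⟩
  have hM := L.M_pos
  have : FiniteDimensional k C := FiniteDimensional.of_finrank_pos (by omega)
  rw [hcard, Module.natCard_eq_pow_finrank (K := k), hk]
  exact Nat.pow_le_pow_right (by norm_num) (by omega)

/-- The counting behind the rate `(3/50) log₂ 11`: codes of length `300 M` with `121 ^ (9 M - 1)`
words suffice. -/
lemma rate_bound {ε : ℝ} {M : ℕ} (hM : 0 < M) (hε : 7 ≤ 300 * M * ε) :
    (2 : ℝ) ^ (((3 : ℝ) / 50 * Real.logb 2 11 - ε) * (300 * M : ℕ)) ≤ (121 : ℝ) ^ (9 * M - 1) := by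
  have h1 : (2 : ℝ) ^ (Real.logb 2 11 * (18 * M : ℕ)) = 121 ^ (9 * M) := by
    rw [Real.rpow_mul (by norm_num), Real.rpow_logb (by norm_num) (by norm_num) (by norm_num),
      Real.rpow_natCast, show 18 * M = 2 * (9 * M) by ring, pow_mul]
    norm_num
  have h2 : ((3 : ℝ) / 50 * Real.logb 2 11 - ε) * (300 * M : ℕ)
      = Real.logb 2 11 * (18 * M : ℕ) - 300 * M * ε := by
    push_cast
    ring
  rw [h2, Real.rpow_sub (by norm_num), h1, div_le_iff₀ (by positivity)]
  have h3 : (121 : ℝ) ≤ 2 ^ (300 * M * ε) := by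
    calc (121 : ℝ) ≤ 2 ^ (7 : ℝ) := by norm_num
      _ ≤ _ := Real.rpow_le_rpow_of_exponent_le (by norm_num) hε
  obtain ⟨j, hj⟩ : ∃ j, 9 * M = j + 1 := ⟨9 * M - 1, by omega⟩
  rw [hj, pow_succ, Nat.add_sub_cancel]
  gcongr

/-! ### The rational function field -/

namespace RationalLevel

open Polynomial PoleFiltration

variable {k : Type} [Field k]

/-- The embedding of `k[X]` into `k(X)`. -/
noncomputable abbrev emb : k[X] →ₐ[k] RatFunc k := IsScalarTower.toAlgHom k k[X] (RatFunc k)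

lemma emb_injective : Function.Injective (emb (k := k)) := IsFractionRing.injective k[X] (RatFunc k)

lemma emb_ne_zero {p : k[X]} (hp : p ≠ 0) : emb p ≠ 0 := by
  rw [Ne, map_eq_zero_iff _ emb_injective]
  exact hp

lemma exists_eq_div (f : RatFunc k) : ∃ p q : k[X], q ≠ 0 ∧ f = emb p / emb q :=
  ⟨f.num, f.denom, f.denom_ne_zero, (RatFunc.num_div_denom f).symm⟩

lemma intDegree_div_emb {p q : k[X]} (hp : p ≠ 0) (hq : q ≠ 0) :
    (emb p / emb q).intDegree = p.natDegree - q.natDegree := by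
  rw [RatFunc.intDegree_div (emb_ne_zero hp) (emb_ne_zero hq)]
  simp [emb, RatFunc.intDegree_polynomial]

/-- Functions whose pole order at infinity is at most `m`. -/
noncomputable def poleSpace (m : ℤ) : Submodule k (RatFunc k) where
  carrier := {f | f ≠ 0 → f.intDegree ≤ m}
  zero_mem' := fun h => absurd rfl h
  add_mem' := by
    intro f g hf hg hfg
    by_cases hg0 : g = 0
    · subst hg0
      simp only [add_zero] at hfg ⊢
      exact hf hfg
    by_cases hf0 : f = 0
    · subst hf0
      simp only [zero_add] at hfg ⊢
      exact hg hfg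
    exact (RatFunc.intDegree_add_le hg0 hfg).trans (max_le (hf hf0) (hg hg0))
  smul_mem' := by
    intro c f hf h
    rw [RatFunc.smul_eq_C_mul] at h ⊢
    obtain ⟨hc, hf0⟩ := mul_ne_zero_iff.1 h
    rw [RatFunc.intDegree_mul hc hf0, RatFunc.intDegree_C, zero_add]
    exact hf hf0

lemma mem_poleSpace {f : RatFunc k} {m : ℤ} : f ∈ poleSpace m ↔ (f ≠ 0 → f.intDegree ≤ m) :=
  Iff.rfl

lemma exact_iff {f : RatFunc k} {m : ℤ} : (f ∈ poleSpace m ∧ f ∉ poleSpace (m - 1)) ↔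
    f ≠ 0 ∧ f.intDegree = m := by
  simp only [mem_poleSpace]
  constructor
  · rintro ⟨h1, h2⟩
    push Not at h2
    have := h1 h2.1
    exact ⟨h2.1, by omega⟩
  · rintro ⟨h1, h2⟩
    exact ⟨fun _ => h2.le, fun h => by have := h h1; omega⟩

lemma emb_mem_poleSpace {p : k[X]} {n : ℕ} (hp : p.natDegree ≤ n) : emb p ∈ poleSpace (n : ℤ) := by
  intro _
  simp only [emb, IsScalarTower.coe_toAlgHom', RatFunc.intDegree_polynomial]
  exact_mod_cast hp

lemma div_mem_poleSpace {p q : k[X]} {n : ℕ} (hq : q ≠ 0) (hp : p.natDegree ≤ n) :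
    emb p / emb q ∈ poleSpace ((n : ℤ) - q.natDegree) := by
  intro h
  have hp0 : p ≠ 0 := by
    rintro rfl
    simp at h
  rw [intDegree_div_emb hp0 hq]
  omega

/-- Pole order at infinity on the rational function field. -/
noncomputable def ratPole (k : Type) [Field k] : PoleFiltration k (RatFunc k) where
  F := poleSpace
  mono m n hmn f hf h := (hf h).trans hmn
  exists_deg f hf := ⟨f.intDegree, exact_iff.2 ⟨hf, rfl⟩⟩
  deg_mul f g m n hf hg := by
    rw [exact_iff] at *
    exact ⟨mul_ne_zero hf.1 hg.1, by rw [RatFunc.intDegree_mul hf.1 hg.1, hf.2, hg.2]⟩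
  lead f g m hf hg := by
    rw [exact_iff] at hg
    obtain ⟨hg0, hgm⟩ := hg
    by_cases hf0 : f = 0
    · exact ⟨0, by simp [hf0]⟩
    obtain ⟨p, q, hq, hpq⟩ := exists_eq_div (f / g)
    have hp : p ≠ 0 := by
      rintro rfl
      rw [map_zero, zero_div, div_eq_zero_iff] at hpq
      tauto
    have hd : p.natDegree ≤ q.natDegree := by
      have h1 := intDegree_div_emb hp hq
      rw [← hpq, RatFunc.intDegree_div hf0 hg0] at h1
      have := hf hf0
      omega
    -- the leading coefficients of numerator and denominator of `f / g` determine the constant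
    let c : k := p.coeff q.natDegree / q.leadingCoeff
    have hc : (p - C c * q).coeff q.natDegree = 0 := by
      have : q.leadingCoeff ≠ 0 := leadingCoeff_ne_zero.2 hq
      have h1 : q.coeff q.natDegree = q.leadingCoeff := rfl
      simp only [coeff_sub, coeff_C_mul, h1, c]
      field_simp
      ring
    refine ⟨c, fun hne => ?_⟩
    have e : f - c • g = g * (emb (p - C c * q) / emb q) := by
      have h1 := emb_ne_zero hq
      have h2 : f = g * (emb p / emb q) := by rw [← hpq]; field_simp
      have h3 : emb (C c) = algebraMap k (RatFunc k) c := emb.commutes c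
      rw [map_sub, map_mul, h3, h2, Algebra.smul_def]
      field_simp
    rw [e] at hne ⊢
    obtain ⟨h1, h2⟩ := mul_ne_zero_iff.1 hne
    have h3 : p - C c * q ≠ 0 := by
      intro h
      simp [h] at h2
    rw [RatFunc.intDegree_mul h1 h2, hgm, intDegree_div_emb h3 hq]
    have h4 : (p - C c * q).natDegree ≤ q.natDegree :=
      (natDegree_sub_le _ _).trans (max_le hd (natDegree_C_mul_le _ _))
    have h5 : (p - C c * q).natDegree ≠ q.natDegree := by
      intro h
      rw [← h] at hc
      exact h3 (leadingCoeff_eq_zero.1 hc)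
    omega

/-- The polynomial `X⁵ - 16X`. -/
noncomputable def hPoly (k : Type) [Field k] : k[X] := X ^ 5 - 16 * X

/-- The homomorphism `f ↦ f + (X⁵ - 16X) f' ε` from `k(X)` to its dual numbers. -/
noncomputable def dualHom (k : Type) [Field k] :
    RatFunc k →ₐ[k] TrivSqZeroExt (RatFunc k) (RatFunc k) :=
  IsLocalization.liftAlgHom (M := nonZeroDivisors k[X])
    (f := aeval (TrivSqZeroExt.inl RatFunc.X + TrivSqZeroExt.inr (emb (hPoly k)))) (by
      intro q
      rw [TrivSqZeroExt.isUnit_iff_isUnit_fst]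
      have h1 : (TrivSqZeroExt.fstHom k (RatFunc k) (RatFunc k)).comp
          (aeval (TrivSqZeroExt.inl RatFunc.X + TrivSqZeroExt.inr (emb (hPoly k)))) = emb := by
        ext
        simp [RatFunc.algebraMap_X]
      have h2 := DFunLike.congr_fun h1 (q : k[X])
      change TrivSqZeroExt.fst (aeval _ (q : k[X])) = _ at h2
      rw [h2]
      exact (emb_ne_zero (nonZeroDivisors.ne_zero q.2)).isUnit)

lemma dualHom_emb (p : k[X]) : dualHom k (emb p)
    = aeval (TrivSqZeroExt.inl RatFunc.X + TrivSqZeroExt.inr (emb (hPoly k))) p :=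
  IsLocalization.lift_eq _ _

lemma dualHom_fst (f : RatFunc k) : (dualHom k f).fst = f := by
  have h1 : (TrivSqZeroExt.fstHom k (RatFunc k) (RatFunc k)).comp (dualHom k) = AlgHom.id k _ := by
    apply IsLocalization.algHom_ext (nonZeroDivisors k[X])
    ext
    have := dualHom_emb (k := k) X
    simp only [aeval_X] at this
    simp only [AlgHom.comp_apply]
    change (dualHom k (emb X)).fst = emb X
    rw [this]
    simp [RatFunc.algebraMap_X]
  exact DFunLike.congr_fun h1 f

/-- The derivation `(X⁵ - 16X) d/dX` of `k(X)`. -/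
noncomputable def ratDer (k : Type) [Field k] : Derivation k (RatFunc k) (RatFunc k) :=
  Derivation.mk' ((TrivSqZeroExt.sndHom (RatFunc k) (RatFunc k)).restrictScalars k ∘ₗ
    (dualHom k).toLinearMap) (by
      intro f g
      change (dualHom k (f * g)).snd = f • (dualHom k g).snd + g • (dualHom k f).snd
      rw [map_mul, TrivSqZeroExt.snd_mul, dualHom_fst, dualHom_fst]
      simp [mul_comm g])

lemma ratDer_X : ratDer k (emb X) = emb (hPoly k) := by
  change (dualHom k (emb X)).snd = _
  rw [dualHom_emb, aeval_X]
  rw [TrivSqZeroExt.snd_add, TrivSqZeroExt.snd_inl, TrivSqZeroExt.snd_inr, zero_add]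

lemma ratDer_emb (p : k[X]) : ratDer k (emb p) = emb (hPoly k * derivative p) := by
  induction p using Polynomial.induction_on with
  | C a =>
    rw [show emb (C a) = algebraMap k (RatFunc k) a from emb.commutes a, Derivation.map_algebraMap]
    simp
  | add p q hp hq => rw [map_add, map_add, hp, hq, derivative_add, mul_add, map_add]
  | monomial n a h =>
    rw [show (C a * X ^ (n + 1) : k[X]) = (C a * X ^ n) * X by ring, map_mul, Derivation.leibniz, h,
      ratDer_X, derivative_mul (g := X), derivative_X, smul_eq_mul, smul_eq_mul, ← map_mul, ← map_mul,
      ← map_add]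
    congr 1
    ring

/-- A polynomial `p` of degree `n` satisfies `(X⁵ - 16X) p' = n X⁴ p + (lower order)`. -/
lemma natDegree_theta_sub_le (p : k[X]) :
    (hPoly k * derivative p - C (p.natDegree : k) * (X ^ 4 * p)).natDegree ≤ p.natDegree + 3 := by
  rw [natDegree_le_iff_coeff_eq_zero]
  intro N hN
  obtain ⟨j, rfl⟩ : ∃ j, N = j + 4 := ⟨N - 4, by omega⟩
  have hj : p.natDegree ≤ j := by omega
  have e : hPoly k * derivative p = (X * derivative p) * X ^ 4 - C 16 * (derivative p * X) := by
    rw [hPoly, show (16 : k[X]) = C 16 from (map_ofNat C 16).symm]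
    ring
  have h1 : (derivative p).coeff (j + 3) = 0 := by
    rw [coeff_derivative, coeff_eq_zero_of_natDegree_lt (by omega), zero_mul]
  have h2 : (X * derivative p).coeff j = j * p.coeff j := by
    cases j with
    | zero => simp
    | succ j =>
      rw [coeff_X_mul, coeff_derivative]
      push_cast
      ring
  rw [e, mul_comm (X ^ 4) p, coeff_sub, coeff_sub, coeff_mul_X_pow, coeff_C_mul, coeff_C_mul,
    coeff_mul_X_pow, coeff_mul_X, h1, h2]
  rcases hj.eq_or_lt with h | h
  · rw [h]
    ring
  · rw [coeff_eq_zero_of_natDegree_lt h]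
    ring

lemma ratDer_lead (f : RatFunc k) (m : ℤ) (hf : (ratPole k).Deg f m) :
    ratDer k f - ((1 : k) * m) • (emb X ^ 4 * f) ∈ (ratPole k).F (m + 4 * (1 : ℕ) - 1) := by
  obtain ⟨hf0, hfm⟩ := exact_iff.1 hf
  obtain ⟨p, q, hq, rfl⟩ := exists_eq_div f
  have hp : p ≠ 0 := by
    rintro rfl
    simp at hf0
  rw [intDegree_div_emb hp hq] at hfm
  set P := hPoly k * derivative p - C (p.natDegree : k) * (X ^ 4 * p) with hP
  set Q := hPoly k * derivative q - C (q.natDegree : k) * (X ^ 4 * q) with hQ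
  have e : ratDer k (emb p / emb q) - ((1 : k) * m) • (emb X ^ 4 * (emb p / emb q))
      = emb (P * q - p * Q) / emb (q * q) := by
    have h1 : emb q ≠ 0 := emb_ne_zero hq
    have h2 : (m : RatFunc k) = p.natDegree - q.natDegree := by
      rw [← hfm]
      push_cast
      ring
    rw [Derivation.leibniz_div, ratDer_emb, ratDer_emb, one_mul, Algebra.smul_def (R := k),
      map_intCast, h2, hP, hQ]
    simp only [map_sub, map_mul, map_pow, smul_eq_mul, map_natCast]
    field_simp
    ring
  rw [e]
  have hd : (P * q - p * Q).natDegree ≤ p.natDegree + q.natDegree + 3 := by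
    have h1 := natDegree_theta_sub_le p
    have h2 := natDegree_theta_sub_le q
    rw [← hP] at h1
    rw [← hQ] at h2
    refine (natDegree_sub_le _ _).trans (max_le ?_ ?_)
    · exact natDegree_mul_le.trans (by omega)
    · exact natDegree_mul_le.trans (by omega)
  refine (ratPole k).mono ?_ (div_mem_poleSpace (mul_ne_zero hq hq) hd)
  rw [natDegree_mul hq hq]
  push_cast
  omega

end RationalLevel

/-! ### The bottom level -/

namespace RationalLevel

open Polynomial PoleFiltration

variable {k : Type} [Field k]

/-- The affine ring `k[X]` inside `k(X)`. -/
noncomputable def affine (k : Type) [Field k] : Subalgebra k (RatFunc k) := (emb (k := k)).range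

lemma emb_mem (p : k[X]) : emb p ∈ affine k := ⟨p, rfl⟩

lemma affine_dedekind : IsDedekindDomain (affine k) := by
  have : IsPrincipalIdealRing (affine k) :=
    IsPrincipalIdealRing.of_surjective (emb (k := k)).rangeRestrict.toRingHom
      (emb (k := k)).rangeRestrict_surjective
  infer_instance

lemma affine_frac : IsFractionRing (affine k) (RatFunc k) := by
  refine IsFractionRing.of_field _ _ fun f => ?_
  obtain ⟨p, q, -, rfl⟩ := exists_eq_div f
  exact ⟨⟨emb p, emb_mem p⟩, ⟨emb q, emb_mem q⟩, rfl⟩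

/-- The coordinate function. -/
noncomputable def xAff (k : Type) [Field k] : affine k := ⟨emb X, emb_mem X⟩

lemma hAff_coe : ((xAff k ^ 5 - 16 * xAff k : affine k) : RatFunc k) = emb (hPoly k) := by
  rw [hPoly, map_sub, map_pow, map_mul, map_ofNat]
  rfl

lemma hPoly_ne_zero : hPoly k ≠ 0 := by
  intro h
  have := congrArg (coeff · 5) h
  rw [hPoly, show (16 : k[X]) = C 16 from (map_ofNat C 16).symm] at this
  simp at this

lemma hPoly_natDegree_le : (hPoly k).natDegree ≤ 5 := by
  rw [hPoly, show (16 : k[X]) = C 16 from (map_ofNat C 16).symm]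
  compute_degree

lemma mem_away {f : RatFunc k} : f ∈ awayRing (affine k) (xAff k ^ 5 - 16 * xAff k) ↔
    ∃ (j : ℕ) (p : k[X]), f = emb p / emb (hPoly k ^ j) := by
  rw [mem_awayRing, hAff_coe]
  have h0 := emb_ne_zero (hPoly_ne_zero (k := k))
  constructor
  · rintro ⟨j, p, hp⟩
    refine ⟨j, p, ?_⟩
    rw [map_pow, eq_div_iff (pow_ne_zero _ h0), mul_comm]
    exact hp.symm
  · rintro ⟨j, p, rfl⟩
    refine ⟨j, p, ?_⟩
    rw [map_pow]
    change emb p = _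
    field_simp

lemma emb_mem_away (p : k[X]) : emb p ∈ awayRing (affine k) (xAff k ^ 5 - 16 * xAff k) :=
  le_awayRing (emb_mem p)

lemma mem_rad (p : k[X]) : emb (hPoly k * p) ∈ radSpace (affine k) (xAff k ^ 5 - 16 * xAff k) := by
  rw [mem_radSpace_iff]
  refine ⟨emb_mem _, 1, emb p, emb_mem p, ?_⟩
  rw [hAff_coe, pow_one, map_mul]

lemma affine_neg : (ratPole k).part (affine k).toSubmodule (-1) = ⊥ := by
  rw [eq_bot_iff]
  rintro _ ⟨⟨p, rfl⟩, h2⟩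
  by_contra h
  have h3 := h2 h
  change (algebraMap k[X] (RatFunc k) p).intDegree ≤ -1 at h3
  rw [RatFunc.intDegree_polynomial] at h3
  omega

/-- Multiples of a fixed polynomial of degree at most `d` provide `m + 1 - d` dimensions. -/
lemma dim_ge {S : Submodule k (RatFunc k)} (hS : S ≤ (affine k).toSubmodule) (g : k[X]) (hg : g ≠ 0)
    (d : ℕ) (hd : g.natDegree ≤ d) (hgS : ∀ p, emb (g * p) ∈ S) (m : ℤ) :
    m + 1 - d ≤ (ratPole k).dim S m := by
  have hbdd : (ratPole k).BddBelowSub S := BddBelowSub.mono ⟨-1, affine_neg⟩ hS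
  have : FiniteDimensional k ((ratPole k).part S m) := finite_part hbdd m
  by_cases hm : m + 1 - d ≤ 0
  · exact hm.trans (dim_nonneg _ _)
  obtain ⟨n, hn⟩ : ∃ n : ℕ, (n : ℤ) = m + 1 - d := ⟨(m + 1 - d).toNat, by omega⟩
  let φ : degreeLT k n →ₗ[k] (ratPole k).part S m :=
    LinearMap.codRestrict _ (emb.toLinearMap ∘ₗ LinearMap.mulLeft k g ∘ₗ (degreeLT k n).subtype) (by
      rintro ⟨p, hp⟩
      refine ⟨hgS p, ?_⟩
      by_cases hp0 : p = 0
      · simp [hp0]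
      rw [mem_degreeLT, ← natDegree_lt_iff_degree_lt hp0] at hp
      have h1 : (g * p).natDegree ≤ d + (n - 1) := natDegree_mul_le.trans (by omega)
      exact (ratPole k).mono (by push_cast; omega) (emb_mem_poleSpace h1))
  have hφ : Function.Injective φ := by
    intro p q hpq
    have h1 : emb (g * (p : k[X])) = emb (g * (q : k[X])) := congrArg Subtype.val hpq
    exact Subtype.ext (mul_left_cancel₀ hg (emb_injective h1))
  have h2 := LinearMap.finrank_le_finrank_of_injective hφ
  rw [(degreeLTEquiv k n).finrank_eq, Module.finrank_fin_fun] at h2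
  rw [← hn, dim]
  exact_mod_cast h2

/-- The abscissae of the evaluation places. -/
abbrev Root (k : Type) [Field k] : Type := {c : k // splitPoly c = 0}

/-- `splitPoly` as a polynomial. -/
noncomputable def sPoly (k : Type) [Field k] : k[X] := splitPoly X

lemma eval_sPoly (c : k) : (sPoly k).eval c = splitPoly c := by
  have := map_splitPoly (evalRingHom c) (X : k[X])
  simpa [sPoly] using this

lemma sPoly_monic : (sPoly k).Monic ∧ (sPoly k).natDegree = 20 := by
  have h : sPoly k = X ^ 20 + C 4 * X ^ 16 + C 3 * X ^ 12 + C 4 * X ^ 8 + C 5 * X ^ 4 + C 1 := by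
    simp only [sPoly, splitPoly, map_ofNat, map_one]
  have h2 : (sPoly k).natDegree = 20 := by
    rw [h]
    compute_degree!
  refine ⟨?_, h2⟩
  rw [Monic, leadingCoeff, h2, h]
  simp [coeff_X_pow, coeff_one]

lemma eval_hPoly_ne (h11 : (11 : k) = 0) {c : k} (hc : splitPoly c = 0) : (hPoly k).eval c ≠ 0 := by
  intro h
  obtain ⟨q, hq⟩ := splitPoly_sq h11 c
  simp [hPoly] at h
  rw [h, hc] at hq
  simp at hq

lemma card_root_and_roots [Finite k] (hk : Nat.card k = 121) (h11 : (11 : k) = 0)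
    [Fintype (Root k)] : Fintype.card (Root k) = 20 ∧ (sPoly k).roots.card = 20 ∧
    (sPoly k).roots.Nodup := by
  classical
  have : Fintype k := Fintype.ofFinite k
  have hk' : Fintype.card k = 121 := by rw [← Nat.card_eq_fintype_card, hk]
  obtain ⟨hmon, hdeg⟩ := sPoly_monic (k := k)
  have hle : (sPoly k).roots.card ≤ 20 := hdeg ▸ card_roots' _
  have hT : Fintype.card (Root k) = (sPoly k).roots.toFinset.card := by
    apply Fintype.card_of_subtype
    intro c
    rw [Multiset.mem_toFinset, mem_roots hmon.ne_zero, IsRoot, eval_sPoly]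
  have hT2 : (sPoly k).roots.toFinset.card ≤ (sPoly k).roots.card := Multiset.toFinset_card_le _
  let cof : k[X] := quintCof (X ^ 4)
  have hcofe : ∀ c, cof.eval c = quintCof (c ^ 4) := by
    intro c
    simp [cof, quintCof]
  have hcof0 : cof ≠ 0 := by
    intro h
    have h1 := hcofe 0
    rw [h] at h1
    have h2 : (10 : k) = 0 := by simpa [quintCof] using h1.symm
    exact one_ne_zero (show (1 : k) = 0 by linear_combination h11 - h2)
  have hcofd : cof.natDegree ≤ 100 := by
    have h : cof = quintCof (X ^ 4) := rfl
    rw [h, quintCof]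
    simp only [← pow_mul]
    compute_degree
  have hcard : cof.roots.toFinset.card ≤ 100 :=
    (Multiset.toFinset_card_le _).trans ((card_roots' _).trans hcofd)
  -- every nonzero element of `k` is a root of `X ^ 120 - 1`, hence of `sPoly` or of its cofactor
  have hcover : (Finset.univ.erase (0 : k)) ⊆ (sPoly k).roots.toFinset ∪ cof.roots.toFinset := by
    intro c hc
    have hc0 : c ≠ 0 := (Finset.mem_erase.1 hc).1
    have h1 : c ^ 120 = 1 := by
      have := FiniteField.pow_card_sub_one_eq_one c hc0
      rwa [hk'] at this
    have h2 : splitPoly c * quintCof (c ^ 4) = 0 := by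
      rw [splitPoly_eq, quint_mul_cof h11, ← pow_mul, h1, sub_self]
    rw [Finset.mem_union, Multiset.mem_toFinset, Multiset.mem_toFinset, mem_roots hmon.ne_zero,
      mem_roots hcof0, IsRoot, IsRoot, eval_sPoly, hcofe]
    exact mul_eq_zero.1 h2
  have h120 := (Finset.card_le_card hcover).trans (Finset.card_union_le _ _)
  rw [Finset.card_erase_of_mem (Finset.mem_univ _), Finset.card_univ, hk'] at h120
  refine ⟨by omega, by omega, ?_⟩
  rw [← Multiset.toFinset_card_eq_card_iff_nodup]
  omega

lemma sPoly_dvd [Finite k] (hk : Nat.card k = 121) (h11 : (11 : k) = 0) {p : k[X]}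
    (hp : ∀ c : k, splitPoly c = 0 → p.eval c = 0) : sPoly k ∣ p := by
  classical
  have : Fintype (Root k) := Fintype.ofFinite _
  by_cases hp0 : p = 0
  · simp [hp0]
  obtain ⟨-, h1, h2⟩ := card_root_and_roots hk h11
  obtain ⟨hmon, hdeg⟩ := sPoly_monic (k := k)
  rw [← prod_multiset_X_sub_C_of_monic_of_roots_card_eq hmon (by rw [h1, hdeg]),
    Multiset.prod_X_sub_C_dvd_iff_le_roots hp0, Multiset.le_iff_subset h2]
  intro c hc
  rw [mem_roots hmon.ne_zero, IsRoot, eval_sPoly] at hc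
  rw [mem_roots hp0]
  exact hp c hc

lemma eval_denom_ne (h11 : (11 : k) = 0) {c : k} (hc : splitPoly c = 0) {f : RatFunc k}
    (hf : f ∈ awayRing (affine k) (xAff k ^ 5 - 16 * xAff k)) :
    eval₂ (RingHom.id k) c f.denom ≠ 0 := by
  obtain ⟨j, p, hp⟩ := mem_away.1 hf
  have h1 : f.denom ∣ hPoly k ^ j :=
    (RatFunc.denom_dvd (pow_ne_zero _ hPoly_ne_zero)).2 ⟨p, hp⟩
  intro h
  have h2 := eval_dvd (x := c) h1
  rw [eval_pow] at h2
  change eval c f.denom = 0 at h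
  rw [h, zero_dvd_iff] at h2
  exact eval_hPoly_ne h11 hc (eq_zero_of_pow_eq_zero h2)

lemma eval_emb (c : k) (p : k[X]) : RatFunc.eval (RingHom.id k) c (emb p) = p.eval c := by
  simp [emb, RatFunc.eval_algebraMap]

lemma emb_splitPoly : splitPoly (emb X : RatFunc k) = emb (sPoly k) :=
  (map_splitPoly (emb (k := k)).toRingHom X).symm

/-- The bottom of the tower: the rational function field. -/
noncomputable def ratLevel [Finite k] (hk : Nat.card k = 121) (h11 : (11 : k) = 0) :
    Level k (RatFunc k) 1 where
  Φ := ratPole k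
  O := affine k
  ded := affine_dedekind
  frac := affine_frac
  x := xAff k
  z := emb X
  θ := ratDer k
  lam := 1
  Pt := Root k
  fin := Fintype.ofFinite _
  ev c f := RatFunc.eval (RingHom.id k) c.1 f
  M_pos := one_pos
  deg_x := exact_iff.2 ⟨emb_ne_zero X_ne_zero, by simp [xAff, RatFunc.algebraMap_X]⟩
  deg_z := exact_iff.2 ⟨emb_ne_zero X_ne_zero, by simp [RatFunc.algebraMap_X]⟩
  O_neg := affine_neg
  lam_ne := one_ne_zero
  theta_lead := ratDer_lead
  theta_x := by
    change ratDer k (emb X) = _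
    rw [ratDer_X, ← hAff_coe]
    rfl
  theta_O := by
    rintro _ ⟨p, rfl⟩
    change ratDer k (emb p) ∈ _
    rw [ratDer_emb]
    exact emb_mem _
  theta_R := by
    intro f hf
    obtain ⟨p, rfl⟩ := radSpace_le hf
    change ratDer k (emb p) ∈ _
    rw [ratDer_emb]
    exact mem_rad _
  z_mem := emb_mem_away X
  z_inv_mem := by
    refine mem_away.2 ⟨1, X ^ 4 - 16, ?_⟩
    have h1 : emb (hPoly k) = emb X * emb (X ^ 4 - 16) := by
      rw [← map_mul, hPoly]
      congr 1
      ring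
    have h2 := emb_ne_zero (hPoly_ne_zero (k := k))
    rw [h1] at h2
    obtain ⟨h3, h4⟩ := mul_ne_zero_iff.1 h2
    rw [pow_one, h1]
    field_simp
  z_four_mem := by
    refine mem_away.2 ⟨1, X, ?_⟩
    have h1 : emb (hPoly k) = emb X * (emb X ^ 4 - 16) := by
      rw [← map_ofNat (emb (k := k)) 16, ← map_pow, ← map_sub, ← map_mul, hPoly]
      congr 1
      ring
    have h2 := emb_ne_zero (hPoly_ne_zero (k := k))
    rw [h1] at h2
    obtain ⟨h3, h4⟩ := mul_ne_zero_iff.1 h2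
    rw [pow_one, h1]
    field_simp
  card_pt := (@card_root_and_roots k _ _ hk h11 (Fintype.ofFinite _)).1
  ev_algebraMap c a := by
    change RatFunc.eval _ _ (RatFunc.C a) = a
    simp
  ev_add c f hf g hg := RatFunc.eval_add _ _ (eval_denom_ne h11 c.2 hf) (eval_denom_ne h11 c.2 hg)
  ev_mul c f hf g hg := RatFunc.eval_mul _ _ (eval_denom_ne h11 c.2 hf) (eval_denom_ne h11 c.2 hg)
  ev_x c := by
    change splitPoly (RatFunc.eval _ _ (emb X)) = 0
    rw [eval_emb, eval_X, c.2]
  ev_z c := by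
    rw [eval_emb, eval_X, c.2]
  ev_vanish f hf h := by
    obtain ⟨j, p, rfl⟩ := mem_away.1 hf
    have hj := emb_ne_zero (pow_ne_zero j (hPoly_ne_zero (k := k)))
    obtain ⟨q, rfl⟩ := sPoly_dvd hk h11 (p := p) (by
      intro c hc
      have h1 := RatFunc.eval_mul (RingHom.id k) c (eval_denom_ne h11 hc hf)
        (eval_denom_ne h11 hc (emb_mem_away (hPoly k ^ j)))
      rw [div_mul_cancel₀ _ hj, h ⟨c, hc⟩, zero_mul, eval_emb] at h1
      exact h1)
    refine ⟨emb q / emb (hPoly k ^ j), mem_away.2 ⟨j, q, rfl⟩, ?_⟩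
    change _ = splitPoly (emb X) * _
    rw [emb_splitPoly, map_mul, mul_div_assoc]
  genus m := by
    have h1 := dim_ge (k := k) le_rfl 1 one_ne_zero 0 (by simp) (fun p => emb_mem _) m
    have h2 := dim_ge (k := k) radSpace_le (hPoly k) hPoly_ne_zero 5 hPoly_natDegree_le mem_rad m
    push_cast at *
    omega

end RationalLevel

/-! ### Pole orders in a ramified quadratic extension -/

namespace PoleFiltration

open QuadraticAlgebra

variable {k K : Type} [Field k] [Field K] [Algebra k K] {Φ : PoleFiltration k K} {a : K}

/-- A function of odd pole order is not a square. -/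
lemma Deg.not_square (ha : Φ.Deg a 1) (r : K) : r ^ 2 ≠ a + 0 * r := by
  intro h
  rw [zero_mul, add_zero] at h
  have hr : r ≠ 0 := by
    rintro rfl
    exact ha.ne_zero (by rw [← h]; ring)
  obtain ⟨m, hm⟩ := Φ.exists_deg r hr
  have h1 := Deg.pow hm 2
  rw [h] at h1
  have := ha.unique h1
  push_cast at this
  omega

variable (Φ a) in
/-- Pole order at most `m` at the totally ramified place of `K(√a)`: as `√a` has a pole of order
one and functions of `K` have poles of even order, the two components never cancel. -/
def quadSpace (m : ℤ) : Submodule k (QuadraticAlgebra K a 0) where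
  carrier := {w | w.re ∈ Φ.F (m / 2) ∧ w.im ∈ Φ.F ((m - 1) / 2)}
  zero_mem' := ⟨zero_mem _, zero_mem _⟩
  add_mem' h1 h2 := ⟨add_mem h1.1 h2.1, add_mem h1.2 h2.2⟩
  smul_mem' c _ h := ⟨Submodule.smul_mem _ c h.1, Submodule.smul_mem _ c h.2⟩

lemma mem_quadSpace {w : QuadraticAlgebra K a 0} {m : ℤ} :
    w ∈ quadSpace Φ a m ↔ w.re ∈ Φ.F (m / 2) ∧ w.im ∈ Φ.F ((m - 1) / 2) := Iff.rfl

lemma mem_quadSpace_even {w : QuadraticAlgebra K a 0} {i : ℤ} :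
    w ∈ quadSpace Φ a (2 * i) ↔ w.re ∈ Φ.F i ∧ w.im ∈ Φ.F (i - 1) := by
  rw [mem_quadSpace, show 2 * i / 2 = i by omega, show (2 * i - 1) / 2 = i - 1 by omega]

lemma mem_quadSpace_odd {w : QuadraticAlgebra K a 0} {i : ℤ} :
    w ∈ quadSpace Φ a (2 * i + 1) ↔ w.re ∈ Φ.F i ∧ w.im ∈ Φ.F i := by
  rw [mem_quadSpace, show (2 * i + 1) / 2 = i by omega, show (2 * i + 1 - 1) / 2 = i by omega]

lemma quad_exact_even {w : QuadraticAlgebra K a 0} {i : ℤ} :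
    (w ∈ quadSpace Φ a (2 * i) ∧ w ∉ quadSpace Φ a (2 * i - 1)) ↔
      Φ.Deg w.re i ∧ w.im ∈ Φ.F (i - 1) := by
  rw [show 2 * i - 1 = 2 * (i - 1) + 1 by ring, mem_quadSpace_even, mem_quadSpace_odd, Deg]
  tauto

lemma quad_exact_odd {w : QuadraticAlgebra K a 0} {i : ℤ} :
    (w ∈ quadSpace Φ a (2 * i + 1) ∧ w ∉ quadSpace Φ a (2 * i + 1 - 1)) ↔
      Φ.Deg w.im i ∧ w.re ∈ Φ.F i := by
  rw [show 2 * i + 1 - 1 = 2 * i by ring, mem_quadSpace_even, mem_quadSpace_odd, Deg]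
  tauto

variable (ha : Φ.Deg a 1) [Fact (∀ r : K, r ^ 2 ≠ a + 0 * r)]

/-- The pole filtration of `K(√a)` when `a` has a simple pole. -/
def quadPole : PoleFiltration k (QuadraticAlgebra K a 0) where
  F := quadSpace Φ a
  mono m n hmn w hw := ⟨Φ.mono (by omega) hw.1, Φ.mono (by omega) hw.2⟩
  exists_deg w hw := by
    by_cases h1 : w.re = 0
    · have h2 : w.im ≠ 0 := fun h => hw (QuadraticAlgebra.ext h1 h)
      obtain ⟨j, hj⟩ := Φ.exists_deg _ h2
      exact ⟨2 * j + 1, quad_exact_odd.2 ⟨hj, by rw [h1]; exact zero_mem _⟩⟩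
    obtain ⟨i, hi⟩ := Φ.exists_deg _ h1
    by_cases h2 : w.im = 0
    · exact ⟨2 * i, quad_exact_even.2 ⟨hi, by rw [h2]; exact zero_mem _⟩⟩
    obtain ⟨j, hj⟩ := Φ.exists_deg _ h2
    rcases le_or_gt i j with hij | hij
    · exact ⟨2 * j + 1, quad_exact_odd.2 ⟨hj, Φ.mono hij hi.1⟩⟩
    · exact ⟨2 * i, quad_exact_even.2 ⟨hi, Φ.mono (by omega) hj.1⟩⟩
  deg_mul f g m n hf hg := by
    rcases Int.even_or_odd' m with ⟨i, rfl | rfl⟩ <;> rcases Int.even_or_odd' n with ⟨j, rfl | rfl⟩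
    · rw [quad_exact_even] at hf hg
      rw [← mul_add, quad_exact_even]
      simp only [re_mul, im_mul, zero_mul, add_zero]
      refine ⟨(hf.1.mul hg.1).add ?_, add_mem ?_ ?_⟩
      · exact Φ.mono (by omega) (mul_mem (mul_mem ha.1 hf.2) hg.2)
      · exact Φ.mono (by omega) (mul_mem hf.1.1 hg.2)
      · exact Φ.mono (by omega) (mul_mem hf.2 hg.1.1)
    · rw [quad_exact_even] at hf
      rw [quad_exact_odd] at hg
      rw [← add_assoc, ← mul_add, quad_exact_odd]
      simp only [re_mul, im_mul, zero_mul, add_zero]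
      refine ⟨(hf.1.mul hg.1).add ?_, add_mem ?_ ?_⟩
      · exact Φ.mono (by omega) (mul_mem hf.2 hg.2)
      · exact Φ.mono (by omega) (mul_mem hf.1.1 hg.2)
      · exact Φ.mono (by omega) (mul_mem (mul_mem ha.1 hf.2) hg.1.1)
    · rw [quad_exact_odd] at hf
      rw [quad_exact_even] at hg
      rw [show 2 * i + 1 + 2 * j = 2 * (i + j) + 1 by ring, quad_exact_odd]
      simp only [re_mul, im_mul, zero_mul, add_zero]
      rw [add_comm (f.re * g.im)]
      refine ⟨(hf.1.mul hg.1).add ?_, add_mem ?_ ?_⟩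
      · exact Φ.mono (by omega) (mul_mem hf.2 hg.2)
      · exact Φ.mono (by omega) (mul_mem hf.2 hg.1.1)
      · exact Φ.mono (by omega) (mul_mem (mul_mem ha.1 hf.1.1) hg.2)
    · rw [quad_exact_odd] at hf hg
      rw [show 2 * i + 1 + (2 * j + 1) = 2 * (1 + i + j) by ring, quad_exact_even]
      simp only [re_mul, im_mul, zero_mul, add_zero]
      rw [add_comm (f.re * g.re)]
      refine ⟨((ha.mul hf.1).mul hg.1).add ?_, add_mem ?_ ?_⟩
      · exact Φ.mono (by omega) (mul_mem hf.2 hg.2)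
      · exact Φ.mono (by omega) (mul_mem hf.2 hg.1.1)
      · exact Φ.mono (by omega) (mul_mem hf.1.1 hg.2)
  lead f g m hf hg := by
    rcases Int.even_or_odd' m with ⟨i, rfl | rfl⟩
    · rw [mem_quadSpace_even] at hf
      rw [quad_exact_even] at hg
      obtain ⟨c, hc⟩ := Φ.lead _ _ _ hf.1 hg.1
      refine ⟨c, ?_⟩
      rw [show 2 * i - 1 = 2 * (i - 1) + 1 by ring, mem_quadSpace_odd]
      exact ⟨hc, sub_mem hf.2 (Submodule.smul_mem _ c hg.2)⟩
    · rw [mem_quadSpace_odd] at hf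
      rw [quad_exact_odd] at hg
      obtain ⟨c, hc⟩ := Φ.lead _ _ _ hf.2 hg.1
      refine ⟨c, ?_⟩
      rw [show 2 * i + 1 - 1 = 2 * i by ring, mem_quadSpace_even]
      exact ⟨sub_mem hf.1 (Submodule.smul_mem _ c hg.2), hc⟩

/-- Dimensions of a space `S ⊕ T √a` split. -/
lemma dim_quadPole {S T : Submodule k K} (hS : Φ.BddBelowSub S) (hT : Φ.BddBelowSub T)
    {W : Submodule k (QuadraticAlgebra K a 0)} (hW : ∀ w, w ∈ W ↔ w.re ∈ S ∧ w.im ∈ T) (m : ℤ) :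
    (quadPole ha).dim W m = Φ.dim S (m / 2) + Φ.dim T ((m - 1) / 2) := by
  let e : (quadPole ha).part W m ≃ₗ[k] (Φ.part S (m / 2)) × (Φ.part T ((m - 1) / 2)) :=
    { toFun := fun w => (⟨w.1.re, ((hW _).1 w.2.1).1, w.2.2.1⟩, ⟨w.1.im, ((hW _).1 w.2.1).2, w.2.2.2⟩)
      invFun := fun p => ⟨⟨p.1.1, p.2.1⟩, (hW _).2 ⟨p.1.2.1, p.2.2.1⟩, ⟨p.1.2.2, p.2.2.2⟩⟩
      map_add' := fun _ _ => rfl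
      map_smul' := fun _ _ => rfl
      left_inv := fun _ => rfl
      right_inv := fun _ => rfl }
  have := finite_part hS (m / 2)
  have := finite_part hT ((m - 1) / 2)
  rw [dim, e.finrank_eq, Module.finrank_prod, dim, dim]
  push_cast
  rfl

end PoleFiltration

/-! ### The affine ring of the next level -/

section Rings

variable {k K : Type} [Field k] [Field K] [Algebra k K] {O : Subalgebra k K} {h : O}

lemma radSpace_mul {f g : K} (hf : f ∈ O) (hg : g ∈ radSpace O h) : f * g ∈ radSpace O h := by
  have h1 := radSpace_le hg
  have := (Ideal.span {h}).radical.mul_mem_left ⟨f, hf⟩ (mem_radSpace (f := ⟨g, h1⟩).1 hg)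
  exact mem_radSpace.2 this

lemma radSpace_of_pow {f : K} (hf : f ∈ O) {n : ℕ} (hn : f ^ n ∈ radSpace O h) :
    f ∈ radSpace O h := by
  obtain ⟨-, m, g, hg, e⟩ := mem_radSpace_iff.1 hn
  exact mem_radSpace_iff.2 ⟨hf, n * m, g, hg, by rw [pow_mul, e]⟩

lemma h_mem_radSpace : (h : K) ∈ radSpace O h :=
  mem_radSpace.2 (Ideal.le_radical (Ideal.mem_span_singleton_self h))

end Rings

/-- A monic quadratic polynomial with nonzero discriminant is separable. -/
lemma separable_quadratic {F : Type} [Field F] {b c : F} (hd : 4 * (b ^ 2 - c) ≠ 0) :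
    (Polynomial.X ^ 2 - Polynomial.C (2 * b) * Polynomial.X + Polynomial.C c).Separable := by
  open Polynomial in
  have hder : derivative (X ^ 2 - C (2 * b) * X + C c) = 2 * X - 2 * C b := by
    rw [derivative_add, derivative_sub, derivative_X_pow, derivative_C_mul, derivative_X,
      derivative_C, map_mul, map_ofNat]
    norm_num
    rfl
  generalize hδ : (4 * (b ^ 2 - c))⁻¹ = δ
  have h5 : δ * (4 * (b ^ 2 - c)) = 1 := by rw [← hδ, inv_mul_cancel₀ hd]
  have h6 : (Polynomial.C δ) * (4 * (Polynomial.C b ^ 2 - Polynomial.C c)) = 1 := by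
    rw [← Polynomial.C_1, ← h5]
    simp only [map_mul, map_sub, map_pow, map_ofNat]
  -- the discriminant is a combination of the polynomial and its derivative
  refine ⟨Polynomial.C δ * (-4), Polynomial.C δ * (2 * Polynomial.X - 2 * Polynomial.C b), ?_⟩
  rw [hder, ← h6]
  simp only [map_mul, map_ofNat]
  ring

namespace Level

open PoleFiltration QuadraticAlgebra

variable {k K : Type} [Field k] [Field K] [Algebra k K] {M : ℕ} (L : Level k K M)

lemma mem_O_of_isIntegral {f : K} (hf : IsIntegral L.O f) : f ∈ L.O := by
  have := L.ded
  have := L.frac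
  obtain ⟨g, rfl⟩ := IsIntegrallyClosed.isIntegral_iff.1 hf
  exact g.2

lemma mem_O_of_pow {f : K} {n : ℕ} (hn : 0 < n) (hf : f ^ n ∈ L.O) : f ∈ L.O :=
  L.mem_O_of_isIntegral (IsIntegral.of_pow hn (isIntegral_algebraMap (x := (⟨_, hf⟩ : L.O))))

/-- `O[1/h]`. -/
abbrev A : Subalgebra k K := awayRing L.O (L.x ^ 5 - 16 * L.x)

/-- The radical of `hO`. -/
abbrev R : Submodule k K := radSpace L.O (L.x ^ 5 - 16 * L.x)

lemma h_ne : (L.h : K) ≠ 0 := by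
  have h2 : L.Φ.Deg ((L.x : K) ^ 5 + (-16 * L.x)) (5 * M) := by
    refine (L.deg_x.pow 5).add (L.Φ.mono ?_ (mul_mem (m := 0) ?_ L.deg_x.1))
    · have := L.M_pos
      push_cast
      omega
    · have := algebraMap_mem (Φ := L.Φ) (-16 : k)
      rwa [map_neg, map_ofNat] at this
  rw [h_coe, show (L.x : K) ^ 5 - 16 * L.x = (L.x : K) ^ 5 + (-16 * L.x) by ring]
  exact h2.ne_zero

/-- The next radicand `z + 4/z`. -/
noncomputable def a : K := L.z + 4 * L.z⁻¹

lemma ofNat_mem_F (n : ℕ) [n.AtLeastTwo] : (OfNat.ofNat n : K) ∈ L.Φ.F 0 := by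
  have := algebraMap_mem (Φ := L.Φ) (OfNat.ofNat n : k)
  rwa [map_ofNat] at this

lemma deg_a : L.Φ.Deg L.a 1 :=
  L.deg_z.add (L.Φ.mono (by omega) (mul_mem (L.ofNat_mem_F 4) L.deg_z.inv.1))

instance fact_a : Fact (∀ r : K, r ^ 2 ≠ L.a + 0 * r) := ⟨L.deg_a.not_square⟩

lemma a_ne : L.a ≠ 0 := L.deg_a.ne_zero

lemma z_ne : L.z ≠ 0 := L.deg_z.ne_zero

lemma z_four_ne : L.z ^ 4 - 16 ≠ 0 := by
  have h1 : L.Φ.Deg (L.z ^ 4 + -16) ((4 : ℕ) * 1) := by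
    refine (L.deg_z.pow 4).add (L.Φ.mono ?_ (neg_mem (L.ofNat_mem_F 16)))
    norm_num
  rw [sub_eq_add_neg]
  exact h1.ne_zero

lemma ofNat_mem_A (n : ℕ) [n.AtLeastTwo] : (OfNat.ofNat n : K) ∈ L.A := by
  have := L.A.algebraMap_mem (OfNat.ofNat n : k)
  rwa [map_ofNat] at this

lemma a_mem : L.a ∈ L.A := add_mem L.z_mem (mul_mem (L.ofNat_mem_A 4) L.z_inv_mem)

lemma z_two_ne : L.z ^ 2 - 4 ≠ 0 ∧ L.z ^ 2 + 4 ≠ 0 := by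
  have h := L.z_four_ne
  rw [show L.z ^ 4 - 16 = (L.z ^ 2 - 4) * (L.z ^ 2 + 4) by ring] at h
  exact mul_ne_zero_iff.1 h

lemma a_eq : L.a = (L.z ^ 2 + 4) / L.z := by
  have := L.z_ne
  rw [a]
  field_simp

lemma a_inv_eq : L.a⁻¹ = L.z * (L.z ^ 2 - 4) * (L.z ^ 4 - 16)⁻¹ := by
  obtain ⟨h1, h2⟩ := L.z_two_ne
  have h3 := L.z_ne
  rw [a_eq, show L.z ^ 4 - 16 = (L.z ^ 2 - 4) * (L.z ^ 2 + 4) by ring]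
  field_simp

lemma a_inv_mem : L.a⁻¹ ∈ L.A := by
  rw [a_inv_eq]
  exact mul_mem (mul_mem L.z_mem (sub_mem (pow_mem L.z_mem 2) (L.ofNat_mem_A 4))) L.z_four_mem

/-- The function field of the next level. -/
abbrev Ext : Type := QuadraticAlgebra K L.a 0

variable (h2 : (2 : k) ≠ 0)

include h2

lemma two_ne : (2 : K) ≠ 0 := by
  intro h
  apply h2
  apply (algebraMap k K).injective
  rw [map_ofNat, map_zero]
  exact h

lemma ext_separable : Algebra.IsSeparable K L.Ext := by
  refine ⟨fun w => ?_⟩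
  have h2K : (2 : K) ≠ 0 := two_ne h2
  by_cases hv : w.im = 0
  · have : w = algebraMap K L.Ext w.re := QuadraticAlgebra.ext rfl hv
    rw [this]
    exact isSeparable_algebraMap _
  · have h4 : 4 * (L.a * w.im ^ 2) ≠ 0 := by
      have : (4 : K) ≠ 0 := by
        rw [show (4 : K) = 2 * 2 by norm_num]
        exact mul_ne_zero h2K h2K
      exact mul_ne_zero this (mul_ne_zero L.a_ne (pow_ne_zero _ hv))
    refine (separable_quadratic (b := w.re) (c := w.re ^ 2 - L.a * w.im ^ 2) ?_).of_dvd
      (minpoly.dvd K w ?_)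
    · rw [show 4 * (w.re ^ 2 - (w.re ^ 2 - L.a * w.im ^ 2)) = 4 * (L.a * w.im ^ 2) by ring]
      exact h4
    · ext <;> simp [sq] <;> ring

omit h2

/-- The affine ring of the next level. -/
noncomputable def O' : Subalgebra k L.Ext := (integralClosure L.O L.Ext).restrictScalars k

lemma mem_O'_iff_isIntegral {w : L.Ext} : w ∈ L.O' ↔ IsIntegral L.O w := Iff.rfl

lemma algebraMap_mem_O' {f : K} (hf : f ∈ L.O) : algebraMap K L.Ext f ∈ L.O' :=
  L.mem_O'_iff_isIntegral.2
    ((isIntegral_algebraMap (x := (⟨f, hf⟩ : L.O)) : IsIntegral L.O f).map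
      (IsScalarTower.toAlgHom L.O K L.Ext))

lemma mem_O_of_algebraMap {f : K} (hf : algebraMap K L.Ext f ∈ L.O') : f ∈ L.O :=
  L.mem_O_of_isIntegral
    ((isIntegral_algebraMap_iff (algebraMap K L.Ext).injective).1 (L.mem_O'_iff_isIntegral.1 hf))

lemma star_mem_O' {w : L.Ext} (hw : w ∈ L.O') : star w ∈ L.O' := by
  let σ : L.Ext →ₐ[L.O] L.Ext :=
    { toFun := star
      map_one' := star_one _
      map_mul' := fun x y => by rw [star_mul, mul_comm]
      map_zero' := star_zero _
      map_add' := star_add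
      commutes' := fun r => by
        rw [IsScalarTower.algebraMap_apply L.O K L.Ext]
        ext <;> simp }
  exact (L.mem_O'_iff_isIntegral.1 hw).map σ

lemma mul_star_eq (w : L.Ext) :
    w * star w = algebraMap K L.Ext (w.re ^ 2 - w.im ^ 2 * L.a) := by
  ext <;> simp [sq, -map_mul, -map_sub, -map_pow] <;> ring

lemma im_omega_sq (v : K) :
    (⟨0, v⟩ : L.Ext) ^ 2 = algebraMap K L.Ext (v ^ 2 * L.a) := by
  ext <;> simp [sq] <;> ring

lemma eq_add (w : L.Ext) : w = algebraMap K L.Ext w.re + ⟨0, w.im⟩ := by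
  ext <;> simp

include h2

lemma mem_O' {w : L.Ext} : w ∈ L.O' ↔ w.re ∈ L.O ∧ w.im ^ 2 * L.a ∈ L.O := by
  constructor
  · intro hw
    have hs := L.star_mem_O' hw
    have h1 : w.re ∈ L.O := by
      have h3 := L.O'.smul_mem (add_mem hw hs) (2⁻¹ : k)
      apply L.mem_O_of_algebraMap
      convert h3 using 1
      have h2K : (2 : K) ≠ 0 := two_ne h2
      ext
      · simp only [re_smul, re_add, re_star, algebraMap_re, zero_mul, add_zero]
        rw [← two_mul, Algebra.smul_def, map_inv₀, map_ofNat, inv_mul_cancel_left₀ h2K]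
      · simp
    refine ⟨h1, ?_⟩
    have h3 := mul_mem hw hs
    rw [mul_star_eq] at h3
    have h4 := sub_mem (pow_mem h1 2) (L.mem_O_of_algebraMap h3)
    convert h4 using 1
    ring
  · rintro ⟨h1, h3⟩
    rw [L.eq_add w]
    refine add_mem (L.algebraMap_mem_O' h1) (L.mem_O'_iff_isIntegral.2 ?_)
    refine IsIntegral.of_pow two_pos ?_
    rw [im_omega_sq]
    exact L.algebraMap_mem_O' h3

lemma O'_ded : IsDedekindDomain L.O' := by
  have := L.ded
  have := L.frac
  have := L.ext_separable h2
  exact integralClosure.isDedekindDomain L.O K L.Ext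

omit h2 in
lemma O'_frac : IsFractionRing L.O' L.Ext := by
  have := L.ded
  have := L.frac
  exact integralClosure.isFractionRing_of_finite_extension K L.Ext

omit h2

/-- The coordinate `x` at the next level. -/
noncomputable def x' : L.O' := ⟨algebraMap K L.Ext L.x, L.algebraMap_mem_O' L.x.2⟩

lemma h'_coe : ((L.x' ^ 5 - 16 * L.x' : L.O') : L.Ext) = algebraMap K L.Ext L.h := by
  rw [h_coe, map_sub, map_mul, map_pow, map_ofNat]
  rfl

/-- `O'[1/h]`. -/
noncomputable abbrev A' : Subalgebra k L.Ext :=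
  awayRing L.O' (L.x' ^ 5 - 16 * L.x')

lemma mem_A_iff {f : K} : f ∈ L.A ↔ ∃ j : ℕ, (L.h : K) ^ j * f ∈ L.O := Iff.rfl

/-- The radical of `hO'`. -/
noncomputable abbrev R' : Submodule k L.Ext := radSpace L.O' (L.x' ^ 5 - 16 * L.x')

lemma mem_A'_iff {w : L.Ext} : w ∈ L.A' ↔ ∃ j : ℕ, algebraMap K L.Ext (L.h ^ j) * w ∈ L.O' := by
  rw [mem_awayRing, h'_coe]
  simp only [map_pow]

lemma exists_pow_common {f g : K} (hf : f ∈ L.A) (hg : g ∈ L.A) :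
    ∃ j : ℕ, (L.h : K) ^ j * f ∈ L.O ∧ (L.h : K) ^ j * g ∈ L.O := by
  obtain ⟨i, hi⟩ := hf
  obtain ⟨j, hj⟩ := hg
  refine ⟨i + j, ?_, ?_⟩
  · rw [show (L.h : K) ^ (i + j) * f = L.h ^ j * (L.h ^ i * f) by ring]
    exact mul_mem (pow_mem L.h.2 _) hi
  · rw [show (L.h : K) ^ (i + j) * g = L.h ^ i * (L.h ^ j * g) by ring]
    exact mul_mem (pow_mem L.h.2 _) hj

lemma pow_mul_mem_of_sq {v : K} {i : ℕ} (hi : (L.h : K) ^ i * L.a⁻¹ ∈ L.O)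
    (hv : v ^ 2 * L.a ∈ L.O) : (L.h : K) ^ i * v ∈ L.O := by
  apply L.mem_O_of_pow two_pos
  have := L.a_ne
  rw [show ((L.h : K) ^ i * v) ^ 2 = L.h ^ i * (L.h ^ i * L.a⁻¹) * (v ^ 2 * L.a) by field_simp]
  exact mul_mem (mul_mem (pow_mem L.h.2 _) hi) hv

lemma mem_A_of_sq {v : K} (hv : v ^ 2 * L.a ∈ L.O) : v ∈ L.A := by
  obtain ⟨i, hi⟩ := L.a_inv_mem
  exact ⟨i, L.pow_mul_mem_of_sq hi hv⟩

include h2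

lemma mem_A' {w : L.Ext} : w ∈ L.A' ↔ w.re ∈ L.A ∧ w.im ∈ L.A := by
  rw [mem_A'_iff]
  constructor
  · rintro ⟨j, hj⟩
    rw [L.mem_O' h2] at hj
    simp only [re_mul, im_mul, algebraMap_re, algebraMap_im, zero_mul, mul_zero, add_zero] at hj
    refine ⟨⟨j, hj.1⟩, ?_⟩
    obtain ⟨i, hi⟩ := L.mem_A_of_sq hj.2
    refine ⟨i + j, ?_⟩
    rw [pow_add, mul_assoc]
    exact hi
  · rintro ⟨h3, h4⟩
    obtain ⟨j, hj, hj'⟩ := L.exists_pow_common h3 h4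
    obtain ⟨i, hi⟩ := L.a_mem
    refine ⟨j + i, (L.mem_O' h2).2 ?_⟩
    simp only [re_mul, im_mul, algebraMap_re, algebraMap_im, zero_mul, mul_zero, add_zero]
    constructor
    · rw [show (L.h : K) ^ (j + i) * w.re = L.h ^ i * (L.h ^ j * w.re) by ring]
      exact mul_mem (pow_mem L.h.2 _) hj
    · change (L.h : K) ^ i * L.a ∈ L.O at hi
      rw [show ((L.h : K) ^ (j + i) * w.im) ^ 2 * L.a
        = (L.h ^ j * w.im) ^ 2 * L.h ^ i * (L.h ^ i * L.a) by ring]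
      exact mul_mem (mul_mem (pow_mem hj' 2) (pow_mem L.h.2 _)) hi

omit h2 in
lemma star_mem_R' {w : L.Ext} (hw : w ∈ L.R') : star w ∈ L.R' := by
  obtain ⟨h1, n, g, hg, e⟩ := mem_radSpace_iff.1 hw
  refine mem_radSpace_iff.2 ⟨L.star_mem_O' h1, n, star g, L.star_mem_O' hg, ?_⟩
  rw [← star_pow, e, star_mul, mul_comm, h'_coe]
  congr 1
  ext <;> simp

lemma algebraMap_mem_R' {f : K} : algebraMap K L.Ext f ∈ L.R' ↔ f ∈ L.R := by
  constructor
  · intro hf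
    obtain ⟨h1, n, g, hg, e⟩ := mem_radSpace_iff.1 hf
    refine mem_radSpace_iff.2 ⟨L.mem_O_of_algebraMap h1, n, g.re, ((L.mem_O' h2).1 hg).1, ?_⟩
    rw [h'_coe, ← map_pow] at e
    have := congrArg QuadraticAlgebra.re e
    rw [algebraMap_re, re_mul, algebraMap_re, algebraMap_im, mul_zero, zero_mul, add_zero] at this
    exact this
  · intro hf
    obtain ⟨h1, n, g, hg, e⟩ := mem_radSpace_iff.1 hf
    refine mem_radSpace_iff.2
      ⟨L.algebraMap_mem_O' h1, n, algebraMap K L.Ext g, L.algebraMap_mem_O' hg, ?_⟩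
    rw [h'_coe, ← map_pow, e, map_mul]
    rfl

lemma mem_R' {w : L.Ext} : w ∈ L.R' ↔ w.re ∈ L.R ∧ w.im ^ 2 * L.a ∈ L.R := by
  constructor
  · intro hw
    have hs := L.star_mem_R' hw
    have h1 : w.re ∈ L.R := by
      have h3 := L.R'.smul_mem (2⁻¹ : k) (add_mem hw hs)
      apply (L.algebraMap_mem_R' h2).1
      convert h3 using 1
      have h2K : (2 : K) ≠ 0 := two_ne h2
      ext
      · simp only [re_smul, re_add, re_star, algebraMap_re, zero_mul, add_zero]
        rw [← two_mul, Algebra.smul_def, map_inv₀, map_ofNat, inv_mul_cancel_left₀ h2K]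
      · simp
    refine ⟨h1, ?_⟩
    have h3 := radSpace_mul (radSpace_le hw) hs
    rw [mul_star_eq, L.algebraMap_mem_R' h2] at h3
    have h4 := sub_mem (radSpace_mul (radSpace_le h1) h1) h3
    convert h4 using 1
    ring
  · rintro ⟨h1, h3⟩
    rw [L.eq_add w]
    refine add_mem ((L.algebraMap_mem_R' h2).2 h1) (radSpace_of_pow (n := 2) ?_ ?_)
    · rw [L.mem_O' h2]
      exact ⟨zero_mem _, radSpace_le h3⟩
    · rw [im_omega_sq, L.algebraMap_mem_R' h2]
      exact h3

end Level

/-! ### The derivation of the next level -/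

namespace Level

open PoleFiltration QuadraticAlgebra

variable {k K : Type} [Field k] [Field K] [Algebra k K] {M : ℕ} (L : Level k K M)

/-- The logarithmic derivative of `√a`. -/
noncomputable def mu : K := L.θ L.a / (2 * L.a)

/-- The generator `√a` of the next level. -/
def z' : L.Ext := ⟨0, 1⟩

/-- The pole filtration of the next level. -/
noncomputable abbrev PhiNext : PoleFiltration k L.Ext := quadPole L.deg_a

lemma z'_ne : L.z' ≠ 0 := by
  intro h
  have := congrArg QuadraticAlgebra.im h
  exact one_ne_zero this

lemma z'_sq : L.z' ^ 2 = algebraMap K L.Ext L.a := by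
  rw [z', im_omega_sq, one_pow, one_mul]

lemma z'_inv : L.z'⁻¹ = ⟨0, L.a⁻¹⟩ := by
  have := L.a_ne
  apply inv_eq_of_mul_eq_one_right
  ext <;> simp [z', this]

lemma a_sq_sub : L.a ^ 2 - 16 = (L.z ^ 2 - 4) ^ 2 / L.z ^ 2 := by
  have := L.z_ne
  rw [a_eq]
  field_simp
  ring

lemma a_sq_sub_inv_mem : (L.a ^ 2 - 16)⁻¹ ∈ L.A := by
  obtain ⟨h1, h2⟩ := L.z_two_ne
  have h3 := L.z_ne
  have : (L.a ^ 2 - 16)⁻¹ = (L.z * (L.z ^ 2 + 4) * (L.z ^ 4 - 16)⁻¹) ^ 2 := by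
    rw [a_sq_sub, show L.z ^ 4 - 16 = (L.z ^ 2 - 4) * (L.z ^ 2 + 4) by ring]
    field_simp
  rw [this]
  exact pow_mem (mul_mem (mul_mem L.z_mem (add_mem (pow_mem L.z_mem 2) (L.ofNat_mem_A 4)))
    L.z_four_mem) 2

lemma z'_four : (L.z' ^ 4 - 16)⁻¹ = algebraMap K L.Ext (L.a ^ 2 - 16)⁻¹ := by
  rw [map_inv₀, map_sub, map_pow, map_ofNat, ← z'_sq]
  ring

lemma deg'_even {w : L.Ext} {i : ℤ} : L.PhiNext.Deg w (2 * i) ↔ L.Φ.Deg w.re i ∧ w.im ∈ L.Φ.F (i - 1) :=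
  quad_exact_even

lemma deg'_odd {w : L.Ext} {i : ℤ} : L.PhiNext.Deg w (2 * i + 1) ↔ L.Φ.Deg w.im i ∧ w.re ∈ L.Φ.F i :=
  quad_exact_odd

lemma mem_F' {w : L.Ext} {m : ℤ} :
    w ∈ L.PhiNext.F m ↔ w.re ∈ L.Φ.F (m / 2) ∧ w.im ∈ L.Φ.F ((m - 1) / 2) := Iff.rfl

lemma deg_x' : L.PhiNext.Deg (L.x' : L.Ext) ((2 * M : ℕ) : ℤ) := by
  push_cast
  exact L.deg'_even.2 ⟨L.deg_x, zero_mem _⟩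

lemma deg_z' : L.PhiNext.Deg L.z' 1 := (L.deg'_odd (i := 0)).2 ⟨deg_one, zero_mem _⟩

/-- Functions `v` with `v √a` integral. -/
def J : Submodule k K where
  carrier := {v | v ^ 2 * L.a ∈ L.O}
  zero_mem' := by simp
  add_mem' {v w} hv hw := by
    simp only [Set.mem_setOf_eq] at *
    have h1 : v * w * L.a ∈ L.O := by
      apply L.mem_O_of_pow two_pos
      rw [show (v * w * L.a) ^ 2 = v ^ 2 * L.a * (w ^ 2 * L.a) by ring]
      exact mul_mem hv hw
    rw [show (v + w) ^ 2 * L.a = v ^ 2 * L.a + w ^ 2 * L.a + (v * w * L.a + v * w * L.a) by ring]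
    exact add_mem (add_mem hv hw) (add_mem h1 h1)
  smul_mem' c v hv := by
    simp only [Set.mem_setOf_eq] at *
    rw [smul_pow, smul_mul_assoc]
    exact L.O.smul_mem hv _

lemma mem_J {v : K} : v ∈ L.J ↔ v ^ 2 * L.a ∈ L.O := Iff.rfl

lemma mul_mem_of_J {v w : K} (hv : v ∈ L.J) (hw : w ∈ L.J) : v * w * L.a ∈ L.O := by
  rw [mem_J] at hv hw
  apply L.mem_O_of_pow two_pos
  rw [show (v * w * L.a) ^ 2 = v ^ 2 * L.a * (w ^ 2 * L.a) by ring]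
  exact mul_mem hv hw

/-- Functions `v` with `v √a` in the radical of `h`. -/
def JR : Submodule k K where
  carrier := {v | v ^ 2 * L.a ∈ L.R}
  zero_mem' := by simp
  add_mem' {v w} hv hw := by
    simp only [Set.mem_setOf_eq] at *
    have h1 : v * w * L.a ∈ L.R := by
      refine radSpace_of_pow (n := 2) (L.mul_mem_of_J (radSpace_le hv) (radSpace_le hw)) ?_
      rw [show (v * w * L.a) ^ 2 = v ^ 2 * L.a * (w ^ 2 * L.a) by ring]
      exact radSpace_mul (radSpace_le hv) hw
    rw [show (v + w) ^ 2 * L.a = v ^ 2 * L.a + w ^ 2 * L.a + (v * w * L.a + v * w * L.a) by ring]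
    exact add_mem (add_mem hv hw) (add_mem h1 h1)
  smul_mem' c v hv := by
    simp only [Set.mem_setOf_eq] at *
    rw [smul_pow, smul_mul_assoc]
    exact Submodule.smul_mem _ _ hv

lemma mem_JR {v : K} : v ∈ L.JR ↔ v ^ 2 * L.a ∈ L.R := Iff.rfl

lemma JR_le_J : L.JR ≤ L.J := fun _ hv => radSpace_le hv

lemma J_neg {v : K} (hv : v ∈ L.J) (hm : v ∈ L.Φ.F (-1)) : v = 0 := by
  have h1 : v ^ 2 * L.a ∈ L.Φ.F (-1 + -1 + 1) := by
    rw [sq]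
    exact mul_mem (mul_mem hm hm) L.deg_a.1
  have h2 := L.eq_zero_of_neg hv h1 (by norm_num)
  simpa [L.a_ne] using h2

lemma J_bdd : L.Φ.BddBelowSub L.J :=
  ⟨-1, (Submodule.eq_bot_iff _).2 fun _ hv => L.J_neg hv.1 hv.2⟩

variable (h2 : (2 : k) ≠ 0)

include h2

lemma O'_neg : L.PhiNext.part L.O'.toSubmodule (-1) = ⊥ := by
  refine (Submodule.eq_bot_iff _).2 fun w hw => ?_
  obtain ⟨h3, h4⟩ := (L.mem_O' h2).1 hw.1
  obtain ⟨h5, h6⟩ := hw.2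
  ext
  · exact L.eq_zero_of_neg h3 h5 (by norm_num)
  · exact L.J_neg h4 h6

lemma z'_mem : L.z' ∈ L.A' := (L.mem_A' h2).2 ⟨zero_mem _, one_mem _⟩

lemma z'_inv_mem : L.z'⁻¹ ∈ L.A' := by
  rw [z'_inv, L.mem_A' h2]
  exact ⟨zero_mem _, L.a_inv_mem⟩

lemma z'_four_mem : (L.z' ^ 4 - 16)⁻¹ ∈ L.A' := by
  rw [z'_four, L.mem_A' h2]
  exact ⟨L.a_sq_sub_inv_mem, zero_mem _⟩

/-- The extension of `θ` to the next level. -/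
noncomputable def thetaNext : Derivation k L.Ext L.Ext :=
  Derivation.mk'
    { toFun := fun w => ⟨L.θ w.re, L.θ w.im + w.im * L.mu⟩
      map_add' := fun v w => by
        ext
        · simp
        · simp
          ring
      map_smul' := fun c w => by
        ext
        · simp
        · simp [smul_add] }
    (by
      intro v w
      have h3 : 2 * (L.a * L.mu) = L.θ L.a := by
        have := two_ne (K := K) h2
        have := L.a_ne
        rw [mu]
        field_simp
      ext
      · simp
        linear_combination (-v.im * w.im) * h3
      · simp
        ring)

lemma thetaNext_re (w : L.Ext) : (L.thetaNext h2 w).re = L.θ w.re := rfl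

lemma thetaNext_im (w : L.Ext) : (L.thetaNext h2 w).im = L.θ w.im + w.im * L.mu := rfl

lemma theta'_x : L.thetaNext h2 L.x' = (L.x' : L.Ext) ^ 5 - 16 * L.x' := by
  have h3 := L.h'_coe
  have h4 : ((L.x' ^ 5 - 16 * L.x' : L.O') : L.Ext) = (L.x' : L.Ext) ^ 5 - 16 * L.x' := rfl
  rw [← h4, h3]
  ext
  · rw [thetaNext_re, algebraMap_re, h_coe, ← L.theta_x]
    rfl
  · rw [thetaNext_im]
    simp [x']

lemma mu_lead : L.mu - (L.lam / 2) • (L.x : K) ^ 4 ∈ L.Φ.F (4 * M - 1) := by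
  have h3 := L.theta_lead _ _ L.deg_a
  have h4 := two_ne (K := K) h2
  have h5 := L.a_ne
  have h6 : L.mu - (L.lam / 2) • (L.x : K) ^ 4 =
      (2⁻¹ : k) • ((L.θ L.a - (L.lam * (1 : ℤ)) • ((L.x : K) ^ 4 * L.a)) * L.a⁻¹) := by
    rw [mu]
    simp only [Algebra.smul_def, map_div₀, map_inv₀, map_mul, map_ofNat, Int.cast_one, map_one]
    field_simp
  rw [h6]
  refine Submodule.smul_mem _ _ (L.Φ.mono ?_ (mul_mem h3 L.deg_a.inv.1))
  omega

lemma theta'_lead (w : L.Ext) (m : ℤ) (hw : L.PhiNext.Deg w m) :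
    L.thetaNext h2 w - (L.lam / 2 * m) • ((L.x' : L.Ext) ^ 4 * w) ∈
      L.PhiNext.F (m + 4 * (2 * M : ℕ) - 1) := by
  have hx4 : ((L.x' : L.Ext) ^ 4) = algebraMap K L.Ext (L.x ^ 4) := by rw [map_pow]; rfl
  have hx4d : (L.x : K) ^ 4 ∈ L.Φ.F (4 * M) := (L.deg_x.pow 4).1
  have hmu := L.mu_lead h2
  have hmu' : L.mu ∈ L.Φ.F (4 * M) := by
    have := add_mem (L.Φ.mono (show (4 * M - 1 : ℤ) ≤ 4 * M by omega) hmu)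
      (Submodule.smul_mem _ (L.lam / 2) hx4d)
    simpa using this
  rw [mem_F', hx4]
  simp only [re_sub, im_sub, re_smul, im_smul, re_mul, im_mul, algebraMap_re, algebraMap_im,
    zero_mul, mul_zero, add_zero, thetaNext_re, thetaNext_im]
  rcases Int.even_or_odd' m with ⟨i, rfl | rfl⟩
  · obtain ⟨h3, h4⟩ := L.deg'_even.1 hw
    have h5 : L.lam / 2 * ((2 * i : ℤ) : k) = L.lam * i := by
      push_cast
      field_simp
    rw [h5]
    push_cast
    constructor
    · exact L.Φ.mono (by omega) (L.theta_lead _ _ h3)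
    · refine sub_mem (add_mem ?_ ?_) (Submodule.smul_mem _ _ ?_)
      · exact L.Φ.mono (by omega) (L.theta_mem h4)
      · exact L.Φ.mono (by omega) (mul_mem h4 hmu')
      · exact L.Φ.mono (by omega) (mul_mem hx4d h4)
  · obtain ⟨h3, h4⟩ := L.deg'_odd.1 hw
    push_cast
    constructor
    · refine sub_mem ?_ (Submodule.smul_mem _ _ ?_)
      · exact L.Φ.mono (by omega) (L.theta_mem h4)
      · exact L.Φ.mono (by omega) (mul_mem hx4d h4)
    · have h5 : L.θ w.im + w.im * L.mu - (L.lam / 2 * (2 * i + 1)) • ((L.x : K) ^ 4 * w.im) =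
          (L.θ w.im - (L.lam * i) • ((L.x : K) ^ 4 * w.im)) +
            w.im * (L.mu - (L.lam / 2) • (L.x : K) ^ 4) := by
        have := two_ne (K := K) h2
        simp only [Algebra.smul_def, map_div₀, map_mul, map_ofNat, map_add, map_one]
        field_simp
        ring
      rw [h5]
      refine add_mem ?_ ?_
      · exact L.Φ.mono (by omega) (L.theta_lead _ _ h3)
      · exact L.Φ.mono (by omega) (mul_mem h3.1 hmu)

end Level

/-! ### Integrality of the derivation -/

namespace Level

open PoleFiltration QuadraticAlgebra IsDedekindDomain

variable {k K : Type} [Field k] [Field K] [Algebra k K] {M : ℕ} (L : Level k K M)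

lemma h_ne' : L.h ≠ 0 := fun h => L.h_ne (congrArg Subtype.val h)

/-- The radical of the ideal generated by `h`. -/
def radI : Ideal L.O := (Ideal.span {L.h}).radical

lemma mem_radI {f : L.O} : f ∈ L.radI ↔ (f : K) ∈ L.R := mem_radSpace.symm

lemma radI_ne_bot : L.radI ≠ ⊥ := by
  intro h
  have h1 : L.h ∈ L.radI := Ideal.le_radical (Ideal.mem_span_singleton_self _)
  rw [h] at h1
  exact L.h_ne' h1

lemma radI_isRadical : L.radI.IsRadical := Ideal.radical_isRadical _

lemma radI_le_iff {p : Ideal L.O} (hp : p.IsPrime) : L.radI ≤ p ↔ L.h ∈ p := by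
  rw [radI, hp.radical_le_iff, Ideal.span_singleton_le_iff_mem]

lemma D_radI {f : L.O} (hf : f ∈ L.radI) : L.D f ∈ L.radI :=
  L.mem_radI.2 (L.theta_R f (L.mem_radI.1 hf))

/-- As `radI` is a product of distinct primes, some `y ∉ p` multiplies the prime `p` into it. -/
lemma exists_mul_radI {p : Ideal L.O} (hp : p.IsPrime) (hh : L.h ∈ p) :
    ∃ y ∉ p, ∀ f ∈ p, f * y ∈ L.radI := by
  have := L.ded
  obtain ⟨I, hI⟩ := Ideal.dvd_iff_le.2 ((L.radI_le_iff hp).2 hh)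
  have hI0 : I ≠ ⊥ := by
    rintro rfl
    exact L.radI_ne_bot (by simpa using hI)
  have hle : ¬ I ≤ p := by
    intro hle
    have h1 : I ≤ L.radI := by
      intro f hf
      apply L.radI_isRadical
      refine ⟨2, ?_⟩
      rw [hI, sq]
      exact Ideal.mul_mem_mul (hle hf) hf
    have h2 : p * I ∣ 1 * I := by rwa [one_mul, ← hI, Ideal.dvd_iff_le]
    have h3 := (mul_dvd_mul_iff_right hI0).1 h2
    exact hp.ne_top (Ideal.isUnit_iff.1 (isUnit_of_dvd_one h3))
  obtain ⟨y, hy, hyp⟩ := SetLike.not_le_iff_exists.1 hle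
  refine ⟨y, hyp, fun f hf => ?_⟩
  rw [hI]
  exact Ideal.mul_mem_mul hf hy

lemma D_prime {p : Ideal L.O} (hp : p.IsPrime) (hh : L.h ∈ p) {f : L.O} (hf : f ∈ p) :
    L.D f ∈ p := by
  obtain ⟨y, hy, hy'⟩ := L.exists_mul_radI hp hh
  have h1 := (L.radI_le_iff hp).2 hh (L.D_radI (hy' f hf))
  rw [D_mul] at h1
  have h2 := (Ideal.add_mem_iff_right _ (Ideal.mul_mem_right _ _ hf)).1 h1
  exact (hp.mem_or_mem h2).resolve_left hy

lemma D_prime_pow {p : Ideal L.O} (hp : p.IsPrime) (hh : L.h ∈ p) (n : ℕ) {f : L.O}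
    (hf : f ∈ p ^ n) : L.D f ∈ p ^ n := by
  induction n generalizing f with
  | zero => simp
  | succ n ih =>
    rw [pow_succ] at hf ⊢
    refine Submodule.mul_induction_on hf (fun f hf g hg => ?_) (fun f g hf hg => ?_)
    · rw [D_mul]
      refine add_mem (Ideal.mul_mem_mul hf (L.D_prime hp hh hg)) ?_
      rw [mul_comm g]
      exact Ideal.mul_mem_mul (ih hf) hg
    · rw [D_add]
      exact add_mem hf hg

lemma theta_A {f : K} (hf : f ∈ L.A) : L.θ f ∈ L.A := by
  obtain ⟨j, hj⟩ := hf
  change (L.h : K) ^ j * f ∈ L.O at hj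
  refine ⟨j + 1, ?_⟩
  change (L.h : K) ^ (j + 1) * L.θ f ∈ L.O
  have h1 : L.θ ((L.h : K) ^ j * f) = L.h ^ j * L.θ f + f * L.θ (L.h ^ j) := by
    rw [Derivation.leibniz, smul_eq_mul, smul_eq_mul]
  have h2 : (L.h : K) * L.θ (L.h ^ j) = j * (L.h ^ j * L.θ L.h) := by
    rcases j with _ | j
    · simp
    · rw [Derivation.leibniz_pow]
      simp only [smul_eq_mul, nsmul_eq_mul, Nat.add_sub_cancel]
      ring
  have h3 : (L.h : K) ^ (j + 1) * L.θ f =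
      L.h * L.θ ((L.h : K) ^ j * f) - j * (L.θ L.h * (L.h ^ j * f)) := by
    rw [h1]
    linear_combination (-f) * h2
  rw [h3]
  exact sub_mem (mul_mem L.h.2 (L.theta_O _ hj))
    (mul_mem (natCast_mem _ j) (mul_mem (L.theta_O _ L.h.2) hj))

/-- At a place above `h = 0`, the derivation does not lower the order of vanishing. -/
lemma valuation_D_le [IsDedekindDomain L.O] (v : HeightOneSpectrum L.O) (hh : L.h ∈ v.asIdeal)
    (b : L.O) : v.intValuation (L.D b) ≤ v.intValuation b := by
  by_cases hb : b = 0
  · have : L.D 0 = 0 := Subtype.ext (map_zero L.θ)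
    rw [hb, this]
  have h1 := v.intValuation_if_neg hb
  rw [h1, v.intValuation_le_pow_iff_mem]
  exact L.D_prime_pow v.isPrime hh _ ((v.intValuation_le_pow_iff_mem _ _).1 h1.le)

lemma sq_theta_div_valuation [IsDedekindDomain L.O] [IsFractionRing L.O K]
    (v : HeightOneSpectrum L.O) (hh : L.h ∈ v.asIdeal) {b : L.O} (hb : b ≠ 0) :
    v.valuation K (L.θ b ^ 2 / b) ≤ v.intValuation b := by
  have h1 : v.valuation K (L.θ b) ≤ v.intValuation b := by
    have := L.valuation_D_le v hh b
    rwa [← v.valuation_of_algebraMap (K := K)] at this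
  have h2 : v.valuation K (b : K) = v.intValuation b := v.valuation_of_algebraMap b
  have h3 : v.intValuation b ≠ 0 := v.intValuation_ne_zero b hb
  rw [map_div₀, map_pow, h2, sq]
  calc _ ≤ v.intValuation b * v.intValuation b / v.intValuation b := by
        gcongr
        exact zero_le
    _ = _ := mul_div_cancel_right₀ _ h3

lemma mem_O_of_places [IsDedekindDomain L.O] [IsFractionRing L.O K] {g : K} (hg : g ∈ L.A)
    (hv : ∀ v : HeightOneSpectrum L.O, L.h ∈ v.asIdeal → v.valuation K g ≤ 1) : g ∈ L.O := by
  obtain ⟨f, rfl⟩ := HeightOneSpectrum.mem_integers_of_valuation_le_one (R := L.O) K g (by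
    intro v
    by_cases hh : L.h ∈ v.asIdeal
    · exact hv v hh
    · obtain ⟨j, hj⟩ := hg
      change (L.h : K) ^ j * g ∈ L.O at hj
      clear hv
      generalize L.h = H at *
      have h1 : v.valuation K ((H : K) ^ j * g) ≤ 1 := v.valuation_le_one (K := K) ⟨_, hj⟩
      have h2 : v.valuation K (H : K) = 1 := v.valuation_eq_one_iff_notMem.2 hh
      rwa [map_mul, map_pow, h2, one_pow, one_mul] at h1)
  exact f.2

lemma mem_R_of_places [IsDedekindDomain L.O] [IsFractionRing L.O K] {g : L.O}
    (hv : ∀ v : HeightOneSpectrum L.O, L.h ∈ v.asIdeal → v.valuation K (g : K) < 1) :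
    (g : K) ∈ L.R := by
  rw [← mem_radI, radI, Ideal.radical_eq_sInf, Submodule.mem_sInf]
  rintro p ⟨hp1, hp⟩
  have hh : L.h ∈ p := (Ideal.span_singleton_le_iff_mem _).1 hp1
  let v : HeightOneSpectrum L.O := ⟨p, hp, fun h => by
    rw [h] at hh
    exact L.h_ne' hh⟩
  exact (v.valuation_lt_one_iff_mem (K := K) g).1 (hv v hh)

lemma sq_theta_div_mem {v : K} (hv : v ≠ 0) (hb : v ^ 2 * L.a ∈ L.O) :
    L.θ (v ^ 2 * L.a) ^ 2 / (v ^ 2 * L.a) ∈ L.O ∧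
      (v ^ 2 * L.a ∈ L.R → L.θ (v ^ 2 * L.a) ^ 2 / (v ^ 2 * L.a) ∈ L.R) := by
  have := L.ded
  have := L.frac
  have ha := L.a_ne
  have hvA := L.mem_A_of_sq hb
  have hgA : L.θ (v ^ 2 * L.a) ^ 2 / (v ^ 2 * L.a) ∈ L.A := by
    have h1 : L.θ (v ^ 2 * L.a) ^ 2 / (v ^ 2 * L.a) =
        (2 * L.θ v * L.a + v * L.θ L.a) ^ 2 * L.a⁻¹ := by
      rw [Derivation.leibniz, Derivation.leibniz_pow]
      simp only [smul_eq_mul, nsmul_eq_mul]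
      field_simp
      push_cast
      ring
    rw [h1]
    exact mul_mem (pow_mem (add_mem (mul_mem (mul_mem (L.ofNat_mem_A 2) (L.theta_A hvA)) L.a_mem)
      (mul_mem hvA (L.theta_A L.a_mem))) 2) L.a_inv_mem
  have hb0' : v ^ 2 * L.a ≠ 0 := mul_ne_zero (pow_ne_zero 2 hv) ha
  generalize v ^ 2 * L.a = b at *
  lift b to L.O using hb
  have hb0 : b ≠ 0 := fun h => hb0' (congrArg Subtype.val h)
  have hgO : L.θ b ^ 2 / b ∈ L.O := L.mem_O_of_places hgA fun w hh =>
    (L.sq_theta_div_valuation w hh hb0).trans (w.intValuation_le_one _)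
  refine ⟨hgO, fun hR => L.mem_R_of_places (g := ⟨_, hgO⟩) fun w hh => ?_⟩
  have hbp : b ∈ w.asIdeal := (L.radI_le_iff w.isPrime).2 hh (L.mem_radI.2 hR)
  exact (L.sq_theta_div_valuation w hh hb0).trans_lt ((w.intValuation_lt_one_iff_mem _).2 hbp)

variable (h2 : (2 : k) ≠ 0)

include h2

lemma theta'_im_sq {v : K} (hv : v ≠ 0) : (L.θ v + v * L.mu) ^ 2 * L.a =
    (4⁻¹ : k) • (L.θ (v ^ 2 * L.a) ^ 2 / (v ^ 2 * L.a)) := by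
  have h3 := two_ne (K := K) h2
  have h4 : (4 : K) ≠ 0 := by
    rw [show (4 : K) = 2 * 2 by norm_num]
    exact mul_ne_zero h3 h3
  have ha := L.a_ne
  rw [Derivation.leibniz, Derivation.leibniz_pow, mu]
  simp only [smul_eq_mul, Algebra.smul_def, map_inv₀, map_ofNat]
  field_simp
  push_cast
  ring

lemma theta'_O (w : L.Ext) (hw : w ∈ L.O') : L.thetaNext h2 w ∈ L.O' := by
  rw [L.mem_O' h2] at hw ⊢
  refine ⟨L.theta_O _ hw.1, ?_⟩
  rw [thetaNext_im]
  by_cases hv : w.im = 0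
  · simp [hv]
  · rw [L.theta'_im_sq h2 hv]
    exact L.O.smul_mem (L.sq_theta_div_mem hv hw.2).1 _

lemma theta'_R (w : L.Ext) (hw : w ∈ L.R') : L.thetaNext h2 w ∈ L.R' := by
  rw [L.mem_R' h2] at hw ⊢
  refine ⟨L.theta_R _ hw.1, ?_⟩
  rw [thetaNext_im]
  by_cases hv : w.im = 0
  · simp [hv]
  · rw [L.theta'_im_sq h2 hv]
    exact Submodule.smul_mem _ _ ((L.sq_theta_div_mem hv (radSpace_le hw.2)).2 hw.2)

end Level

/-! ### Evaluation at the places of the next level -/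

/-- If `c` is a root of `splitPoly`, then so is any square root of `c + 4/c`. -/
lemma quint_step {k : Type} [Field k] (h11 : (11 : k) = 0) {c w : k} (hc : splitPoly c = 0)
    (hw : w * c = c ^ 2 + 4) : quint (w ^ 2) = 0 := by
  have h0 : c ≠ 0 := by
    rintro rfl
    simp [splitPoly] at hc
  have h1 : quint (w ^ 2) * c ^ 10 = 0 := by
    have h2 : quint (w ^ 2) * c ^ 10 = (w * c) ^ 10 + 4 * (w * c) ^ 8 * c ^ 2 +
        3 * (w * c) ^ 6 * c ^ 4 + 4 * (w * c) ^ 4 * c ^ 6 + 5 * (w * c) ^ 2 * c ^ 8 + c ^ 10 := by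
      unfold quint
      ring
    rw [h2, hw]
    unfold splitPoly at hc
    linear_combination hc + (4*c^18 + 77*c^16 + 868*c^14 + 6262*c^12 + 30363*c^10 + 100196*c^8 +
      222208*c^6 + 316881*c^4 + 262144*c^2 + 95325) * h11
  exact (mul_eq_zero.1 h1).resolve_right (pow_ne_zero _ h0)

lemma isSquare_of_quint {k : Type} [Field k] [Finite k] (hk : Nat.card k = 121)
    (h11 : (11 : k) = 0) {w : k} (hw : quint (w ^ 2) = 0) : w ≠ 0 ∧ IsSquare w := by
  have := Fintype.ofFinite k
  have h1 := quint_mul_cof h11 (w ^ 2)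
  rw [hw, zero_mul, ← pow_mul] at h1
  have h2 : w ^ 60 = 1 := (sub_eq_zero.1 h1.symm)
  have h0 : w ≠ 0 := by
    rintro rfl
    simp at h2
  refine ⟨h0, (FiniteField.isSquare_iff ?_ h0).2 ?_⟩
  · intro h
    have h3 : ((2 : ℕ) : k) = 0 := by
      rw [← h]
      exact ringChar.Nat.cast_ringChar
    have : (1 : k) = 11 - 5 * (2 : ℕ) := by norm_num
    rw [h11, h3] at this
    simp at this
  · rw [← Nat.card_eq_fintype_card, hk]
    exact h2

namespace Level

open PoleFiltration QuadraticAlgebra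

variable {k K : Type} [Field k] [Field K] [Algebra k K] {M : ℕ} (L : Level k K M)

lemma ev_zero (P : L.Pt) : L.ev P 0 = 0 := by simpa using L.ev_algebraMap P 0

lemma ev_one (P : L.Pt) : L.ev P 1 = 1 := by simpa using L.ev_algebraMap P 1

lemma ev_a (h11 : (11 : k) = 0) (P : L.Pt) : quint (L.ev P L.a ^ 2) = 0 := by
  refine quint_step h11 (L.ev_z P) ?_
  rw [← L.ev_mul P _ L.a_mem _ L.z_mem, show L.a * L.z = L.z * L.z + algebraMap k K 4 by
    have := L.z_ne
    rw [map_ofNat, a]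
    field_simp]
  rw [L.ev_add P _ (mul_mem L.z_mem L.z_mem) _ (L.A.algebraMap_mem 4), L.ev_mul P _ L.z_mem _ L.z_mem,
    L.ev_algebraMap, sq]

lemma exists_root [Finite k] (hk : Nat.card k = 121) (h11 : (11 : k) = 0) (P : L.Pt) :
    ∃ c : k, c ≠ 0 ∧ c ^ 2 = L.ev P L.a := by
  obtain ⟨h0, c, hc⟩ := isSquare_of_quint hk h11 (L.ev_a h11 P)
  refine ⟨c, ?_, by rw [hc, sq]⟩
  rintro rfl
  exact h0 (by simpa using hc)

/-- Evaluation at a place of the next level; `c P` is a square root of `a(P)`, and the two places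
above `P` are distinguished by the sign of `√a`. -/
def ev' (c : L.Pt → k) (Q : L.Pt × Bool) (w : L.Ext) : k :=
  L.ev Q.1 w.re + (if Q.2 then c Q.1 else -c Q.1) * L.ev Q.1 w.im

section

variable {c : L.Pt → k} (hc : ∀ P, c P ^ 2 = L.ev P L.a)

lemma ev'_algebraMap (Q : L.Pt × Bool) (r : k) : L.ev' c Q (algebraMap k L.Ext r) = r := by
  rw [IsScalarTower.algebraMap_apply k K L.Ext, ev', algebraMap_re, algebraMap_im, ev_zero,
    L.ev_algebraMap, mul_zero, add_zero]

lemma ev'_x (Q : L.Pt × Bool) : splitPoly (L.ev' c Q L.x') = 0 := by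
  rw [ev', x', algebraMap_re, algebraMap_im, ev_zero, mul_zero, add_zero]
  exact L.ev_x _

lemma splitPoly_neg (r : k) : splitPoly (-r) = splitPoly r := by
  unfold splitPoly
  ring

include hc in
lemma ev'_z (h11 : (11 : k) = 0) (Q : L.Pt × Bool) : splitPoly (L.ev' c Q L.z') = 0 := by
  have h1 : splitPoly (c Q.1) = 0 := by
    rw [splitPoly_eq, show c Q.1 ^ 4 = (c Q.1 ^ 2) ^ 2 by ring, hc, L.ev_a h11]
  rw [ev', z']
  dsimp only
  rw [ev_zero, ev_one, mul_one, zero_add]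
  split_ifs
  · exact h1
  · rw [splitPoly_neg, h1]

variable (h2 : (2 : k) ≠ 0)

include h2

lemma ev'_add (Q : L.Pt × Bool) (v : L.Ext) (hv : v ∈ L.A') (w : L.Ext) (hw : w ∈ L.A') :
    L.ev' c Q (v + w) = L.ev' c Q v + L.ev' c Q w := by
  rw [L.mem_A' h2] at hv hw
  rw [ev', ev', ev', re_add, im_add, L.ev_add _ _ hv.1 _ hw.1, L.ev_add _ _ hv.2 _ hw.2]
  ring

include hc in
lemma ev'_mul (Q : L.Pt × Bool) (v : L.Ext) (hv : v ∈ L.A') (w : L.Ext) (hw : w ∈ L.A') :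
    L.ev' c Q (v * w) = L.ev' c Q v * L.ev' c Q w := by
  rw [L.mem_A' h2] at hv hw
  have h3 : (if Q.2 then c Q.1 else -c Q.1) ^ 2 = L.ev Q.1 L.a := by
    rw [← hc]
    split_ifs <;> ring
  rw [ev', ev', ev', re_mul, im_mul, zero_mul, zero_mul, add_zero]
  rw [L.ev_add _ _ (mul_mem hv.1 hw.1) _ (mul_mem (mul_mem L.a_mem hv.2) hw.2),
    L.ev_add _ _ (mul_mem hv.1 hw.2) _ (mul_mem hv.2 hw.1),
    L.ev_mul _ _ hv.1 _ hw.1, L.ev_mul _ _ (mul_mem L.a_mem hv.2) _ hw.2,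
    L.ev_mul _ _ L.a_mem _ hv.2, L.ev_mul _ _ hv.1 _ hw.2, L.ev_mul _ _ hv.2 _ hw.1, ← h3]
  ring

lemma ev'_vanish (hc0 : ∀ P, c P ≠ 0) (f : L.Ext) (hf : f ∈ L.A')
    (h : ∀ Q, L.ev' c Q f = 0) : ∃ g ∈ L.A', f = splitPoly (L.x' : L.Ext) * g := by
  rw [L.mem_A' h2] at hf
  have h3 (P : L.Pt) : L.ev P f.re = 0 ∧ L.ev P f.im = 0 := by
    have h4 : L.ev P f.re + c P * L.ev P f.im = 0 := h (P, true)
    have h5 : L.ev P f.re + -c P * L.ev P f.im = 0 := h (P, false)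
    have h6 : 2 * L.ev P f.re = 0 := by linear_combination h4 + h5
    have h7 := (mul_eq_zero.1 h6).resolve_left h2
    rw [h7, zero_add] at h4
    exact ⟨h7, (mul_eq_zero.1 h4).resolve_left (hc0 P)⟩
  obtain ⟨g1, hg1, e1⟩ := L.ev_vanish _ hf.1 fun P => (h3 P).1
  obtain ⟨g2, hg2, e2⟩ := L.ev_vanish _ hf.2 fun P => (h3 P).2
  refine ⟨⟨g1, g2⟩, (L.mem_A' h2).2 ⟨hg1, hg2⟩, ?_⟩
  have h4 : splitPoly (L.x' : L.Ext) = algebraMap K L.Ext (splitPoly (L.x : K)) :=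
    (map_splitPoly (algebraMap K L.Ext) _).symm
  rw [h4]
  ext
  · simpa [re_mul] using e1
  · simpa [im_mul] using e2

end

end Level

/-! ### The genus of the next level -/

namespace PoleFiltration

variable {k K : Type} [Field k] [Field K] [Algebra k K] {Φ : PoleFiltration k K}

/-- If multiplication by `g` induces an injection `T₁ / S₁ → T₂ / S₂`, the codimensions of the
spaces of bounded pole order compare accordingly. -/
lemma dim_sub_le {S₁ T₁ S₂ T₂ : Submodule k K} (hS₁ : Φ.BddBelowSub S₁) (hT₁ : Φ.BddBelowSub T₁)
    (hT₂ : Φ.BddBelowSub T₂) (hST : S₂ ≤ T₂) {g : K} {σ : ℤ} (hg : Φ.Deg g σ)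
    (hmul : ∀ f ∈ T₁, g * f ∈ T₂) (hinj : ∀ f ∈ T₁, g * f ∈ S₂ → f ∈ S₁)
    {n m : ℤ} (hnm : n + σ ≤ m) :
    Φ.dim T₁ n + Φ.dim S₂ m ≤ Φ.dim S₁ n + Φ.dim T₂ m := by
  have hl : Function.Injective (LinearMap.mulLeft k g) := mul_right_injective₀ hg.ne_zero
  have := finite_part hT₁ n
  have := finite_part hT₂ m
  have := finite_part hS₁ n
  have := finite_part (hT₂.mono hST) m
  let U := (Φ.part T₁ n).map (LinearMap.mulLeft k g)
  have hU : Module.finrank k U = Module.finrank k (Φ.part T₁ n) :=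
    (Submodule.equivMapOfInjective _ hl _).finrank_eq.symm
  have h1 := Submodule.finrank_sup_add_finrank_inf_eq U (Φ.part S₂ m)
  have h2 : U ⊔ Φ.part S₂ m ≤ Φ.part T₂ m := by
    refine sup_le ?_ (inf_le_inf_right _ hST)
    rintro _ ⟨f, hf, rfl⟩
    exact ⟨hmul f hf.1, Φ.mono hnm (hg.mul_mem_iff.2 hf.2)⟩
  have h3 : U ⊓ Φ.part S₂ m ≤ (Φ.part S₁ n).map (LinearMap.mulLeft k g) := by
    rintro _ ⟨⟨f, hf, rfl⟩, hf2⟩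
    exact ⟨f, ⟨hinj f hf.1 hf2.1, hf.2⟩, rfl⟩
  have h4 := Submodule.finrank_mono h2
  have h5 := Submodule.finrank_mono h3
  rw [← (Submodule.equivMapOfInjective _ hl _).finrank_eq] at h5
  unfold dim
  omega

lemma dim_le_of_mul {S T : Submodule k K} (hS : Φ.BddBelowSub S) (hT : Φ.BddBelowSub T)
    {g : K} {σ : ℤ} (hg : Φ.Deg g σ) (hmul : ∀ f ∈ S, g * f ∈ T) (n : ℤ) :
    Φ.dim S n ≤ Φ.dim T (n + σ) := by
  have h0 (m : ℤ) : Φ.part (⊥ : Submodule k K) m = ⊥ := by simp [part]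
  have h1 (m : ℤ) : Φ.dim (⊥ : Submodule k K) m = 0 := by
    rw [dim, h0]
    simp
  have h2 := dim_sub_le (S₁ := ⊥) (S₂ := ⊥) ⟨0, h0 0⟩ hS hT bot_le hg hmul
    (fun f _ hf => by simpa [hg.ne_zero] using hf) (le_refl (n + σ))
  rw [h1, h1] at h2
  omega

end PoleFiltration

namespace Level

open PoleFiltration QuadraticAlgebra

variable {k K : Type} [Field k] [Field K] [Algebra k K] {M : ℕ} (L : Level k K M)

/-- An ideal of the affine ring, as a `k`-subspace of the function field. -/
def space (I : Ideal L.O) : Submodule k K := (I.restrictScalars k).map L.O.val.toLinearMap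

lemma mem_space {I : Ideal L.O} {f : L.O} : (f : K) ∈ L.space I ↔ f ∈ I := by
  constructor
  · rintro ⟨g, hg, hgf⟩
    have : g = f := Subtype.ext hgf
    exact this ▸ hg
  · intro hf
    exact ⟨f, hf, rfl⟩

lemma exists_of_mem_space {I : Ideal L.O} {f : K} (hf : f ∈ L.space I) : ∃ g ∈ I, (g : K) = f := hf

lemma space_mono {I I' : Ideal L.O} (h : I ≤ I') : L.space I ≤ L.space I' := by
  rintro _ ⟨f, hf, rfl⟩
  exact ⟨f, h hf, rfl⟩

lemma space_bdd (I : Ideal L.O) : L.Φ.BddBelowSub (L.space I) :=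
  L.bdd.mono (by
    rintro _ ⟨f, -, rfl⟩
    exact f.2)

lemma space_top : L.space ⊤ = L.O.toSubmodule := by
  ext f
  constructor
  · rintro ⟨g, -, rfl⟩
    exact g.2
  · intro hf
    exact ⟨⟨f, hf⟩, trivial, rfl⟩

lemma space_radI : L.space L.radI = L.R := rfl

/-- The ideal `e J`. -/
def idA (e : L.O) : Ideal L.O where
  carrier := {f | (f : K) / e ∈ L.J}
  zero_mem' := by simp
  add_mem' {f g} hf hg := by
    have := add_mem (S := Submodule k K) (s := L.J) hf hg
    change ((f : K) + g) / e ∈ L.J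
    rwa [add_div]
  smul_mem' r f hf := by
    change (r * f : K) / e ∈ L.J
    have h1 : ((f : K) / e) ^ 2 * L.a ∈ L.O := hf
    rw [mem_J, show ((r * f : K) / e) ^ 2 * L.a = r ^ 2 * (((f : K) / e) ^ 2 * L.a) by ring]
    exact mul_mem (pow_mem r.2 2) h1

/-- The ideal `e J_R`. -/
def idB (e : L.O) : Ideal L.O where
  carrier := {f | (f : K) / e ∈ L.JR}
  zero_mem' := by simp
  add_mem' {f g} hf hg := by
    have := add_mem (S := Submodule k K) (s := L.JR) hf hg
    change ((f : K) + g) / e ∈ L.JR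
    rwa [add_div]
  smul_mem' r f hf := by
    change (r * f : K) / e ∈ L.JR
    have h1 : ((f : K) / e) ^ 2 * L.a ∈ L.R := hf
    rw [mem_JR, show ((r * f : K) / e) ^ 2 * L.a = r ^ 2 * (((f : K) / e) ^ 2 * L.a) by ring]
    exact radSpace_mul (pow_mem r.2 2) h1

lemma mem_idA {e f : L.O} : f ∈ L.idA e ↔ ((f : K) / e) ^ 2 * L.a ∈ L.O := Iff.rfl

lemma mem_idB {e f : L.O} : f ∈ L.idB e ↔ ((f : K) / e) ^ 2 * L.a ∈ L.R := Iff.rfl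

lemma idB_le (e : L.O) : L.idB e ≤ L.idA e := fun _ hf => radSpace_le hf

lemma coe_ne {e : L.O} (he : e ≠ 0) : (e : K) ≠ 0 := fun h => he (Subtype.ext h)

section

variable {e c : L.O} (he : e ≠ 0) (hc : (c : K) * L.a = e ^ 2)

include he hc

lemma c_ne : c ≠ 0 := by
  rintro rfl
  have := pow_ne_zero 2 (L.coe_ne he)
  rw [← hc] at this
  simp at this

/-- `f g` is divisible by `c = e²/a`, with quotient `(f/e)(g/e)a`. -/
lemma idA_mul_le : L.idA e * L.idA e ≤ Ideal.span {c} := by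
  have he' := L.coe_ne he
  rw [Ideal.mul_le]
  intro f hf g hg
  have h1 := L.mul_mem_of_J hf hg
  refine Ideal.mem_span_singleton.2 ⟨⟨_, h1⟩, Subtype.ext ?_⟩
  change (f : K) * g = c * (f / e * (g / e) * L.a)
  field_simp
  linear_combination (-(f : K) * g) * hc

lemma mem_idA_of_sq {f s : L.O} (hf : f * f = c * s) : ((f : K) / e) ^ 2 * L.a = s := by
  have he' := L.coe_ne he
  have h1 : (f : K) * f = c * s := congrArg Subtype.val hf
  field_simp
  linear_combination (L.a) * h1 + (s : K) * hc

lemma exists_h_pow : ∃ N, c * L.h ^ N ∈ L.idA e * L.idA e := by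
  have he' := L.coe_ne he
  have ha := L.a_ne
  obtain ⟨s, hs⟩ := L.a_mem
  obtain ⟨t, ht⟩ := L.a_inv_mem
  change (L.h : K) ^ s * L.a ∈ L.O at hs
  change (L.h : K) ^ t * L.a⁻¹ ∈ L.O at ht
  have h1 : e * L.h ^ s ∈ L.idA e := by
    rw [mem_idA]
    change ((e : K) * L.h ^ s / e) ^ 2 * L.a ∈ L.O
    rw [show ((e : K) * L.h ^ s / e) ^ 2 * L.a = L.h ^ s * (L.h ^ s * L.a) by field_simp]
    exact mul_mem (pow_mem L.h.2 _) hs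
  have h3 : e * ⟨_, ht⟩ ∈ L.idA e := by
    rw [mem_idA]
    change ((e : K) * (L.h ^ t * L.a⁻¹) / e) ^ 2 * L.a ∈ L.O
    rw [show ((e : K) * (L.h ^ t * L.a⁻¹) / e) ^ 2 * L.a = L.h ^ t * (L.h ^ t * L.a⁻¹) by
      field_simp]
    exact mul_mem (pow_mem L.h.2 _) ht
  refine ⟨s + t, ?_⟩
  convert Ideal.mul_mem_mul h1 h3 using 1
  apply Subtype.ext
  change (c : K) * L.h ^ (s + t) = (e : K) * L.h ^ s * (e * (L.h ^ t * L.a⁻¹))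
  field_simp
  linear_combination (L.h : K) ^ (s + t) * hc

lemma idA_ne : L.idA e ≠ ⊥ := by
  have := L.ded
  intro h
  obtain ⟨N, hN⟩ := L.exists_h_pow he hc
  rw [h] at hN
  simp only [Ideal.mul_bot] at hN
  exact mul_ne_zero (L.c_ne he hc) (pow_ne_zero N L.h_ne') hN

/-- The discriminant ideal `a J²` divides the radical of `h`, being squarefree and supported on
the zeros of `h`. -/
lemma exists_disc : ∃ 𝔡 : Ideal L.O, L.idA e * L.idA e = Ideal.span {c} * 𝔡 ∧ L.radI ≤ 𝔡 := by
  have := L.ded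
  have hc0 := L.c_ne he hc
  have hc1 : Ideal.span {c} ≠ (0 : Ideal L.O) := by simpa using hc0
  obtain ⟨𝔡, h𝔡⟩ := Ideal.dvd_iff_le.2 (L.idA_mul_le he hc)
  refine ⟨𝔡, h𝔡, ?_⟩
  have hsq : Squarefree 𝔡 := by
    have h𝔡0 : 𝔡 ≠ 0 := by
      rintro rfl
      rw [mul_zero] at h𝔡
      exact mul_ne_zero (L.idA_ne he hc) (L.idA_ne he hc) h𝔡
    rw [squarefree_iff_no_irreducibles h𝔡0]
    rintro p hp' ⟨𝔢, h𝔢⟩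
    have hp := hp'.prime
    have h1 : p ∣ L.idA e := by
      have : p ∣ L.idA e * L.idA e := by
        rw [h𝔡, h𝔢]
        exact ⟨Ideal.span {c} * (p * 𝔢), by ring⟩
      exact (hp.dvd_or_dvd this).elim id id
    obtain ⟨A', hA'⟩ := h1
    have hA'0 : A' ≠ 0 := by
      rintro rfl
      exact L.idA_ne he hc (by simpa using hA')
    have h3 : A' * A' = Ideal.span {c} * 𝔢 := by
      apply mul_left_cancel₀ (mul_ne_zero hp.ne_zero hp.ne_zero)
      calc p * p * (A' * A') = (p * A') * (p * A') := by ring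
        _ = Ideal.span {c} * (p * p * 𝔢) := by rw [← hA', h𝔡, h𝔢]
        _ = _ := by ring
    have h4 : A' ≤ L.idA e := by
      intro f hf
      have h5 : f * f ∈ Ideal.span {c} := by
        have := Ideal.mul_mem_mul hf hf
        rw [h3] at this
        exact Ideal.mul_le_left this
      obtain ⟨s, hs⟩ := Ideal.mem_span_singleton.1 h5
      rw [mem_idA, L.mem_idA_of_sq he hc hs]
      exact s.2
    rw [hA'] at h4
    have h5 : p * A' ∣ 1 * A' := by rwa [one_mul, Ideal.dvd_iff_le]
    exact hp.not_isUnit (isUnit_of_dvd_one ((mul_dvd_mul_iff_right hA'0).1 h5))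
  obtain ⟨N, hN⟩ := L.exists_h_pow he hc
  have hN' : L.h ^ N ∈ 𝔡 := by
    rw [h𝔡, Ideal.mem_span_singleton_mul] at hN
    obtain ⟨g, hg, e⟩ := hN
    rwa [← mul_left_cancel₀ hc0 e]
  obtain ⟨n, hn⟩ := Ideal.exists_radical_pow_le_of_fg (Ideal.span {L.h})
    ((isNoetherianRing_iff_ideal_fg _).1 inferInstance _)
  have h6 : 𝔡 ∣ L.radI ^ (n * N) := by
    rw [Ideal.dvd_iff_le, pow_mul]
    refine (Ideal.pow_right_mono hn N).trans ?_
    rw [Ideal.span_singleton_pow, Ideal.span_singleton_le_iff_mem]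
    exact hN'
  exact Ideal.dvd_iff_le.1 (hsq.isRadical _ _ h6)

/-- `(e²/a) R ≤ (e J)(e J_R)`. -/
lemma span_mul_radI_le : Ideal.span {c} * L.radI ≤ L.idA e * L.idB e := by
  have := L.ded
  have hc0 := L.c_ne he hc
  have hc1 : Ideal.span {c} ≠ (0 : Ideal L.O) := by simpa using hc0
  have he' := L.coe_ne he
  obtain ⟨𝔡, h𝔡, hR𝔡⟩ := L.exists_disc he hc
  have h1 : Ideal.span {c} * L.radI ≤ L.idA e := by
    intro f hf
    obtain ⟨r, hr, rfl⟩ := Ideal.mem_span_singleton_mul.1 hf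
    rw [mem_idA]
    change ((c : K) * r / e) ^ 2 * L.a ∈ L.O
    rw [show ((c : K) * r / e) ^ 2 * L.a = c * r ^ 2 by
      field_simp
      linear_combination ((r : K) ^ 2 * c) * hc]
    exact mul_mem c.2 (pow_mem r.2 2)
  obtain ⟨C, hC⟩ := Ideal.dvd_iff_le.2 h1
  have h3 : 𝔡 * C = L.radI * L.idA e := by
    apply mul_left_cancel₀ hc1
    calc Ideal.span {c} * (𝔡 * C) = L.idA e * (L.idA e * C) := by rw [← mul_assoc, ← h𝔡]; ring
      _ = _ := by rw [← hC]; ring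
  have h4 : C ≤ L.idA e := by
    have : L.radI * C ≤ L.radI * L.idA e := by
      rw [← h3]
      exact Ideal.mul_mono_left hR𝔡
    rw [← Ideal.dvd_iff_le] at this ⊢
    exact (mul_dvd_mul_iff_left L.radI_ne_bot).1 this
  have h5 : C ≤ L.idB e := by
    intro f hf
    have h6 : f * f ∈ Ideal.span {c} * L.radI := by
      rw [hC]
      exact Ideal.mul_mem_mul (h4 hf) hf
    obtain ⟨r, hr, h7⟩ := Ideal.mem_span_singleton_mul.1 h6
    rw [mem_idB, L.mem_idA_of_sq he hc h7.symm]
    exact L.mem_radI.1 hr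
  rw [hC]
  exact Ideal.mul_mono_right h5

end

lemma exists_e : ∃ e c : L.O, e ≠ 0 ∧ (c : K) * L.a = e ^ 2 := by
  obtain ⟨t, ht⟩ := L.a_inv_mem
  change (L.h : K) ^ t * L.a⁻¹ ∈ L.O at ht
  have := L.ded
  refine ⟨L.h ^ t, L.h ^ t * ⟨_, ht⟩, pow_ne_zero _ L.h_ne', ?_⟩
  have := L.a_ne
  change (L.h : K) ^ t * (L.h ^ t * L.a⁻¹) * L.a = (L.h ^ t) ^ 2
  field_simp

/-- The contribution of the `√a`-components to the genus inequality. -/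
lemma genus_J (j : ℤ) : 2 * j + 2 - 4 * M ≤ L.Φ.dim L.J j + L.Φ.dim L.JR j := by
  have := L.ded
  obtain ⟨e, c, he, hc⟩ := L.exists_e
  have he' := L.coe_ne he
  obtain ⟨ρ, hρ : L.Φ.Deg (e : K) ρ⟩ := L.Φ.exists_deg _ he'
  have hcdeg : L.Φ.Deg (c : K) (2 * ρ - 1) := by
    have h1 : (c : K) = e ^ 2 * L.a⁻¹ := by
      rw [← hc, mul_inv_cancel_right₀ L.a_ne]
    rw [h1]
    exact (hρ.pow 2).mul L.deg_a.inv
  have hA0 := L.idA_ne he hc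
  have hPR := L.span_mul_radI_le he hc
  have hAB0 : L.idA e * L.idB e ≠ ⊥ := by
    intro h
    rw [h] at hPR
    have := L.c_ne he hc
    exact mul_ne_zero (by simpa using this) L.radI_ne_bot (le_bot_iff.1 hPR)
  -- `α` generates `A / A B`, so multiplication by `α` embeds `O / B` into it
  obtain ⟨α, hα, hα1⟩ : ∃ α, L.idA e * L.idB e ⊔ Ideal.span {α} = L.idA e ∧ α ≠ 0 := by
    obtain ⟨α, hα⟩ : ∃ α, L.idA e * L.idB e ⊔ Ideal.span {α} = L.idA e :=
      IsDedekindDomain.exists_sup_span_eq Ideal.mul_le_left hAB0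
    rcases eq_or_ne α 0 with rfl | h0
    · obtain ⟨β, hβ, hβ0⟩ := Submodule.exists_mem_ne_zero_of_ne_bot hAB0
      refine ⟨β, ?_, hβ0⟩
      rw [sup_eq_left.2 ((Ideal.span_singleton_le_iff_mem _).2 hβ)]
      simpa using hα
    · exact ⟨α, hα, h0⟩
  have hαA : α ∈ L.idA e := by
    rw [← hα]
    exact Ideal.mem_sup_right (Ideal.mem_span_singleton_self α)
  have hα0 : (α : K) ≠ 0 := L.coe_ne hα1
  have hinj (f : L.O) (hf : α * f ∈ L.idA e * L.idB e) : f ∈ L.idB e := by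
    have h1 : L.idA e * Ideal.span {f} ≤ L.idA e * L.idB e := by
      conv_lhs => rw [← hα]
      rw [Ideal.sup_mul]
      refine sup_le Ideal.mul_le_left ?_
      rw [Ideal.span_singleton_mul_span_singleton, Ideal.span_singleton_le_iff_mem]
      exact hf
    rw [← Ideal.dvd_iff_le] at h1
    have h2 := Ideal.dvd_iff_le.1 ((mul_dvd_mul_iff_left hA0).1 h1)
    rwa [Ideal.span_singleton_le_iff_mem] at h2
  obtain ⟨σ, hσ : L.Φ.Deg (α : K) σ⟩ := L.Φ.exists_deg _ hα0
  set n := j + ρ with hn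
  obtain ⟨m, hm1, hm2, hm3⟩ : ∃ m : ℤ, n ≤ m ∧ n ≤ m - (2 * ρ - 1) ∧ n + σ ≤ m :=
    ⟨max n (max (n + (2 * ρ - 1)) (n + σ)), by omega, by omega, by omega⟩
  have q1 := dim_sub_le (n := n) (m := m) (L.space_bdd (L.idA e)) (L.space_bdd ⊤) (L.space_bdd ⊤)
    (L.space_mono (le_top (a := L.idA e))) deg_one (fun f hf => by rwa [one_mul])
    (fun f _ hf => by rwa [one_mul] at hf) (by omega)
  have q2 := dim_sub_le (n := n) (m := m) (L.space_bdd (L.idB e)) (L.space_bdd ⊤)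
    (L.space_bdd (L.idA e)) (L.space_mono (Ideal.mul_le_left (I := L.idA e) (J := L.idB e))) hσ
    (fun f hf => by
      obtain ⟨g, -, rfl⟩ := L.exists_of_mem_space hf
      exact L.mem_space.2 (Ideal.mul_mem_right g _ hαA))
    (fun f hf hf' => by
      obtain ⟨g, -, rfl⟩ := L.exists_of_mem_space hf
      exact L.mem_space.2 (hinj g ((L.mem_space (f := α * g)).1 hf'))) hm3
  have q3 := dim_le_of_mul (L.space_bdd L.radI) (L.space_bdd (L.idA e * L.idB e)) hcdeg
    (fun f hf => by
      obtain ⟨g, hg, rfl⟩ := L.exists_of_mem_space hf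
      exact (L.mem_space (f := c * g)).2
        (hPR (Ideal.mul_mem_mul (Ideal.mem_span_singleton_self c) hg))) (m - (2 * ρ - 1))
  have q4 := dim_le_of_mul (L.space_bdd (L.idA e)) L.J_bdd hρ.inv
    (fun f hf => by
      obtain ⟨g, hg, rfl⟩ := L.exists_of_mem_space hf
      rw [mul_comm, ← div_eq_mul_inv]
      exact hg) n
  have q5 := dim_le_of_mul (L.space_bdd (L.idB e)) (L.J_bdd.mono L.JR_le_J) hρ.inv
    (fun f hf => by
      obtain ⟨g, hg, rfl⟩ := L.exists_of_mem_space hf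
      rw [mul_comm, ← div_eq_mul_inv]
      exact hg) n
  rw [sub_add_cancel, space_radI] at q3
  rw [show n + -ρ = j by omega] at q4 q5
  rw [space_top] at q1 q2
  have q6 := dim_le_add L.bdd hm1
  have q7 := dim_le_add L.bdd hm2
  have q8 := L.genus (m - (2 * ρ - 1))
  change _ ≤ _ + L.Φ.dim L.R _ at q8
  omega

end Level

/-! ### The tower and the codes -/

namespace Level

open PoleFiltration QuadraticAlgebra

variable {k K : Type} [Field k] [Field K] [Algebra k K] {M : ℕ} (L : Level k K M)

lemma genus' (h2 : (2 : k) ≠ 0) (m : ℤ) : 2 * m + 1 - 4 * (2 * M : ℕ) ≤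
    L.PhiNext.dim L.O'.toSubmodule m + L.PhiNext.dim L.R' m := by
  have h3 : L.PhiNext.dim L.O'.toSubmodule m = _ :=
    dim_quadPole L.deg_a L.bdd L.J_bdd (fun w => L.mem_O' h2) m
  have h4 : L.PhiNext.dim L.R' m = _ :=
    dim_quadPole L.deg_a (L.bdd.mono radSpace_le) (L.J_bdd.mono L.JR_le_J)
      (fun w => L.mem_R' h2) m
  have h5 := L.genus (m / 2)
  have h6 := L.genus_J ((m - 1) / 2)
  rw [h3, h4]
  push_cast
  omega

/-- Each step of the tower adjoins a square root of `a`. -/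
lemma exists_next [Finite k] (hk : Nat.card k = 121) (h11 : (11 : k) = 0) :
    Nonempty (Level k L.Ext (2 * M)) := by
  have h2 : (2 : k) ≠ 0 := by
    intro h
    apply one_ne_zero (α := k)
    linear_combination h11 - 5 * h
  choose c hc0 hc using L.exists_root hk h11
  exact ⟨{
    Φ := L.PhiNext
    O := L.O'
    ded := L.O'_ded h2
    frac := L.O'_frac
    x := L.x'
    z := L.z'
    θ := L.thetaNext h2
    lam := L.lam / 2
    Pt := L.Pt × Bool
    fin := inferInstance
    ev := L.ev' c
    M_pos := by
      have := L.M_pos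
      omega
    deg_x := L.deg_x'
    deg_z := L.deg_z'
    O_neg := L.O'_neg h2
    lam_ne := div_ne_zero L.lam_ne h2
    theta_lead := L.theta'_lead h2
    theta_x := L.theta'_x h2
    theta_O := L.theta'_O h2
    theta_R := L.theta'_R h2
    z_mem := L.z'_mem h2
    z_inv_mem := L.z'_inv_mem h2
    z_four_mem := L.z'_four_mem h2
    card_pt := by
      rw [Fintype.card_prod, Fintype.card_bool]
      have := L.card_pt
      change Fintype.card L.Pt = _ at this
      omega
    ev_algebraMap := L.ev'_algebraMap
    ev_add := L.ev'_add h2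
    ev_mul := L.ev'_mul hc h2
    ev_x := L.ev'_x
    ev_z := L.ev'_z hc h11
    ev_vanish := L.ev'_vanish h2 hc0
    genus := L.genus' h2 }⟩

end Level

lemma exists_level {k : Type} [Field k] [Finite k] (hk : Nat.card k = 121) (h11 : (11 : k) = 0)
    (l : ℕ) : ∃ (K : Type) (_ : Field K) (_ : Algebra k K), Nonempty (Level k K (2 ^ l)) := by
  induction l with
  | zero => exact ⟨RatFunc k, inferInstance, inferInstance, ⟨RationalLevel.ratLevel hk h11⟩⟩
  | succ l ih =>
    obtain ⟨K, _, _, ⟨L⟩⟩ := ih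
    rw [pow_succ']
    exact ⟨L.Ext, inferInstance, inferInstance, L.exists_next hk h11⟩

/-- For every `ε > 0` and every `N`, there are an integer `n ≥ N` and a
`(2,1)`-separating binary code `C ⊆ F₂ⁿ` with `|C| ≥ 2^{((3/50)·log₂ 11 − ε)·n}`. -/
theorem exists_separating_code_beyond_probabilistic_bound
    (ε : ℝ) (hε : 0 < ε) (N : ℕ) :
    ∃ (n : ℕ), N ≤ n ∧ ∃ C : Set (Fin n → ZMod 2), IsSeparating21 C ∧
      (2 : ℝ) ^ (((3 : ℝ) / 50 * Real.logb 2 11 - ε) * n) ≤ (C.ncard : ℝ) := by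
  have : Fact (Nat.Prime 11) := ⟨by norm_num⟩
  have hk : Nat.card (GaloisField 11 2) = 121 := by
    rw [GaloisField.card 11 2 two_ne_zero]
    norm_num
  have : Finite (GaloisField 11 2) := Nat.finite_of_card_ne_zero (by rw [hk]; norm_num)
  have h11 : (11 : GaloisField 11 2) = 0 := CharP.ofNat_eq_zero _ 11
  obtain ⟨B, hB⟩ := exists_nat_gt (7 / ε)
  let l := max N B
  have hl : l < 2 ^ l := Nat.lt_two_pow_self
  have hN : N ≤ l := le_max_left _ _
  obtain ⟨K, _, _, ⟨L⟩⟩ := exists_level hk h11 l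
  obtain ⟨S, hS, hcard⟩ := exists_separating_of_level hk L
  refine ⟨300 * 2 ^ l, by omega, S, hS, ?_⟩
  refine (rate_bound (M := 2 ^ l) (by positivity) ?_).trans ?_
  · have h1 : (B : ℝ) ≤ ((2 ^ l : ℕ) : ℝ) := by
      exact_mod_cast (le_max_right N B).trans hl.le
    rw [div_lt_iff₀ hε] at hB
    nlinarith
  · exact_mod_cast hcard
end

section
/- Let K be a perfect field of characteristic p > 0 and let F be a finitely generated field extension of K of transcendence degree 1 (the function field of a curve over K). If f ∈ F satisfies df = 0 in the module of Kähler differentials Ω_{F/K}, then there exists h ∈ F with f = h^p. -/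
/-!
If `f` is not a `p`-th power, a field `E` maximal among those with `F ^ p ⊆ E ⊆ F` and `f ∉ E`
exists by Zorn's lemma; it contains `K`, because `K = K ^ p`. Every `g ∉ E` has degree `p` over `E`,
and `f ∈ E(g)` by maximality, so comparing degrees gives `E(g) = E(f)`; hence `F = E(f)`.
If `df = 0` in `Ω[F⁄K]`, the same holds in `Ω[F⁄E]`, which is generated by `df` and therefore
vanishes. A finite extension with vanishing differentials is separable, while `F / E` is purely
inseparable, so `F = E`, contradicting `f ∉ E`.
-/

open IntermediateField Polynomial

/-- An element outside `E` whose `p`-th power lies in `E` has degree `p` over `E`: its minimal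
polynomial is `X ^ p - g ^ p`. -/
lemma finrank_adjoin_simple_of_pow_mem {K F : Type*} [Field K] [Field F] [Algebra K F]
    (p : ℕ) [hp : Fact p.Prime] [CharP F p] (E : IntermediateField K F) {g : F}
    (hgp : g ^ p ∈ E) (hg : g ∉ E) : Module.finrank E E⟮g⟯ = p := by
  have hroot : aeval g (X ^ p - C (⟨g ^ p, hgp⟩ : E)) = 0 := by
    simp [IntermediateField.algebraMap_apply]
  have hmonic : (X ^ p - C (⟨g ^ p, hgp⟩ : E)).Monic := monic_X_pow_sub_C _ hp.out.ne_zero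
  have hirr : Irreducible (X ^ p - C (⟨g ^ p, hgp⟩ : E)) := by
    refine X_pow_sub_C_irreducible_of_prime hp.out fun b hb => hg ?_
    -- Frobenius is injective on `F`, so a `p`-th root of `g ^ p` in `E` would be `g` itself.
    have hbg : (b : F) = g :=
      frobenius_inj F p (by simpa [frobenius_def] using congrArg Subtype.val hb)
    exact hbg ▸ b.2
  rw [adjoin.finrank ⟨_, hmonic, by simp⟩,
    ← minpoly.eq_of_irreducible_of_monic hirr hroot hmonic, natDegree_X_pow_sub_C]

/-- Zorn's lemma for intermediate fields avoiding a given element. -/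
lemma exists_maximal_notMem {K F : Type*} [Field K] [Field F] [Algebra K F] {f : F}
    (E₀ : IntermediateField K F) (h₀ : f ∉ E₀) :
    ∃ E : IntermediateField K F, E₀ ≤ E ∧ f ∉ E ∧ ∀ E', E ≤ E' → f ∉ E' → E' ≤ E := by
  obtain ⟨E, hE, hmax⟩ := zorn_le_nonempty₀ {E : IntermediateField K F | f ∉ E} (by
    intro c hc hchain y hy
    have : Nonempty c := ⟨⟨y, hy⟩⟩
    refine ⟨⨆ i : c, (i : IntermediateField K F), ?_, fun z hz => le_iSup_of_le ⟨z, hz⟩ le_rfl⟩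
    intro hf
    rw [← SetLike.mem_coe, coe_iSup_of_directed hchain.directed, Set.mem_iUnion] at hf
    obtain ⟨i, hi⟩ := hf
    exact hc i.2 hi) E₀ h₀
  exact ⟨E, hE, hmax.1, fun E' h h' => hmax.2 h' h⟩

/-- If `E ⊇ F ^ p` is maximal among the intermediate fields not containing `f`, then `F = E(f)`. -/
lemma adjoin_simple_eq_top_of_maximal {K F : Type*} [Field K] [Field F] [Algebra K F]
    (p : ℕ) [hp : Fact p.Prime] [CharP F p] (E : IntermediateField K F) {f : F}
    (hpow : ∀ x : F, x ^ p ∈ E) (hf : f ∉ E)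
    (hmax : ∀ E', E ≤ E' → f ∉ E' → E' ≤ E) : E⟮f⟯ = ⊤ := by
  rw [eq_top_iff]
  intro g _
  by_cases hg : g ∈ E
  · exact E⟮f⟯.algebraMap_mem ⟨g, hg⟩
  have hfg : f ∈ E⟮g⟯ := by
    by_contra hfg
    refine hg (hmax (E⟮g⟯.restrictScalars K) (fun x hx => ?_) hfg (mem_adjoin_simple_self E g))
    exact E⟮g⟯.algebraMap_mem ⟨x, hx⟩
  have hrank := finrank_adjoin_simple_of_pow_mem p E (hpow g) hg
  have : FiniteDimensional E E⟮g⟯ :=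
    Module.finite_of_finrank_pos (hrank ▸ hp.out.pos)
  have heq : E⟮f⟯ = E⟮g⟯ := eq_of_le_of_finrank_eq (adjoin_simple_le_iff.2 hfg)
    ((finrank_adjoin_simple_of_pow_mem p E (hpow f) hf).trans hrank.symm)
  exact heq ▸ mem_adjoin_simple_self E g

/-- Let `K` be a perfect field of characteristic `p > 0` and `F` a finitely generated
field extension of `K` of transcendence degree `1` (the function field of a curve over
`K`).  If `f ∈ F` satisfies `df = 0` in the module of Kähler differentials `Ω[F⁄K]`,
then `f = h^p` for some `h ∈ F`. -/
theorem eq_pow_char_of_kaehlerDifferential_eq_zero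
    (K F : Type*) [Field K] [Field F] [Algebra K F] [PerfectField K]
    (p : ℕ) (hp : 0 < p) [CharP K p]
    (hfg : ∃ s : Finset F, IntermediateField.adjoin K (s : Set F) = ⊤)
    (htrdeg : ∃ x : F, IsTranscendenceBasis K (fun _ : Unit => x))
    (f : F) (hdf : KaehlerDifferential.D K F f = 0) :
    ∃ h : F, f = h ^ p := by
  have hprime : Fact p.Prime := ⟨(CharP.char_is_prime_or_zero K p).resolve_right hp.ne'⟩
  have : ExpChar K p := ExpChar.prime hprime.out
  have : CharP F p := charP_of_injective_algebraMap (algebraMap K F).injective p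
  by_contra! hne
  -- The field `F ^ p` contains `K` since `K` is perfect.
  let E₀ : IntermediateField K F := (frobenius F p).fieldRange.toIntermediateField fun x => by
    obtain ⟨y, rfl⟩ := surjective_frobenius K p x
    exact ⟨algebraMap K F y, by simp [frobenius_def]⟩
  have h₀ : f ∉ E₀ := by
    rintro ⟨h, hh⟩
    exact hne h hh.symm
  obtain ⟨E, hE, hfE, hmax⟩ := exists_maximal_notMem E₀ h₀
  have hpow : ∀ x : F, x ^ p ∈ E := fun x => hE ⟨x, rfl⟩
  have htop := adjoin_simple_eq_top_of_maximal p E hpow hfE hmax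
  have hint : IsIntegral E f := IsIntegral.of_pow hprime.out.pos
    (isIntegral_algebraMap (x := (⟨f ^ p, hpow f⟩ : E)))
  have hfin : FiniteDimensional E F := by
    have := adjoin.finiteDimensional hint
    rw [htop] at this
    exact Module.Finite.equiv (topEquiv (F := E) (E := F)).toLinearEquiv
  have hadjoin : Algebra.adjoin E {f} = ⊤ := by
    rw [← adjoin_simple_toSubalgebra_of_isAlgebraic hint.isAlgebraic, htop, top_toSubalgebra]
  have hdE : KaehlerDifferential.D E F f = 0 := by
    have := congrArg (KaehlerDifferential.map K E F F) hdf
    simpa using this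
  have hD : KaehlerDifferential.D E F = 0 := Derivation.ext fun x =>
    Derivation.eqOn_adjoin (s := {f}) (Set.eqOn_singleton.2 hdE) (hadjoin ▸ Algebra.mem_top)
  have hunr : Algebra.FormallyUnramified E F := by
    refine ⟨(Submodule.subsingleton_iff F).1 (subsingleton_of_bot_eq_top ?_)⟩
    rw [← KaehlerDifferential.span_range_derivation, hD, eq_comm, Submodule.span_eq_bot]
    rintro _ ⟨x, rfl⟩
    rfl
  have : CharP E p := charP_of_injective_algebraMap (algebraMap K E).injective p
  have : ExpChar E p := ExpChar.prime hprime.out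
  have hinsep : IsPurelyInseparable E F := (isPurelyInseparable_iff_pow_mem E p).2 fun x =>
    ⟨1, ⟨x ^ p, hpow x⟩, by simp [IntermediateField.algebraMap_apply]⟩
  have := Algebra.FormallyUnramified.isSeparable E F
  obtain ⟨e, he⟩ := IsPurelyInseparable.surjective_algebraMap_of_isSeparable E F f
  exact hfE (he ▸ e.2)
end
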